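/- arXiv:2006.06757 — 5 statements merged into one kernel-verified Lean document; each statement's English description precedes it below -/
import Mathlib

section
/- Let A be a ring such that the Laurent series ring A((x)) is a right semidistributive semilocal ring. Then A is a right semidistributive right Artinian ring. -/
/-- A module is *distributive* if its lattice of submodules is distributive, i.e.
`X ⊓ (Y ⊔ Z) = (X ⊓ Y) ⊔ (X ⊓ Z)` for all submodules `X, Y, Z`. -/
def IsDistribModule (R M : Type*) [Ring R] [AddCommGroup M] [Module R M] : Prop :=
  ∀ X Y Z : Submodule R M, X ⊓ (Y ⊔ Z) = X ⊓ Y ⊔ X ⊓ Z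

/-- A ring `A` is *right semidistributive* if, as a right module over itself
(i.e. as an `Aᵐᵒᵖ`-module), it is a direct sum of distributive submodules. -/
def IsRightSemidistributiveRing (A : Type*) [Ring A] : Prop :=
  ∃ (ι : Type) (N : ι → Submodule Aᵐᵒᵖ A),
    iSupIndep N ∧ iSup N = ⊤ ∧ ∀ i, IsDistribModule Aᵐᵒᵖ (N i)

/-- A ring `R` is *semilocal* if `R` modulo its Jacobson radical is a semisimple ring. -/
def IsSemilocalRing (R : Type*) [Ring R] : Prop :=
  IsSemisimpleModule R (R ⧸ Ideal.jacobson (⊥ : Ideal R))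


open HahnSeries in
theorem coeff_mul_mem' {B : Type*} [Ring B] (S : AddSubgroup B) (f g : LaurentSeries B) (n : ℤ)
    (h : ∀ i j, i + j = n → f.coeff i * g.coeff j ∈ S) : (f * g).coeff n ∈ S := by
  rw [HahnSeries.coeff_mul]
  refine AddSubgroup.sum_mem _ fun ij hij => ?_
  rw [Finset.mem_antidiagonal] at hij
  exact h _ _ hij.2.2

/-- Laurent series with coefficients in a left ideal. -/
def lau {B : Type*} [Ring B] (X : Ideal B) : Ideal (LaurentSeries B) where
  carrier := {f | ∀ i, f.coeff i ∈ X}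
  zero_mem' := fun i => by simp
  add_mem' := fun {a b} ha hb i => by
    rw [HahnSeries.coeff_add]; exact X.add_mem (ha i) (hb i)
  smul_mem' := fun c f hf n => by
    rw [smul_eq_mul]
    exact coeff_mul_mem' X.toAddSubgroup _ _ _ (fun i j _ => X.mul_mem_left _ (hf j))

theorem mem_lau {B : Type*} [Ring B] {X : Ideal B} {f : LaurentSeries B} :
    f ∈ lau X ↔ ∀ i, f.coeff i ∈ X := Iff.rfl

theorem lau_mul_mem {B : Type*} [Ring B] {X Y : Ideal B} {f g : LaurentSeries B}
    (hf : f ∈ lau X) (hg : g ∈ lau Y) : f * g ∈ lau (X * Y) := fun n =>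
  coeff_mul_mem' (X * Y).toAddSubgroup _ _ _ (fun i j _ => Ideal.mul_mem_mul (hf i) (hg j))

theorem lau_pow_mem {B : Type*} [Ring B] {X : Ideal B} {f : LaurentSeries B}
    (hf : f ∈ lau X) (n : ℕ) : f ^ n ∈ lau (X ^ n) := by
  induction n with
  | zero => rw [Submodule.pow_zero, Ideal.one_eq_top]; intro i; trivial
  | succ n ih => rw [pow_succ, Submodule.pow_succ]; exact lau_mul_mem ih hf

theorem lau_mono {B : Type*} [Ring B] {X Y : Ideal B} (h : X ≤ Y) : lau X ≤ lau Y :=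
  fun _ hf i => h (hf i)

theorem lau_inf {B : Type*} [Ring B] (X Y : Ideal B) : lau (X ⊓ Y) = lau X ⊓ lau Y := by
  ext f
  simp only [mem_lau, Submodule.mem_inf]
  exact ⟨fun h => ⟨fun i => (h i).1, fun i => (h i).2⟩, fun h i => ⟨h.1 i, h.2 i⟩⟩

theorem lau_sup {B : Type*} [Ring B] (X Y : Ideal B) : lau (X ⊔ Y) = lau X ⊔ lau Y := by
  apply le_antisymm
  · intro f hf
    have h1 : ∀ i, ∃ y, y ∈ X ∧ f.coeff i - y ∈ Y ∧ (f.coeff i = 0 → y = 0) := by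
      intro i
      by_cases h0 : f.coeff i = 0
      · exact ⟨0, X.zero_mem, by simp [h0], fun _ => rfl⟩
      · obtain ⟨y, hy, z, hz, hyz⟩ := Submodule.mem_sup.1 (hf i)
        exact ⟨y, hy, by rw [← hyz]; simpa using hz, fun h => absurd h h0⟩
    choose y hy hz h0 using h1
    let g : LaurentSeries B := ⟨y, f.isPWO_support.mono fun i hi => by
      intro h; exact hi (h0 i h)⟩
    refine Submodule.mem_sup.2 ⟨g, fun i => hy i, f - g, fun i => ?_, by abel⟩
    rw [HahnSeries.coeff_sub]
    exact hz i
  · exact sup_le (lau_mono le_sup_left) (lau_mono le_sup_right)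

theorem lau_C_mem {B : Type*} [Ring B] {X : Ideal B} {a : B} :
    (HahnSeries.single (0:ℤ) a : LaurentSeries B) ∈ lau X ↔ a ∈ X := by
  constructor
  · intro h; simpa using h 0
  · intro h i
    rw [HahnSeries.coeff_single]
    split_ifs
    · exact h
    · exact X.zero_mem

theorem lau_le_iff {B : Type*} [Ring B] {X Y : Ideal B} : lau X ≤ lau Y ↔ X ≤ Y :=
  ⟨fun h _ ha => lau_C_mem.1 (h (lau_C_mem.2 ha)), lau_mono⟩

theorem coeff_mul_zero_of_lt {B : Type*} [Ring B] (f g : LaurentSeries B) (p q n : ℤ)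
    (hf : ∀ i, i < p → f.coeff i = 0) (hg : ∀ i, i < q → g.coeff i = 0) (hn : n < p + q) :
    (f * g).coeff n = 0 := by
  have := coeff_mul_mem' (⊥ : AddSubgroup B) f g n (fun i j hij => by
    by_cases hi : i < p
    · simp [hf i hi]
    · have : j < q := by omega
      simp [hg j this])
  simpa using this

theorem exists_lower {B : Type*} [Ring B] (f : LaurentSeries B) :
    ∃ p : ℤ, ∀ i, i < p → f.coeff i = 0 :=
  ⟨f.order, fun i hi => HahnSeries.coeff_eq_zero_of_lt_order hi⟩

theorem isUnit_one_pos {B : Type*} [Ring B] (f : LaurentSeries B)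
    (hf : ∀ i, i < 0 → f.coeff i = 0) (h1 : f.coeff 0 = 1) : IsUnit f := by
  let φ : PowerSeries B := PowerSeries.mk fun n => f.coeff (n : ℤ)
  have hφ : HahnSeries.ofPowerSeries ℤ B φ = f := by
    ext n
    by_cases hn : n < 0
    · rw [hf n hn]
      rw [HahnSeries.ofPowerSeries_apply]
      apply HahnSeries.embDomain_of_notMem_range
      rintro ⟨m, hm⟩
      simp at hm
      omega
    · obtain ⟨m, rfl⟩ := Int.eq_ofNat_of_zero_le (not_lt.1 hn)
      have := HahnSeries.ofPowerSeries_apply_coeff (Γ := ℤ) φ m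
      simpa [φ] using this
  rw [← hφ]
  have hc : PowerSeries.constantCoeff φ = ((1 : Bˣ) : B) := by
    simp [φ, ← PowerSeries.coeff_zero_eq_constantCoeff_apply, h1]
  have hu : IsUnit φ := ⟨⟨φ, φ.invOfUnit 1, PowerSeries.mul_invOfUnit _ _ hc,
    PowerSeries.invOfUnit_mul _ _ hc⟩, rfl⟩
  exact hu.map _

theorem exists_part {B : Type*} [Ring B] (P : Ideal B) (f : LaurentSeries B)
    (hf : ∀ i, i < 0 → f.coeff i ∈ P) (h1 : f.coeff 0 - 1 ∈ P) :
    ∃ p ∈ lau P, IsUnit (f - p) := by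
  classical
  let g : LaurentSeries B := ⟨fun i => if i < 0 then f.coeff i else 0,
    f.isPWO_support.mono fun i hi => by
      intro h; apply hi; simp [h]⟩
  refine ⟨g + HahnSeries.single (0:ℤ) (f.coeff 0 - 1), (lau P).add_mem (fun i => ?_)
    (lau_C_mem.2 h1), isUnit_one_pos _ (fun i hi => ?_) ?_⟩
  · change (if i < 0 then f.coeff i else 0) ∈ P
    split_ifs with h
    · exact hf i h
    · exact P.zero_mem
  · rw [HahnSeries.coeff_sub, HahnSeries.coeff_add, HahnSeries.coeff_single_of_ne hi.ne]
    simp [g, hi]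
  · simp [g]

theorem exists_min_notin {B : Type*} [Ring B] (P : Ideal B) (f : LaurentSeries B)
    (hf : f ∉ lau P) : ∃ s, f.coeff s ∉ P ∧ ∀ i, i < s → f.coeff i ∈ P := by
  obtain ⟨p, hp⟩ := exists_lower f
  rw [mem_lau] at hf
  push Not at hf
  obtain ⟨t, ht⟩ := hf
  obtain ⟨s, hs, hmin⟩ := Int.exists_least_of_bdd (P := fun z => f.coeff z ∉ P)
    ⟨p, fun z hz => by
      by_contra hlt
      exact hz (by rw [hp z (not_le.1 hlt)]; exact P.zero_mem)⟩ ⟨t, ht⟩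
  exact ⟨s, hs, fun i hi => by
    by_contra h
    exact absurd (hmin i h) (not_le.2 hi)⟩

/-- `P((x))` is a maximal left ideal when `P` is. -/
theorem lau_isMaximal {B : Type*} [Ring B] (P : Ideal B) (hP : P.IsMaximal) :
    (lau P).IsMaximal := by
  rw [Ideal.isMaximal_iff]
  constructor
  · intro h
    exact (Ideal.ne_top_iff_one P).1 hP.ne_top (by simpa using h 0)
  · intro I f hI hfP hfI
    obtain ⟨s, hs, hlow⟩ := exists_min_notin P f hfP
    have : ∃ b, b * f.coeff s - 1 ∈ P := by
      have h2 : (1 : B) ∈ P ⊔ Ideal.span {f.coeff s} := by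
        rw [(Ideal.isMaximal_def.1 hP).2 _ (left_lt_sup.2 fun h => hs (h (Ideal.mem_span_singleton_self _)))]
        trivial
      obtain ⟨p, hp, z, hz, hpz⟩ := Submodule.mem_sup.1 h2
      obtain ⟨b, rfl⟩ := Ideal.mem_span_singleton'.1 hz
      refine ⟨b, ?_⟩
      rw [← hpz]
      simpa using P.neg_mem hp
    obtain ⟨b, hb⟩ := this
    obtain ⟨p, hp, hu⟩ := exists_part P (HahnSeries.single (-s) b * f) (fun i hi => by
      rw [HahnSeries.coeff_single_mul]
      exact P.mul_mem_left _ (hlow _ (by omega))) (by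
      rw [HahnSeries.coeff_single_mul]; simpa using hb)
    have : HahnSeries.single (-s) b * f - p ∈ I :=
      I.sub_mem (I.mul_mem_left _ hfI) (hI hp)
    rw [Ideal.eq_top_of_isUnit_mem I this hu]
    trivial

theorem isUnit_one_add_jac {B : Type*} [Ring B] (j : B) (hj : j ∈ Ring.jacobson B) :
    IsUnit (1 + j) := by
  have key : ∀ k ∈ Ring.jacobson B, ∃ s, s * (1 + k) = 1 := by
    intro k hk
    rw [← Ideal.jacobson_bot] at hk
    obtain ⟨s, hs⟩ := Ideal.exists_mul_add_sub_mem_of_mem_jacobson k hk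
    exact ⟨s, by rw [add_comm 1 k]; exact sub_eq_zero.1 (by simpa using hs)⟩
  obtain ⟨s, hs⟩ := key j hj
  have hs' : s = 1 + (-(s * j)) := by
    have : s + s * j = 1 := by simpa [mul_add] using hs
    rw [← this]; abel
  obtain ⟨t, ht⟩ := key (-(s * j)) (neg_mem (Ideal.mul_mem_left _ _ hj))
  rw [← hs'] at ht
  have : t = 1 + j := by
    calc t = t * (s * (1 + j)) := by rw [hs, mul_one]
      _ = 1 + j := by rw [← mul_assoc, ht, one_mul]
  exact ⟨⟨1 + j, s, by rw [← this]; exact ht, hs⟩, rfl⟩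

theorem ker_le_max {R S : Type*} [Ring R] [Ring S] (π : R →+* S)
    (hker : ∀ j ∈ RingHom.ker π, IsUnit (1 + j)) (M : Ideal R) (hM : M.IsMaximal) :
    RingHom.ker π ≤ M := by
  intro j hj
  by_contra h
  obtain ⟨y, i, hi, h1⟩ := hM.exists_inv h
  have : i = 1 + (-(y * j)) := by rw [← h1]; abel
  have hu := hker (-(y * j)) (neg_mem (Ideal.mul_mem_left _ _ hj))
  rw [← this] at hu
  exact hM.ne_top (Ideal.eq_top_of_isUnit_mem _ hi hu)

section step1
variable {B S : Type*} [Ring B] [Ring S] (π : LaurentSeries B →+* S)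

theorem ker_le_lau_jac (hker : ∀ j ∈ RingHom.ker π, IsUnit (1 + j)) :
    RingHom.ker π ≤ lau (Ring.jacobson B) := by
  intro f hf i
  rw [Ring.jacobson_eq_sInf_isMaximal, Ideal.mem_sInf]
  intro P hP
  exact ker_le_max π hker _ (lau_isMaximal P hP) hf i

theorem artinian_quot [IsArtinianRing S] (hπ : Function.Surjective π)
    (hker : ∀ j ∈ RingHom.ker π, IsUnit (1 + j)) :
    IsSemisimpleRing (B ⧸ Ring.jacobson B) := by
  let J := Ring.jacobson B
  let F : Ideal (B ⧸ J) → Ideal S := fun I =>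
    Ideal.map π (lau (Ideal.comap (Ideal.Quotient.mk J) I))
  have hJ : ∀ I : Ideal (B ⧸ J), J ≤ Ideal.comap (Ideal.Quotient.mk J) I := fun I a ha => by
    rw [Ideal.mem_comap, Ideal.Quotient.eq_zero_iff_mem.2 ha]; exact I.zero_mem
  have hle : ∀ I I', F I ≤ F I' ↔ I ≤ I' := by
    intro I I'
    constructor
    · intro h
      have h1 : lau (Ideal.comap (Ideal.Quotient.mk J) I) ≤
          lau (Ideal.comap (Ideal.Quotient.mk J) I') := by
        intro f hf
        have h2 : π f ∈ F I' := h (Ideal.mem_map_of_mem π hf)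
        obtain ⟨g, hg, hgf⟩ := (Ideal.mem_map_iff_of_surjective π hπ).1 h2
        have h3 : f - g ∈ lau (Ideal.comap (Ideal.Quotient.mk J) I') :=
          lau_mono (hJ I') (ker_le_lau_jac π hker (by rw [RingHom.mem_ker, map_sub, hgf, sub_self]))
        simpa using Ideal.add_mem _ h3 hg
      rw [lau_le_iff] at h1
      intro a ha
      obtain ⟨b, rfl⟩ := Ideal.Quotient.mk_surjective a
      exact h1 (show b ∈ Ideal.comap (Ideal.Quotient.mk J) I from ha)
    · intro h
      exact Ideal.map_mono (lau_mono (Ideal.comap_mono h))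
  have hF : StrictMono F := fun I I' h =>
    lt_of_le_not_ge ((hle _ _).2 h.le) fun h' => not_le_of_gt h ((hle _ _).1 h')
  have : IsArtinianRing (B ⧸ J) := by
    have : WellFoundedLT (Ideal S) := inferInstanceAs (IsArtinian S S)
    exact hF.wellFoundedLT
  exact IsArtinianRing.isSemisimpleRing_iff_jacobson.mpr (Ring.jacobson_quotient_jacobson B)

/-- the central unit `x ^ n` -/
noncomputable def xp (B : Type*) [Ring B] (n : ℕ) : LaurentSeries B := HahnSeries.single (n : ℤ) 1

theorem xp_comm (n : ℕ) (f : LaurentSeries B) : xp B n * f = f * xp B n := by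
  ext i
  rw [xp, HahnSeries.coeff_single_mul, HahnSeries.coeff_mul_single, one_mul, mul_one]

theorem xp_sub_isUnit {i n : ℕ} (h : i < n) : IsUnit (xp B i - xp B n) := by
  have h1 : IsUnit (xp B i) := ⟨⟨xp B i, HahnSeries.single (-(i:ℤ)) 1, by
    simp [xp], by simp [xp]⟩, rfl⟩
  have h2 : IsUnit (1 - xp B (n - i)) := by
    apply isUnit_one_pos
    · intro k hk
      rw [HahnSeries.coeff_sub, HahnSeries.coeff_one, if_neg hk.ne, xp,
        HahnSeries.coeff_single_of_ne (by omega), sub_zero]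
    · rw [HahnSeries.coeff_sub, HahnSeries.coeff_one, if_pos rfl, xp,
        HahnSeries.coeff_single_of_ne (by omega), sub_zero]
  have : xp B i - xp B n = xp B i * (1 - xp B (n - i)) := by
    rw [mul_sub, mul_one, xp, xp, xp, HahnSeries.single_mul_single, mul_one]
    congr 3
    omega
  rw [this]
  exact h1.mul h2

/-- the product of `x ^ i - a` for `i = 1, …, n` -/
noncomputable def pp (a : B) : ℕ → LaurentSeries B
  | 0 => 1
  | n + 1 => pp a n * (xp B (n + 1) - HahnSeries.single 0 a)

theorem pp_cong (a : B) (N n : ℕ) (hn : n < N) :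
    ∃ v c, IsUnit v ∧ pp a n = v + c * (xp B N - HahnSeries.single 0 a) := by
  induction n with
  | zero => exact ⟨1, 0, isUnit_one, by simp [pp]⟩
  | succ n ih =>
    obtain ⟨v, c, hv, h⟩ := ih (by omega)
    set y := xp B N - HahnSeries.single 0 a with hy
    set w := xp B (n + 1) - xp B N with hw
    have hwu : IsUnit w := xp_sub_isUnit hn
    have hcomm : y * w = w * y := by
      rw [hw, mul_sub y, sub_mul _ _ y, xp_comm _ y, xp_comm _ y]
    refine ⟨v * w, c * w + pp a n, hv.mul hwu, ?_⟩
    have h1 : xp B (n + 1) - HahnSeries.single 0 a = w + y := by rw [hw, hy]; abel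
    have : pp a (n + 1) = pp a n * (w + y) := by rw [← h1]; rfl
    rw [this, mul_add, add_mul, mul_assoc c w y, ← hcomm]
    nth_rewrite 1 [h]
    rw [add_mul, mul_assoc c y w]
    abel

theorem jac_nil [IsArtinianRing S] (hπ : Function.Surjective π)
    (hker : ∀ j ∈ RingHom.ker π, IsUnit (1 + j)) (a : B) (ha : a ∈ Ring.jacobson B) :
    IsNilpotent a := by
  let L : ℕ →o (Ideal S)ᵒᵈ := ⟨fun n => OrderDual.toDual (Ideal.span {π (pp a n)}), by
    apply monotone_nat_of_le_succ
    intro n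
    change Ideal.span {π (pp a (n + 1))} ≤ Ideal.span {π (pp a n)}
    rw [Ideal.span_singleton_le_iff_mem]
    have : pp a (n + 1) = (xp B (n + 1) - HahnSeries.single 0 a) * pp a n := by
      have hc : ∀ m, HahnSeries.single 0 a * pp a m = pp a m * HahnSeries.single 0 a := by
        intro m
        induction m with
        | zero => simp [pp]
        | succ m ih =>
          rw [pp, ← mul_assoc, ih, mul_assoc, mul_assoc, mul_sub, sub_mul, xp_comm]
      rw [pp, mul_sub, sub_mul, xp_comm, hc]
    rw [this, map_mul]
    exact Ideal.mul_mem_left _ _ (Ideal.mem_span_singleton_self _)⟩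
  obtain ⟨n, hn⟩ := IsArtinian.monotone_stabilizes L
  have h1 : Ideal.span {π (pp a n)} = Ideal.span {π (pp a (n + 1))} := hn (n + 1) (by omega)
  have h2 : π (pp a n) ∈ Ideal.span {π (pp a (n + 1))} := by
    rw [← h1]; exact Ideal.mem_span_singleton_self _
  obtain ⟨r', hr'⟩ := Ideal.mem_span_singleton'.1 h2
  obtain ⟨r, rfl⟩ := hπ r'
  obtain ⟨v, c, ⟨v, rfl⟩, hv⟩ := pp_cong a (n + 1) n (by omega)
  set y := xp B (n + 1) - HahnSeries.single 0 a with hy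
  -- produce a left inverse of `y`
  let j : LaurentSeries B := ↑v⁻¹ * (r * pp a (n + 1) - pp a n)
  have hj : j ∈ RingHom.ker π := by
    rw [RingHom.mem_ker, map_mul, map_sub, map_mul, hr', sub_self, mul_zero]
  obtain ⟨u, hu⟩ := hker j hj
  have hpp : pp a (n + 1) = pp a n * y := rfl
  have hz : ∃ z, z * y = 1 := by
    refine ⟨↑u⁻¹ * (↑v⁻¹ * (r * pp a n - c)), ?_⟩
    have : (1 : LaurentSeries B) + j = (↑v⁻¹ * (r * pp a n - c)) * y := by
      simp only [j]
      rw [hpp, mul_assoc, sub_mul, mul_assoc]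
      have h3 : pp a n = v + c * y := hv
      nth_rewrite 2 [h3]
      simp only [mul_sub, mul_add, Units.inv_mul]
      abel
    rw [mul_assoc, ← this, ← hu, Units.inv_mul]
  obtain ⟨h, hh⟩ := hz
  have hcoef : ∀ i : ℤ, h.coeff (i - (n + 1 : ℕ)) - h.coeff i * a = if i = 0 then 1 else 0 := by
    intro i
    have := congrArg (fun f : LaurentSeries B => f.coeff i) hh
    simp only [hy, mul_sub, HahnSeries.coeff_sub, xp, HahnSeries.coeff_mul_single,
      HahnSeries.coeff_one, mul_one, sub_zero] at this
    convert this
  have h0 := hcoef 0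
  rw [if_pos rfl, zero_sub] at h0
  have hunit : IsUnit (h.coeff (-((n + 1 : ℕ) : ℤ))) := by
    have : h.coeff (-((n + 1 : ℕ) : ℤ)) = 1 + h.coeff 0 * a := by rw [← h0]; abel
    rw [this]
    exact isUnit_one_add_jac _ (Ideal.mul_mem_left _ _ ha)
  have hind : ∀ k : ℕ, h.coeff (-((n + 1 : ℕ) : ℤ) * (k + 1)) =
      h.coeff (-((n + 1 : ℕ) : ℤ)) * a ^ k := by
    intro k
    induction k with
    | zero => simp
    | succ k ih =>
      have hne : -((n + 1 : ℕ) : ℤ) * (k + 1) ≠ 0 := by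
        apply mul_ne_zero <;> omega
      have := hcoef (-((n + 1 : ℕ) : ℤ) * (k + 1))
      rw [if_neg hne, sub_eq_zero, ih, mul_assoc, ← pow_succ] at this
      rw [← this]
      congr 1
      push_cast
      ring
  obtain ⟨p, hp⟩ := exists_lower h
  refine ⟨p.natAbs, ?_⟩
  have h4 := hind p.natAbs
  rw [hp] at h4
  · obtain ⟨w, hw⟩ := hunit
    rw [← hw] at h4
    have := congrArg (fun t => (↑w⁻¹ : B) * t) h4
    simpa using this.symm
  · have : (0:ℤ) ≤ n * (p.natAbs + 1) := by positivity
    push_cast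
    have h5 : -p ≤ |p| := neg_le_abs p
    have h6 : (0:ℤ) ≤ n * (|p| + 1) := by positivity
    nlinarith
end step1

theorem pi_matrix_idem {n : ℕ} (D : Fin n → Type*) (d : Fin n → ℕ) [∀ i, DivisionRing (D i)] :
    ∃ (κ : Type) (_ : Fintype κ) (e : κ → (Π i, Matrix (Fin (d i)) (Fin (d i)) (D i))),
      CompleteOrthogonalIdempotents e ∧ (∀ i, e i ≠ 0) ∧
      ∀ i r, r * e i ≠ 0 → ∃ s, s * (r * e i) = e i := by
  classical
  refine ⟨Σ i : Fin n, Fin (d i), inferInstance,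
    fun p => Pi.single p.1 (Matrix.single p.2 p.2 1), ⟨⟨?_, ?_⟩, ?_⟩, ?_, ?_⟩
  · rintro ⟨i, k⟩
    simp only [IsIdempotentElem, ← Pi.single_mul, Matrix.single_mul_single_same, mul_one]
  · rintro ⟨i, k⟩ ⟨j, l⟩ hne
    simp only
    by_cases hij : i = j
    · subst hij
      have hkl : k ≠ l := fun h => hne (by rw [h])
      rw [← Pi.single_mul, Matrix.single_mul_single_of_ne _ _ _ _ hkl, Pi.single_zero]
    · funext t
      by_cases ht : t = i
      · subst ht
        simp [Pi.single_eq_of_ne hij]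
      · simp [Pi.single_eq_of_ne ht]
  · rw [Fintype.sum_sigma]
    funext t
    rw [Finset.sum_apply, Finset.sum_eq_single t]
    · ext a b
      simp only [Finset.sum_apply, Pi.single_eq_same, Matrix.sum_apply, Pi.one_apply]
      rw [Finset.sum_eq_single a]
      · by_cases hab : a = b
        · subst hab; simp
        · simp [Matrix.single_apply, hab]
      · intro c _ hc
        simp [Matrix.single_apply, hc]
      · simp
    · intro b _ hb
      simp [Pi.single_eq_of_ne hb.symm]
    · simp
  · rintro ⟨i, k⟩ h
    have := congrFun (congrFun (congrFun h i) k) k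
    simp at this
  · rintro ⟨i, k⟩ r hr
    have h1 : ∃ l, r i l k ≠ 0 := by
      by_contra hcon
      push Not at hcon
      apply hr
      funext t
      by_cases ht : t = i
      · subst ht
        ext a b
        simp only [Pi.mul_apply, Pi.single_eq_same, Pi.zero_apply, Matrix.zero_apply]
        by_cases hb : b = k
        · subst hb; simp [hcon]
        · rw [Matrix.mul_single_apply_of_ne _ _ _ _ _ hb]
      · simp [Pi.single_eq_of_ne ht]
    obtain ⟨l, hl⟩ := h1
    refine ⟨Pi.single i (Matrix.single k l (r i l k)⁻¹), ?_⟩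
    funext t
    by_cases ht : t = i
    · subst ht
      simp only [Pi.mul_apply, Pi.single_eq_same]
      rw [← mul_assoc]
      ext a b
      by_cases hb : b = k
      · subst hb
        rw [Matrix.mul_single_apply_same, mul_one]
        by_cases ha : a = b
        · subst ha; simp [hl]
        · rw [Matrix.single_mul_apply_of_ne _ _ _ _ _ ha]; simp [Matrix.single_apply, Ne.symm ha]
      · rw [Matrix.mul_single_apply_of_ne _ _ _ _ _ hb]
        simp [Matrix.single_apply, Ne.symm hb]
    · simp [Pi.single_eq_of_ne ht]

theorem exists_idem_lift (B : Type*) [Ring B] [IsSemisimpleRing (B ⧸ Ring.jacobson B)]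
    (hnil : ∀ a ∈ Ring.jacobson B, IsNilpotent a) :
    ∃ (κ : Type) (_ : Fintype κ) (e : κ → B),
      CompleteOrthogonalIdempotents e ∧ (∀ i, e i ∉ Ring.jacobson B) ∧
      ∀ i r, r * e i ∉ Ring.jacobson B → ∃ s, s * (r * e i) - e i ∈ Ring.jacobson B := by
  obtain ⟨n, D, d, _, _, ⟨φ⟩⟩ :=
    IsSemisimpleRing.exists_ringEquiv_pi_matrix_divisionRing (B ⧸ Ring.jacobson B)
  obtain ⟨κ, hκ, e, he, hne, hs⟩ := pi_matrix_idem D d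
  let f : B →+* (Π i, Matrix (Fin (d i)) (Fin (d i)) (D i)) :=
    φ.toRingHom.comp (Ideal.Quotient.mk _)
  have hf : Function.Surjective f := φ.surjective.comp Ideal.Quotient.mk_surjective
  have hk : ∀ a, f a = 0 ↔ a ∈ Ring.jacobson B := by
    intro a
    rw [← Ideal.Quotient.eq_zero_iff_mem]
    simp [f]
  obtain ⟨e', he', hfe⟩ := he.lift_of_isNilpotent_ker (f := f)
    (fun x hx => hnil x ((hk x).1 hx)) (fun i => hf _)
  have hfe' : ∀ i, f (e' i) = e i := fun i => congrFun hfe i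
  refine ⟨κ, hκ, e', he', fun i hi => hne i ?_, fun i r hr => ?_⟩
  · rw [← hfe', (hk _).2 hi]
  · obtain ⟨s, hs⟩ := hs i (f r) (by rw [← hfe', ← map_mul]; exact fun h => hr ((hk _).1 h))
    obtain ⟨s, rfl⟩ := hf s
    refine ⟨s, (hk _).1 ?_⟩
    rw [map_sub, map_mul, map_mul, hfe', hs, sub_self]

/-- Distributivity passes along a correspondence `N ← P → Q`. -/
theorem distrib_of_corr {R N P Q : Type*} [Ring R] [AddCommGroup N] [Module R N]
    [AddCommGroup P] [Module R P] [AddCommGroup Q] [Module R Q] (hN : IsDistribModule R N)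
    (f : P →ₗ[R] N) (g : P →ₗ[R] Q) (hg : Function.Surjective g)
    (hk : LinearMap.ker f ≤ LinearMap.ker g) : IsDistribModule R Q := by
  intro X Y Z
  apply le_antisymm
  · rintro q ⟨hX, hYZ⟩
    obtain ⟨y, hy, z, hz, rfl⟩ := Submodule.mem_sup.1 hYZ
    obtain ⟨y', rfl⟩ := hg y
    obtain ⟨z', rfl⟩ := hg z
    let Φ : Submodule R Q → Submodule R N := fun X => (X.comap g).map f
    have key : ∀ X Y : Submodule R Q, ∀ p, f p ∈ Φ X ⊓ Φ Y → g p ∈ X ⊓ Y := by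
      rintro X Y p ⟨⟨a, ha, hap⟩, ⟨b, hb, hbp⟩⟩
      have h1 : g a = g p := by
        have : a - p ∈ LinearMap.ker g := hk (by simp [hap])
        simpa [sub_eq_zero] using this
      have h2 : g b = g p := by
        have : b - p ∈ LinearMap.ker g := hk (by simp [hbp])
        simpa [sub_eq_zero] using this
      exact ⟨h1 ▸ ha, h2 ▸ hb⟩
    have h1 : f (y' + z') ∈ Φ X ⊓ (Φ Y ⊔ Φ Z) := by
      refine ⟨⟨y' + z', by simpa using hX, rfl⟩, ?_⟩
      rw [map_add]
      exact Submodule.add_mem_sup ⟨y', hy, rfl⟩ ⟨z', hz, rfl⟩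
    rw [hN] at h1
    obtain ⟨a, ha, b, hb, hab⟩ := Submodule.mem_sup.1 h1
    obtain ⟨a', ha', rfl⟩ := ha.1
    obtain ⟨b', hb', rfl⟩ := hb.1
    have h2 : g (a' + b') = g (y' + z') := by
      have : (a' + b') - (y' + z') ∈ LinearMap.ker g := hk (by
        rw [LinearMap.mem_ker, map_sub, map_add f a' b', hab, sub_self])
      rwa [LinearMap.mem_ker, map_sub, sub_eq_zero] at this
    rw [← map_add, ← h2, map_add]
    exact Submodule.add_mem_sup (key X Y _ ha) (key X Z _ hb)
  · exact sup_le (inf_le_inf_left _ le_sup_left) (inf_le_inf_left _ le_sup_right)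

/-- In a distributive module two copies of a nonzero `T` cannot be independent. -/
theorem distrib_pair {R Q T : Type*} [Ring R] [AddCommGroup Q] [Module R Q]
    [AddCommGroup T] [Module R T] [Nontrivial T] (hQ : IsDistribModule R Q)
    (a b : T →ₗ[R] Q) (hab : ∀ s t, a s + b t = 0 → s = 0 ∧ t = 0) : False := by
  obtain ⟨t, ht⟩ := exists_ne (0 : T)
  have h1 : a t + b t ∈ LinearMap.range (a + b) ⊓ (LinearMap.range a ⊔ LinearMap.range b) :=
    ⟨⟨t, rfl⟩, Submodule.add_mem_sup ⟨t, rfl⟩ ⟨t, rfl⟩⟩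
  rw [hQ] at h1
  obtain ⟨p, ⟨⟨s, rfl⟩, ⟨u, hu⟩⟩, q, ⟨⟨s', rfl⟩, ⟨u', hu'⟩⟩, hpq⟩ := Submodule.mem_sup.1 h1
  simp only [LinearMap.add_apply] at hu hu' hpq
  have e2 : s' = 0 := (hab s' (s' - u') (by rw [map_sub, hu']; abel)).1
  have e1 : -s = 0 := (hab (u - s) (-s) (by rw [map_sub, map_neg, hu]; abel)).2
  rw [neg_eq_zero] at e1
  subst e1 e2
  exact ht (hab t t (by simpa using hpq.symm)).1

/-- Bounded multiplicity: if `M` is a sum of `n` distributive submodules, then `T ^ (n + 1)`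
is not a subfactor of `M`. -/
theorem mult_bound {R M T ι : Type*} [Ring R] [AddCommGroup M] [Module R M]
    [AddCommGroup T] [Module R T] [IsSimpleModule R T] (N : ι → Submodule R M)
    (hN : ∀ i, IsDistribModule R (N i)) (s : Finset ι) :
    ∀ {W : Type*} [AddCommGroup W] [Module R W] (m : ℕ) (_ : s.card < m)
      (Ψ : W →ₗ[R] M) (_ : ∀ w, Ψ w ∈ s.sup N)
      (Φ : W →ₗ[R] (Fin m → T)) (_ : Function.Surjective Φ),
      ¬ LinearMap.ker Ψ ≤ LinearMap.ker Φ := by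
  classical
  have := IsSimpleModule.nontrivial R T
  induction s using Finset.induction_on with
  | empty =>
    intro W _ _ m hm Ψ hΨ Φ hΦ hk
    obtain ⟨t, ht⟩ := exists_ne (0 : T)
    obtain ⟨w, hw⟩ := hΦ (fun _ => t)
    have h0 : w ∈ LinearMap.ker Ψ := by simpa using hΨ w
    have := hk h0
    rw [LinearMap.mem_ker, hw] at this
    exact ht (congrFun this ⟨0, hm⟩)
  | insert i₀ s hi₀ ih =>
    intro W _ _ m hm Ψ hΨ Φ hΦ hk
    rw [Finset.card_insert_of_notMem hi₀] at hm
    obtain ⟨m, rfl⟩ : ∃ m', m = m' + 1 := ⟨m - 1, by omega⟩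
    let K := s.sup N
    let W' := K.comap Ψ
    let T' := W'.map Φ
    have hQ : IsDistribModule R ((Fin (m + 1) → T) ⧸ T') := by
      let D : (N i₀ × W) →ₗ[R] M :=
        (N i₀).subtype ∘ₗ LinearMap.fst R _ _ - Ψ ∘ₗ LinearMap.snd R _ _
      let P : Submodule R (N i₀ × W) := K.comap D
      refine distrib_of_corr (hN i₀) (LinearMap.fst R _ _ ∘ₗ P.subtype)
        (T'.mkQ ∘ₗ Φ ∘ₗ LinearMap.snd R _ _ ∘ₗ P.subtype) ?_ ?_
      · intro q
        obtain ⟨v, rfl⟩ := T'.mkQ_surjective q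
        obtain ⟨w, rfl⟩ := hΦ v
        have h1 := hΨ w
        rw [Finset.sup_insert] at h1
        obtain ⟨y, hy, z, hz, hyz⟩ := Submodule.mem_sup.1 h1
        refine ⟨⟨(⟨y, hy⟩, w), ?_⟩, rfl⟩
        change y - Ψ w ∈ K
        rw [← hyz]
        simpa using K.neg_mem hz
      · rintro ⟨⟨y, w⟩, hp⟩ hy
        have hy0 : y = 0 := hy
        subst hy0
        have hw : Ψ w ∈ K := by
          have : ((0 : N i₀) : M) - Ψ w ∈ K := hp
          simpa using this
        change T'.mkQ (Φ w) = 0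
        rw [Submodule.mkQ_apply, Submodule.Quotient.mk_eq_zero]
        exact ⟨w, hw, rfl⟩
    have hex : ∃ i : Fin (m + 1), ∀ v : Fin (m + 1) → T, ∃ t : T, v - (Pi.single i t : Fin (m + 1) → T) ∈ T' := by
      by_cases hT : T' = ⊤
      · exact ⟨0, fun v => ⟨0, by rw [hT]; trivial⟩⟩
      let a : Fin (m + 1) → (T →ₗ[R] ((Fin (m + 1) → T) ⧸ T')) := fun i =>
        T'.mkQ ∘ₗ LinearMap.single R (fun _ => T) i
      have hsum : ∀ v : Fin (m + 1) → T, T'.mkQ v = ∑ j, a j (v j) := by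
        intro v
        conv_lhs => rw [← Finset.univ_sum_single v]
        rw [map_sum]
        rfl
      have hi : ∃ i, a i ≠ 0 := by
        by_contra hcon
        push Not at hcon
        apply hT
        rw [eq_top_iff]
        intro v _
        rw [← Submodule.Quotient.mk_eq_zero, ← Submodule.mkQ_apply, hsum]
        simp [hcon]
      obtain ⟨i, hi⟩ := hi
      have hinj : Function.Injective (a i) := (LinearMap.injective_or_eq_zero (a i)).resolve_right hi
      have hall : ∀ j t, a j t ∈ LinearMap.range (a i) := by
        intro j
        rcases eq_bot_or_eq_top ((LinearMap.range (a i)).comap (a j)) with h | h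
        · exfalso
          refine distrib_pair hQ (a i) (a j) fun s t hst => ?_
          have ht : t ∈ (LinearMap.range (a i)).comap (a j) :=
            ⟨-s, by rw [map_neg]; exact neg_eq_of_add_eq_zero_right hst⟩
          rw [h, Submodule.mem_bot] at ht
          subst ht
          refine ⟨hinj ?_, rfl⟩
          simpa using hst
        · intro t
          have : t ∈ (LinearMap.range (a i)).comap (a j) := by rw [h]; trivial
          exact this
      refine ⟨i, fun v => ?_⟩
      have hv : T'.mkQ v ∈ LinearMap.range (a i) := by
        rw [hsum]
        exact Submodule.sum_mem _ fun j _ => hall j _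
      obtain ⟨t, ht⟩ := hv
      refine ⟨t, ?_⟩
      rw [← Submodule.Quotient.mk_eq_zero, ← Submodule.mkQ_apply, map_sub, sub_eq_zero]
      exact ht.symm
    obtain ⟨i, hi⟩ := hex
    refine ih m (by omega) (Ψ ∘ₗ W'.subtype) (fun w => w.2)
      (LinearMap.funLeft R T i.succAbove ∘ₗ Φ ∘ₗ W'.subtype) ?_ ?_
    · intro y
      obtain ⟨t, w, hw, hwt⟩ := hi (i.insertNth 0 y)
      refine ⟨⟨w, hw⟩, ?_⟩
      funext k
      change Φ w (i.succAbove k) = y k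
      rw [hwt]
      simp
    · intro w hw
      have : Φ w = 0 := hk hw
      change (LinearMap.funLeft R T i.succAbove) (Φ w) = 0
      rw [this, map_zero]

/-- The pigeonhole step: a strictly ascending chain with controlled successive quotients. -/
theorem exists_chain {B κ : Type*} [Ring B] [Fintype κ] (e : κ → B) (hsum : ∑ i, e i = 1)
    (he : ∀ i r, r * e i ∉ Ring.jacobson B → ∃ s, s * (r * e i) - e i ∈ Ring.jacobson B)
    (hB : ¬ IsNoetherianRing B) :
    ∃ (i : κ) (X : ℕ → Ideal B) (a : ℕ → B), Monotone X ∧ (∀ k, a k ∈ X (k + 1)) ∧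
      ∀ k r, r * a k ∈ X k → r * e i ∈ Ring.jacobson B := by
  have h1 : ∃ Y : ℕ → Ideal B, StrictMono Y := by
    by_contra hcon
    apply hB
    rw [isNoetherianRing_iff, isNoetherian_iff']
    have hwf : WellFounded ((· > ·) : Ideal B → Ideal B → Prop) := by
      rw [RelEmbedding.wellFounded_iff_isEmpty]
      refine ⟨fun f => hcon ⟨f, strictMono_nat_of_lt_succ fun n => ?_⟩⟩
      exact f.map_rel_iff.2 (Nat.lt_succ_self n)
    exact ⟨hwf⟩
  obtain ⟨Y, hY⟩ := h1
  have h2 : ∀ k, ∃ (i : κ) (b : B), b ∈ Y (k + 1) ∧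
      ∀ r, r * b ∈ Y k → r * e i ∈ Ring.jacobson B := by
    intro k
    obtain ⟨c, hc1, hc2⟩ := SetLike.exists_of_lt (hY (Nat.lt_succ_self k))
    let L : Ideal B := Submodule.comap (LinearMap.toSpanSingleton B B c) (Y k)
    have hmem : ∀ r, r ∈ L ↔ r * c ∈ Y k := fun r => Iff.rfl
    have hL : L ≠ ⊤ := by
      rw [Ideal.ne_top_iff_one, hmem, one_mul]; exact hc2
    obtain ⟨P, hP, hLP⟩ := Ideal.exists_le_maximal L hL
    have hi : ∃ i, e i ∉ P := by
      by_contra hcon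
      push Not at hcon
      apply (Ideal.ne_top_iff_one P).1 hP.ne_top
      rw [← hsum]
      exact P.sum_mem fun i _ => hcon i
    obtain ⟨i, hi⟩ := hi
    refine ⟨i, e i * c, Ideal.mul_mem_left _ _ hc1, fun r hr => ?_⟩
    by_contra hJ
    obtain ⟨s, hs⟩ := he i r hJ
    have h3 : r * e i ∈ P := hLP ((hmem _).2 (by rwa [mul_assoc]))
    have h4 : s * (r * e i) - e i ∈ P := Ring.jacobson_le_of_isMaximal P hs
    apply hi
    have := P.sub_mem (P.mul_mem_left s h3) h4
    simpa using this
  choose idx b hb1 hb2 using h2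
  obtain ⟨i, hinf⟩ := Finite.exists_infinite_fiber idx
  have hinf' : (idx ⁻¹' {i}).Infinite := Set.infinite_coe_iff.1 hinf
  let n : ℕ → ℕ := Nat.nth (fun k => idx k = i)
  have hn : StrictMono n := Nat.nth_strictMono hinf'
  have hni : ∀ k, idx (n k) = i := fun k => Nat.nth_mem_of_infinite hinf' k
  refine ⟨i, fun k => Y (n k), fun k => b (n k), fun p q h => hY.monotone (hn.monotone h),
    fun k => hY.monotone (Nat.succ_le_of_lt (hn (Nat.lt_succ_self k))) (hb1 (n k)), fun k r hr => ?_⟩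
  have := hb2 (n k) r hr
  rwa [hni] at this

theorem noeth_of_bound {B κ ι : Type*} [Ring B] [Fintype κ] (e : κ → B) (hsum : ∑ i, e i = 1)
    (hne : ∀ i, e i ∉ Ring.jacobson B)
    (he : ∀ i r, r * e i ∉ Ring.jacobson B → ∃ s, s * (r * e i) - e i ∈ Ring.jacobson B)
    (N : ι → Ideal (LaurentSeries B)) (hN : ∀ i, IsDistribModule (LaurentSeries B) (N i))
    (s : Finset ι) (hs : s.sup N = ⊤) : IsNoetherianRing B := by
  classical
  by_contra hB
  obtain ⟨i, X, a, hX, ha, hq⟩ := exists_chain e hsum he hB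
  let Q : Ideal B := Submodule.comap (LinearMap.toSpanSingleton B B (e i)) (Ring.jacobson B)
  have hQ : ∀ r, r ∈ Q ↔ r * e i ∈ Ring.jacobson B := fun r => Iff.rfl
  have hQmax : Q.IsMaximal := by
    rw [Ideal.isMaximal_iff]
    refine ⟨by rw [hQ, one_mul]; exact hne i, fun I r hI hrQ hrI => ?_⟩
    obtain ⟨t, ht⟩ := he i r hrQ
    have h1 : t * r - 1 ∈ Q := by
      rw [hQ, sub_mul, one_mul, mul_assoc]; exact ht
    have := I.sub_mem (I.mul_mem_left t hrI) (hI h1)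
    simpa using this
  have hmax := lau_isMaximal Q hQmax
  have hsimple : IsSimpleModule (LaurentSeries B) (LaurentSeries B ⧸ lau Q) :=
    isSimpleModule_iff_isCoatom.2 (Ideal.isMaximal_def.1 hmax)
  let m := s.card + 1
  -- the `m` interleaved series
  let f : Fin m → LaurentSeries B := fun l =>
    HahnSeries.ofPowerSeries ℤ B (PowerSeries.mk fun t =>
      if (Nat.sqrt t) ^ 2 = t ∧ Nat.sqrt t % m = l then a (Nat.sqrt t) else 0)
  have hfneg : ∀ l t, t < 0 → (f l).coeff t = 0 := by
    intro l t ht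
    simp only [f]
    rw [HahnSeries.ofPowerSeries_apply]
    apply HahnSeries.embDomain_of_notMem_range
    rintro ⟨m, hm⟩
    simp at hm
    omega
  have hfnat : ∀ l (t : ℕ), (f l).coeff (t : ℤ) =
      if (Nat.sqrt t) ^ 2 = t ∧ Nat.sqrt t % m = l then a (Nat.sqrt t) else 0 := by
    intro l t
    have := HahnSeries.ofPowerSeries_apply_coeff (Γ := ℤ) (PowerSeries.mk fun t =>
      if (Nat.sqrt t) ^ 2 = t ∧ Nat.sqrt t % m = l then a (Nat.sqrt t) else 0) t
    rw [PowerSeries.coeff_mk] at this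
    exact this
  let Ψ : (Fin m → LaurentSeries B) →ₗ[LaurentSeries B] LaurentSeries B :=
    ∑ l, (LinearMap.toSpanSingleton _ _ (f l)) ∘ₗ LinearMap.proj l
  have hΨ : ∀ q, Ψ q = ∑ l, q l * f l := by
    intro q; simp [Ψ]
  let Φ : (Fin m → LaurentSeries B) →ₗ[LaurentSeries B] (Fin m → LaurentSeries B ⧸ lau Q) :=
    LinearMap.pi fun l => (lau Q).mkQ ∘ₗ LinearMap.proj l
  refine mult_bound N hN s m (by omega) Ψ (fun w => by rw [hs]; trivial) Φ ?_ ?_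
  · intro y
    choose q hq using fun l => (lau Q).mkQ_surjective (y l)
    exact ⟨q, funext hq⟩
  · intro q hker
    rw [LinearMap.mem_ker, hΨ] at hker
    suffices h : ∀ l t, (q l).coeff t ∈ Q by
      rw [LinearMap.mem_ker]
      funext l
      change (lau Q).mkQ (q l) = 0
      rw [Submodule.mkQ_apply, Submodule.Quotient.mk_eq_zero]
      exact h l
    intro l t
    choose p hp using fun l => exists_lower (q l)
    obtain ⟨p0, hp0⟩ : ∃ p0, ∀ l, p0 ≤ p l := by
      obtain ⟨M, hM⟩ := (Set.finite_range p).bddBelow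
      exact ⟨M, fun l => hM ⟨l, rfl⟩⟩
    -- a large index congruent to `l`
    obtain ⟨k, hkl, hk⟩ : ∃ k : ℕ, k % m = l ∧ t - p0 < 2 * k + 1 := by
      refine ⟨l + m * (t - p0).natAbs, by simp [Nat.mod_eq_of_lt l.2], ?_⟩
      have h1 : (t - p0).natAbs ≤ m * (t - p0).natAbs := Nat.le_mul_of_pos_left _ (by omega)
      have h2 : t - p0 ≤ ((t - p0).natAbs : ℤ) := Int.le_natAbs
      zify at h1
      push_cast
      zify at h2
      have : (0:ℤ) ≤ (l : ℕ) := by positivity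
      linarith [abs_nonneg (t - p0)]
    have key : ∀ l', (q l' * f l').coeff (t + k ^ 2) -
        (if l' = l then (q l).coeff t * a k else 0) ∈ X k := by
      intro l'
      let lo : LaurentSeries B := ⟨fun n => if n < (k:ℤ) ^ 2 then (f l').coeff n else 0,
        (f l').isPWO_support.mono fun i hi => by
          intro h; apply hi; simp [h]⟩
      let mid : LaurentSeries B := HahnSeries.single ((k:ℤ) ^ 2) ((f l').coeff ((k:ℤ) ^ 2))
      let hi : LaurentSeries B := f l' - lo - mid
      have hdec : f l' = lo + mid + hi := by simp only [hi]; abel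
      have hlo : lo ∈ lau (X k) := by
        intro n
        change (if n < (k:ℤ) ^ 2 then (f l').coeff n else 0) ∈ X k
        split_ifs with hn
        · by_cases hn0 : n < 0
          · rw [hfneg _ _ hn0]; exact (X k).zero_mem
          · obtain ⟨u, rfl⟩ := Int.eq_ofNat_of_zero_le (not_lt.1 hn0)
            rw [hfnat]
            split_ifs with hu
            · refine hX ?_ (ha _)
              have : u < k ^ 2 := by exact_mod_cast hn
              exact Nat.succ_le_of_lt (Nat.sqrt_lt'.2 this)
            · exact (X k).zero_mem
        · exact (X k).zero_mem
      have hmid : (f l').coeff ((k:ℤ) ^ 2) = if l' = l then a k else 0 := by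
        have := hfnat l' (k ^ 2)
        push_cast at this
        rw [this, Nat.sqrt_eq', hkl]
        by_cases h : l' = l
        · simp [h]
        · have h' : ¬ ((l : ℕ) = l') := fun hh => h (Fin.ext hh.symm)
          simp [h, h']
      have hhi : ∀ n, n < ((k:ℤ) + 1) ^ 2 → hi.coeff n = 0 := by
        intro n hn
        simp only [hi, HahnSeries.coeff_sub, mid]
        have hlon : lo.coeff n = if n < (k:ℤ) ^ 2 then (f l').coeff n else 0 := rfl
        rw [hlon]
        rcases lt_trichotomy n ((k:ℤ) ^ 2) with h | h | h
        · rw [if_pos h, HahnSeries.coeff_single_of_ne h.ne]; simp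
        · rw [if_neg (by omega), h]; simp
        · rw [if_neg (by omega), HahnSeries.coeff_single_of_ne h.ne', sub_zero, sub_zero]
          have hn0 : 0 ≤ n := le_trans (by positivity) h.le
          obtain ⟨u, rfl⟩ := Int.eq_ofNat_of_zero_le hn0
          rw [hfnat, if_neg]
          rintro ⟨hsq, -⟩
          have h1 : k ^ 2 < u := by exact_mod_cast h
          have h2 : u < (k + 1) ^ 2 := by exact_mod_cast hn
          rw [← hsq] at h1 h2
          have h3 := lt_of_pow_lt_pow_left₀ 2 (by omega) h1
          have h4 := lt_of_pow_lt_pow_left₀ 2 (by omega) h2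
          omega
      have e1 : (q l' * lo).coeff (t + k ^ 2) ∈ X k := (lau (X k)).mul_mem_left _ hlo _
      have e2 : (q l' * mid).coeff (t + k ^ 2) = if l' = l then (q l).coeff t * a k else 0 := by
        simp only [mid]
        rw [HahnSeries.coeff_mul_single_add, hmid]
        split_ifs with h
        · rw [h]
        · rw [mul_zero]
      have e3 : (q l' * hi).coeff (t + k ^ 2) = 0 := by
        refine coeff_mul_zero_of_lt _ _ (p l') (((k:ℤ) + 1) ^ 2) _ (hp l') hhi ?_
        have := hp0 l'
        nlinarith
      rw [hdec, mul_add, mul_add, HahnSeries.coeff_add, HahnSeries.coeff_add, e2, e3]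
      simpa using e1
    have h5 : (∑ l', q l' * f l').coeff (t + k ^ 2) - (q l).coeff t * a k ∈ X k := by
      have := (X k).sum_mem (t := Finset.univ) fun l' _ => key l'
      rw [Finset.sum_sub_distrib, Finset.sum_ite_eq' Finset.univ l] at this
      simpa [HahnSeries.coeff_sum] using this
    rw [hker] at h5
    rw [hQ]
    refine hq k _ ?_
    simpa using h5

/-- Levitzki's theorem for the Jacobson radical. -/
theorem levitzki {B : Type*} [Ring B] [IsNoetherianRing B]
    (hnil : ∀ a ∈ Ring.jacobson B, IsNilpotent a) : ∃ n, Ring.jacobson B ^ n = ⊥ := by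
  have wf : WellFoundedGT (Ideal B) := inferInstance
  let Sset : Set (Ideal B) := {W | (∀ a ∈ W, ∀ r, a * r ∈ W) ∧ ∃ n, W ^ n = ⊥}
  have hS : Sset.Nonempty := ⟨⊥, fun a ha r => by
    rw [Submodule.mem_bot] at ha ⊢; rw [ha, zero_mul], 1, by
      rw [Submodule.pow_succ, Submodule.pow_zero, Ideal.one_eq_top]
      rw [eq_bot_iff, Ideal.mul_le]
      intro a _ b hb
      rw [Submodule.mem_bot] at hb ⊢
      rw [hb, mul_zero]⟩
  obtain ⟨W, ⟨hW2, n, hn⟩, hWmax⟩ := wf.wf.has_min Sset hS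
  have hJ2 : ∀ a ∈ Ring.jacobson B, ∀ r, a * r ∈ Ring.jacobson B := fun a ha r =>
    Ideal.mul_mem_right r _ ha
  have hmono : ∀ (X Y : Ideal B) (k : ℕ), X ≤ Y → X ^ k ≤ Y ^ k := fun X Y k h => by
    induction k with
    | zero => rw [Submodule.pow_zero, Submodule.pow_zero]
    | succ k ih => rw [Submodule.pow_succ, Submodule.pow_succ]; exact Ideal.mul_mono ih h
  suffices hle : Ring.jacobson B ≤ W by
    exact ⟨n, le_bot_iff.1 (hn ▸ hmono _ _ n hle)⟩
  by_contra hJW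
  let L : B → Ideal B := fun b => Submodule.comap (LinearMap.toSpanSingleton B B b) W
  have hL : ∀ b c, c ∈ L b ↔ c * b ∈ W := fun b c => Iff.rfl
  obtain ⟨b0, hb0J, hb0W⟩ := SetLike.not_le_iff_exists.1 hJW
  obtain ⟨X, ⟨b, ⟨hbJ, hbW⟩, rfl⟩, hbmax⟩ := wf.wf.has_min
    (L '' {b | b ∈ Ring.jacobson B ∧ b ∉ W}) ⟨_, b0, ⟨hb0J, hb0W⟩, rfl⟩
  have key : ∀ u, b * u * b ∈ W := by
    intro u
    classical
    have hbu := hJ2 b hbJ u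
    have hex : ∃ k, (b * u) ^ (k + 1) ∈ W := by
      obtain ⟨k, hk⟩ := hnil _ hbu
      exact ⟨k, by rw [pow_succ, hk, zero_mul]; exact W.zero_mem⟩
    have hk := Nat.find_spec hex
    have hmin := fun m => Nat.find_min hex (m := m)
    generalize Nat.find hex = k at hk hmin
    cases k with
    | zero => exact hW2 _ (by simpa using hk) b
    | succ k =>
      have h1 : (b * u) ^ (k + 1) ∉ W := hmin k (Nat.lt_succ_self k)
      have h2 : (b * u) ^ (k + 1) ∈ Ring.jacobson B := by
        rw [pow_succ]; exact Ideal.mul_mem_left _ _ hbu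
      have h3 : L b ≤ L ((b * u) ^ (k + 1)) := by
        intro c hc
        rw [hL] at hc ⊢
        rw [pow_succ', ← mul_assoc, ← mul_assoc, mul_assoc]
        exact hW2 _ hc _
      have h4 : ¬ L b < L ((b * u) ^ (k + 1)) := hbmax _ ⟨_, ⟨h2, h1⟩, rfl⟩
      have h5 : b * u ∈ L ((b * u) ^ (k + 1)) := by
        rw [hL, ← pow_succ']; exact hk
      have h6 : L b = L ((b * u) ^ (k + 1)) := by
        by_contra hne; exact h4 (lt_of_le_of_ne h3 hne)
      rw [← h6, hL] at h5
      exact h5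
  let U : Ideal B := Ideal.span (Set.range fun u => b * u)
  have hUr : ∀ a ∈ U, ∀ r, a * r ∈ U := by
    intro a ha r
    induction ha using Submodule.span_induction with
    | mem x hx =>
      obtain ⟨u, rfl⟩ := hx
      exact Ideal.subset_span ⟨u * r, by simp [mul_assoc]⟩
    | zero => simp
    | add x y _ _ hx hy => rw [add_mul]; exact U.add_mem hx hy
    | smul c x _ hx => rw [smul_eq_mul, mul_assoc]; exact U.mul_mem_left _ hx
  have hUW : ∀ a ∈ U, a * b ∈ W := by
    intro a ha
    induction ha using Submodule.span_induction with
    | mem x hx => obtain ⟨u, rfl⟩ := hx; exact key u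
    | zero => simp
    | add x y _ _ hx hy => rw [add_mul]; exact W.add_mem hx hy
    | smul c x _ hx => rw [smul_eq_mul, mul_assoc]; exact W.mul_mem_left _ hx
  have hUU : ∀ a ∈ U, ∀ c ∈ U, a * c ∈ W := by
    intro a ha c hc
    induction hc using Submodule.span_induction generalizing a with
    | mem x hx => obtain ⟨u, rfl⟩ := hx; rw [← mul_assoc]; exact hW2 _ (hUW a ha) u
    | zero => simp
    | add x y _ _ hx hy => rw [mul_add]; exact W.add_mem (hx a ha) (hy a ha)
    | smul c x _ hx => rw [smul_eq_mul, ← mul_assoc]; exact hx _ (hUr a ha c)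
  let V := W ⊔ U
  have hV2 : ∀ a ∈ V, ∀ r, a * r ∈ V := by
    intro a ha r
    obtain ⟨w, hw, u, hu, rfl⟩ := Submodule.mem_sup.1 ha
    rw [add_mul]
    exact Submodule.add_mem_sup (hW2 w hw r) (hUr u hu r)
  have hVV : V * V ≤ W := by
    rw [Ideal.mul_le]
    intro a ha c hc
    obtain ⟨w, hw, u, hu, rfl⟩ := Submodule.mem_sup.1 ha
    obtain ⟨w', hw', u', hu', rfl⟩ := Submodule.mem_sup.1 hc
    rw [add_mul, mul_add u]
    exact W.add_mem (hW2 w hw _) (W.add_mem (W.mul_mem_left _ hw') (hUU u hu u' hu'))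
  have hVn : ∀ k, V ^ (2 * k) ≤ W ^ k := by
    intro k
    induction k with
    | zero => rw [mul_zero, Submodule.pow_zero, Submodule.pow_zero]
    | succ k ih =>
      rw [show 2 * (k + 1) = 2 * k + 1 + 1 by ring, Submodule.pow_succ, Submodule.pow_succ,
        Submodule.pow_succ, Ideal.mul_assoc]
      exact Ideal.mul_mono ih hVV
  refine hWmax V ⟨hV2, 2 * n, le_bot_iff.1 (hn ▸ hVn n)⟩ ?_
  refine lt_of_le_of_ne le_sup_left fun h => hbW ?_
  rw [h]
  exact Submodule.mem_sup_right (Ideal.subset_span ⟨1, by simp⟩)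

theorem distrib_sub_iff {R M : Type*} [Ring R] [AddCommGroup M] [Module R M]
    (N : Submodule R M) : IsDistribModule R N ↔ ∀ X Y Z : Submodule R M, X ≤ N → Y ≤ N → Z ≤ N →
      X ⊓ (Y ⊔ Z) ≤ X ⊓ Y ⊔ X ⊓ Z := by
  have hinj : Function.Injective N.subtype := N.injective_subtype
  constructor
  · intro h X Y Z hX hY hZ
    have := congrArg (Submodule.map N.subtype)
      (h (X.comap N.subtype) (Y.comap N.subtype) (Z.comap N.subtype))
    rw [Submodule.map_inf _ hinj, Submodule.map_sup, Submodule.map_sup, Submodule.map_inf _ hinj,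
      Submodule.map_inf _ hinj, Submodule.map_comap_subtype, Submodule.map_comap_subtype,
      Submodule.map_comap_subtype, inf_eq_right.2 hX, inf_eq_right.2 hY, inf_eq_right.2 hZ] at this
    exact this.le
  · intro h X Y Z
    apply le_antisymm
    · have := h (X.map N.subtype) (Y.map N.subtype) (Z.map N.subtype)
        (Submodule.map_subtype_le N X) (Submodule.map_subtype_le N Y) (Submodule.map_subtype_le N Z)
      rw [← Submodule.map_sup, ← Submodule.map_inf _ hinj, ← Submodule.map_inf _ hinj,
        ← Submodule.map_inf _ hinj, ← Submodule.map_sup] at this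
      exact (Submodule.map_le_map_iff_of_injective hinj _ _).1 this
    · exact sup_le (inf_le_inf_left _ le_sup_left) (inf_le_inf_left _ le_sup_right)

theorem idem_distrib {B ι : Type*} [Ring B] (n : ℕ) (hJn : Ring.jacobson B ^ n = ⊥) (e : B)
    (hee : e * e = e) (hne : e ∉ Ring.jacobson B)
    (he : ∀ r, r * e ∉ Ring.jacobson B → ∃ s, s * (r * e) - e ∈ Ring.jacobson B)
    (N : ι → Ideal (LaurentSeries B)) (hN : ∀ i, IsDistribModule (LaurentSeries B) (N i))
    (s : Finset ι) (x : ι → LaurentSeries B) (hx : ∀ i, x i ∈ N i) (hs : ∑ i ∈ s, x i = 1) :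
    IsDistribModule B (Ideal.span {e}) := by
  let J := Ring.jacobson B
  have hJr : ∀ a ∈ J, ∀ r, a * r ∈ J := fun a ha r => Ideal.mul_mem_right r _ ha
  let E : LaurentSeries B := HahnSeries.single (0:ℤ) e
  have hEE : E * E = E := by simp [E, hee]
  have hcl : ∀ (f : LaurentSeries B) t, (E * f).coeff t = e * f.coeff t := fun f t => by
    simp [E, HahnSeries.coeff_single_mul]
  have hcr : ∀ (f : LaurentSeries B) t, (f * E).coeff t = f.coeff t * e := fun f t => by
    simp [E, HahnSeries.coeff_mul_single]
  have hj : ∃ j, E * x j * E ∉ lau J := by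
    by_contra hcon
    push Not at hcon
    have h1 : E ∈ lau J := by
      have h2 : ∑ i ∈ s, E * x i * E = E := by
        rw [← Finset.sum_mul, ← Finset.mul_sum, hs, mul_one, hEE]
      rw [← h2]
      exact (lau J).sum_mem fun i _ => hcon i
    exact hne (lau_C_mem.1 h1)
  obtain ⟨j, hj⟩ := hj
  obtain ⟨t, ht, htmin⟩ := exists_min_notin J _ hj
  set u := E * x j * E with hu
  have hue : u.coeff t * e = u.coeff t := by rw [hu, hcr, mul_assoc, hee]
  have heu : e * u.coeff t = u.coeff t := by
    rw [hu, mul_assoc, hcl, ← mul_assoc, hee]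
  -- Schur's lemma modulo `J`
  have hb : ∃ b, u.coeff t * b - e ∈ J := by
    obtain ⟨c, hc⟩ := he (u.coeff t) (by rw [hue]; exact ht)
    rw [hue] at hc
    have hc' : (e * c * e) * u.coeff t - e ∈ J := by
      have := J.mul_mem_left e hc
      rw [mul_sub, hee] at this
      rwa [mul_assoc, heu, mul_assoc]
    have hcJ : e * c * e ∉ J := fun h => by
      apply hne
      have := J.sub_mem (hJr _ h (u.coeff t)) hc'
      simpa using this
    obtain ⟨d, hd⟩ := he (e * c) hcJ
    refine ⟨e * c * e, ?_⟩
    set c' := e * c * e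
    have h1 : d * (c' * u.coeff t - e) ∈ J := J.mul_mem_left d hc'
    have h2 : (d * c' - e) * u.coeff t ∈ J := hJr _ hd _
    have h3 : u.coeff t - d * e ∈ J := by
      have := J.sub_mem h1 h2
      rw [mul_sub, sub_mul, heu, ← mul_assoc] at this
      have e1 : u.coeff t - d * e =
        d * c' * u.coeff t - d * e - (d * c' * u.coeff t - u.coeff t) := by abel
      rw [e1]; exact this
    have h4 := J.add_mem (hJr _ h3 c') hd
    have e2 : e * c' = c' := by simp only [c']; rw [← mul_assoc, ← mul_assoc, hee]
    rw [sub_mul, mul_assoc, e2] at h4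
    simpa using h4
  obtain ⟨b, hb⟩ := hb
  set F := u * HahnSeries.single (-t) b + (1 - E) with hF
  have hFu : IsUnit F := by
    have hco : ∀ i, (u * HahnSeries.single (-t) b).coeff i = u.coeff (i + t) * b := by
      intro i
      rw [HahnSeries.coeff_mul_single, sub_neg_eq_add]
    obtain ⟨p, hp, hv⟩ := exists_part J F (by
      intro i hi
      rw [hF, HahnSeries.coeff_add, HahnSeries.coeff_sub, hco, HahnSeries.coeff_one,
        if_neg hi.ne, HahnSeries.coeff_single_of_ne hi.ne, sub_zero, add_zero]
      exact hJr _ (htmin _ (by omega)) _) (by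
      rw [hF, HahnSeries.coeff_add, HahnSeries.coeff_sub, hco, HahnSeries.coeff_one,
        if_pos rfl, HahnSeries.coeff_single_same, zero_add]
      have : u.coeff t * b + (1 - e) - 1 = u.coeff t * b - e := by abel
      rw [this]; exact hb)
    obtain ⟨v, hv⟩ := hv
    have h1 : F = v * (1 + ↑v⁻¹ * p) := by
      rw [mul_add, mul_one, Units.mul_inv_cancel_left, hv]; abel
    rw [h1]
    refine v.isUnit.mul (IsNilpotent.isUnit_one_add ⟨n, ?_⟩)
    have h2 := lau_pow_mem ((lau J).mul_mem_left (↑v⁻¹ : LaurentSeries B) hp) n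
    ext i
    have h3 := h2 i
    rw [hJn, Submodule.mem_bot] at h3
    exact h3
  have hinj : ∀ r, r * E = r → r * (E * x j) = 0 → r = 0 := by
    intro r h1 h2
    have : r * F = 0 := by
      rw [hF, mul_add, mul_sub, mul_one, h1, sub_self, add_zero, ← mul_assoc, hu, ← mul_assoc,
        h2, zero_mul, zero_mul]
    exact (hFu.mul_left_eq_zero).1 this
  have hspan : ∀ r, r ∈ Ideal.span {E} → r * E = r := by
    intro r hr
    obtain ⟨a, rfl⟩ := Ideal.mem_span_singleton'.1 hr
    rw [mul_assoc, hEE]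
  have hD : IsDistribModule (LaurentSeries B) (Ideal.span {E}) := by
    refine distrib_of_corr (hN j) (LinearMap.codRestrict (N j)
      (LinearMap.toSpanSingleton _ _ (E * x j) ∘ₗ (Ideal.span {E}).subtype) ?_) LinearMap.id
      Function.surjective_id ?_
    · intro c
      exact (N j).mul_mem_left _ ((N j).mul_mem_left _ (hx j))
    · rintro ⟨r, hr⟩ h
      have h2 : r * (E * x j) = 0 := congrArg Subtype.val h
      have := hinj r (hspan r hr) h2
      subst this
      rfl
  rw [distrib_sub_iff] at hD ⊢
  have hlau : ∀ X : Ideal B, X ≤ Ideal.span {e} → lau X ≤ Ideal.span {E} := by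
    intro X hX f hf
    rw [Ideal.mem_span_singleton']
    refine ⟨f, ?_⟩
    ext i
    rw [hcr]
    obtain ⟨a, ha⟩ := Ideal.mem_span_singleton'.1 (hX (hf i))
    rw [← ha, mul_assoc, hee]
  intro X Y Z hX hY hZ
  have := hD _ _ _ (hlau X hX) (hlau Y hY) (hlau Z hZ)
  rw [← lau_sup, ← lau_inf, ← lau_inf, ← lau_inf, ← lau_sup] at this
  exact lau_le_iff.1 this

/-- The left-handed version of the theorem. -/
theorem left_main {B S : Type*} {ι : Type} [Ring B] [Ring S] [IsArtinianRing S]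
    (π : LaurentSeries B →+* S)
    (hπ : Function.Surjective π) (hker : ∀ j ∈ RingHom.ker π, IsUnit (1 + j))
    (N : ι → Ideal (LaurentSeries B)) (hN : ∀ i, IsDistribModule (LaurentSeries B) (N i))
    (hsup : iSup N = ⊤) :
    IsArtinianRing B ∧ ∃ (κ : Type) (M : κ → Ideal B), iSupIndep M ∧ iSup M = ⊤ ∧
      ∀ i, IsDistribModule B (M i) := by
  classical
  have hss := artinian_quot π hπ hker
  have hnil := jac_nil π hπ hker
  obtain ⟨κ, hκ, e, hce, hne, he⟩ := exists_idem_lift B hnil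
  have h1 : (1 : LaurentSeries B) ∈ iSup N := by rw [hsup]; trivial
  obtain ⟨x, hx, hx1⟩ := (Submodule.mem_iSup_iff_exists_finsupp N 1).1 h1
  have hs : x.support.sup N = ⊤ := by
    rw [Ideal.eq_top_iff_one, ← hx1]
    exact Submodule.sum_mem _ fun i hi => (Finset.le_sup (f := N) hi) (hx i)
  have hno := noeth_of_bound e hce.complete hne he N hN x.support hs
  obtain ⟨n, hn⟩ := levitzki hnil
  have hsp : IsSemiprimaryRing B := ⟨hss, ⟨n, hn⟩⟩
  refine ⟨(IsSemiprimaryRing.isNoetherian_iff_isArtinian).1 hno, κ,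
    fun i => Ideal.span {e i}, ?_, ?_, ?_⟩
  · rw [iSupIndep_def]
    intro i
    rw [Submodule.disjoint_def]
    intro r hr hr2
    obtain ⟨a, rfl⟩ := Ideal.mem_span_singleton'.1 hr
    have : (⨆ j, ⨆ (_ : j ≠ i), Ideal.span {e j}) ≤
        LinearMap.ker (LinearMap.toSpanSingleton B B (e i)) := by
      refine iSup_le fun j => iSup_le fun hji => ?_
      rw [Ideal.span_singleton_le_iff_mem]
      exact hce.ortho hji
    have h2 : a * e i * e i = 0 := this hr2
    rw [mul_assoc, (hce.idem i).eq] at h2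
    exact h2
  · rw [Ideal.eq_top_iff_one, ← hce.complete]
    exact Submodule.sum_mem _ fun i _ =>
      Submodule.mem_iSup_of_mem i (Ideal.mem_span_singleton_self (e i))
  · intro i
    exact idem_distrib n hn (e i) (hce.idem i).eq (hne i) (he i) N hN x.support x hx hx1

open MulOpposite in
/-- `Aᵐᵒᵖ((x))` is the opposite ring of `A((x))`. -/
noncomputable def lauOp (A : Type*) [Ring A] :
    LaurentSeries Aᵐᵒᵖ ≃+* (LaurentSeries A)ᵐᵒᵖ where
  toFun f := op ⟨fun i => unop (f.coeff i), f.isPWO_support.mono fun i hi h => hi (by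
    simp [h])⟩
  invFun g := ⟨fun i => op ((unop g).coeff i), (unop g).isPWO_support.mono fun i hi h => hi (by
    simp [h])⟩
  left_inv f := by ext i; rfl
  right_inv g := by
    apply unop_injective
    ext i; rfl
  map_add' f g := by
    apply unop_injective
    ext i; rfl
  map_mul' f g := by
    apply unop_injective
    ext n
    change unop ((f * g).coeff n) = HahnSeries.coeff (_ * _) n
    rw [HahnSeries.coeff_mul, HahnSeries.coeff_mul, Finset.unop_sum]
    refine Finset.sum_bij' (fun p _ => p.swap) (fun p _ => p.swap) ?_ ?_ ?_ ?_ ?_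
    · rintro ⟨i, j⟩ h
      simp only [Finset.mem_antidiagonal, HahnSeries.mem_support, Prod.swap] at h ⊢
      refine ⟨fun h0 => h.2.1 (unop_injective h0), fun h0 => h.1 (unop_injective h0), ?_⟩
      rw [add_comm]; exact h.2.2
    · rintro ⟨i, j⟩ h
      simp only [Finset.mem_antidiagonal, HahnSeries.mem_support, Prod.swap] at h ⊢
      refine ⟨fun h0 => h.2.1 ?_, fun h0 => h.1 ?_, ?_⟩
      · change unop (f.coeff j) = 0
        rw [h0]; rfl
      · change unop (g.coeff i) = 0
        rw [h0]; rfl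
      rw [add_comm]; exact h.2.2
    · intros; rfl
    · intros; rfl
    · intros; rfl

theorem distrib_orderIso {R M R' M' : Type*} [Ring R] [AddCommGroup M] [Module R M]
    [Ring R'] [AddCommGroup M'] [Module R' M'] (o : Submodule R M ≃o Submodule R' M')
    (N : Submodule R M) (hN : IsDistribModule R N) : IsDistribModule R' (o N) := by
  rw [distrib_sub_iff] at hN ⊢
  intro X Y Z hX hY hZ
  have := hN (o.symm X) (o.symm Y) (o.symm Z) (o.symm_apply_le.2 hX) (o.symm_apply_le.2 hY)
    (o.symm_apply_le.2 hZ)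
  rw [← o.symm.map_sup, ← o.symm.map_inf, ← o.symm.map_inf, ← o.symm.map_inf,
    ← o.symm.map_sup] at this
  exact o.symm.le_iff_le.1 this

open MulOpposite in
/-- Right ideals correspond to left ideals of the opposite ring. -/
def rightIso {R R' : Type*} [Ring R] [Ring R'] (Θ : R' ≃+* Rᵐᵒᵖ) :
    Submodule Rᵐᵒᵖ R ≃o Ideal R' where
  toFun N :=
    { carrier := {f | unop (Θ f) ∈ N}
      zero_mem' := by simp
      add_mem' := fun {a b} ha hb => by
        simp only [Set.mem_ofPred_eq, map_add, unop_add] at ha hb ⊢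
        exact N.add_mem ha hb
      smul_mem' := fun c f hf => by
        have : unop (Θ (c • f)) = Θ c • unop (Θ f) := by
          rw [smul_eq_mul, map_mul]; rfl
        simp only [Set.mem_ofPred_eq] at hf ⊢
        rw [this]
        exact N.smul_mem _ hf }
  invFun I :=
    { carrier := {g | Θ.symm (op g) ∈ I}
      zero_mem' := by simp
      add_mem' := fun {a b} ha hb => by
        simp only [Set.mem_ofPred_eq, map_add, op_add] at ha hb ⊢
        exact I.add_mem ha hb
      smul_mem' := fun c f hf => by
        have : Θ.symm (op (c • f)) = Θ.symm c * Θ.symm (op f) := by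
          rw [← map_mul]; rfl
        simp only [Set.mem_ofPred_eq] at hf ⊢
        rw [this]
        exact I.mul_mem_left _ hf }
  left_inv N := by
    ext f
    change unop (Θ (Θ.symm (op f))) ∈ N ↔ f ∈ N
    rw [RingEquiv.apply_symm_apply, unop_op]
  right_inv I := by ext f; simp
  map_rel_iff' {N N'} := by
    constructor
    · intro h r hr
      have h1 : unop (Θ (Θ.symm (op r))) = r := by rw [RingEquiv.apply_symm_apply, unop_op]
      have h2 : unop (Θ (Θ.symm (op r))) ∈ N' := @h (Θ.symm (op r)) (by
        change unop (Θ (Θ.symm (op r))) ∈ N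
        rw [h1]; exact hr)
      rwa [h1] at h2
    · intro h f hf
      exact h hf

theorem semisimple_quot {R : Type*} [Ring R] (I : Ideal R) [I.IsTwoSided]
    (h : IsSemisimpleModule R (R ⧸ I)) : IsSemisimpleRing (R ⧸ I) := by
  have : RingHomSurjective (Ideal.Quotient.mk I) := ⟨Ideal.Quotient.mk_surjective⟩
  let l : (R ⧸ I) →ₛₗ[Ideal.Quotient.mk I] (R ⧸ I) :=
    { toFun := id
      map_add' := fun _ _ => rfl
      map_smul' := fun r m => by
        obtain ⟨m, rfl⟩ := Ideal.Quotient.mk_surjective m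
        rfl }
  exact (l.isSemisimpleModule_iff_of_bijective Function.bijective_id).1 h

theorem artinian_op (S : Type*) [Ring S] (h : IsSemisimpleRing S) : IsArtinianRing Sᵐᵒᵖ := by
  have h2 : IsSemisimpleRing Sᵐᵒᵖ := inferInstance
  exact inferInstance


/-- If the Laurent series ring `A((x))` is a right semidistributive semilocal ring,
then `A` is a right semidistributive right Artinian ring. -/
theorem stmt0 (A : Type*) [Ring A]
    (hsd : IsRightSemidistributiveRing (LaurentSeries A))
    (hsl : IsSemilocalRing (LaurentSeries A)) :
    IsRightSemidistributiveRing A ∧ IsArtinian Aᵐᵒᵖ A := by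
  obtain ⟨ι, N, -, hsup, hN⟩ := hsd
  rw [IsSemilocalRing, Ideal.jacobson_bot] at hsl
  have hss : IsSemisimpleRing (LaurentSeries A ⧸ Ring.jacobson (LaurentSeries A)) :=
    semisimple_quot _ hsl
  have hart0 := artinian_op _ hss
  let q := Ideal.Quotient.mk (Ring.jacobson (LaurentSeries A))
  let π : LaurentSeries Aᵐᵒᵖ →+* (LaurentSeries A ⧸ Ring.jacobson (LaurentSeries A))ᵐᵒᵖ :=
    (RingHom.op q).comp (lauOp A).toRingHom
  have hπ : Function.Surjective π := by
    intro y
    obtain ⟨z, hz⟩ := Ideal.Quotient.mk_surjective y.unop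
    refine ⟨(lauOp A).symm (MulOpposite.op z), ?_⟩
    change MulOpposite.op (q (MulOpposite.unop
      ((lauOp A) ((lauOp A).symm (MulOpposite.op z))))) = y
    rw [RingEquiv.apply_symm_apply]
    exact MulOpposite.unop_injective hz
  have hker : ∀ j ∈ RingHom.ker π, IsUnit (1 + j) := by
    intro j hj
    have h1 : q (MulOpposite.unop (lauOp A j)) = 0 := congrArg MulOpposite.unop hj
    have h2 := isUnit_one_add_jac _ (Ideal.Quotient.eq_zero_iff_mem.1 h1)
    have h3 : IsUnit (lauOp A (1 + j)) := by
      rw [map_add, map_one]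
      exact h2.op
    exact (MulEquiv.isUnit_map (lauOp A)).1 h3
  let o := rightIso (lauOp A)
  obtain ⟨hart, κ, M, hind, htop, hM⟩ := left_main π hπ hker (fun i => o (N i))
    (fun i => distrib_orderIso o (N i) (hN i)) (by rw [← o.map_iSup, hsup, o.map_top])
  let o2 : Submodule Aᵐᵒᵖ A ≃o Ideal Aᵐᵒᵖ := rightIso (RingEquiv.refl Aᵐᵒᵖ)
  refine ⟨⟨κ, fun i => o2.symm (M i), hind.map_orderIso o2.symm, ?_, fun i =>
    distrib_orderIso o2.symm (M i) (hM i)⟩, ?_⟩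
  · rw [← o2.symm.map_iSup, htop, o2.symm.map_top]
  · rw [isArtinianRing_iff] at hart
    exact ⟨(o2.toOrderEmbedding.wellFoundedLT).wf⟩
end

section
/- Let A be a right semidistributive right Artinian ring. Then the Laurent series ring A((x)) is a right semidistributive right Artinian ring. -/
namespace LaurentSemidistrib

open HahnSeries

variable {A : Type*} [Ring A]

/-- Series all of whose coefficients lie in `U`. -/
def ser (U : Submodule Aᵐᵒᵖ A) : Submodule (LaurentSeries A)ᵐᵒᵖ (LaurentSeries A) where
  carrier := {f | ∀ i, f.coeff i ∈ U}
  add_mem' := fun hf hg i => U.add_mem (hf i) (hg i)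
  zero_mem' := fun i => U.zero_mem
  smul_mem' := by
    intro c f hf i
    change (f * c.unop).coeff i ∈ U
    rw [HahnSeries.coeff_mul]
    refine U.sum_mem fun p _ => ?_
    exact U.smul_mem (MulOpposite.op (c.unop.coeff p.2)) (hf p.1)

theorem mem_ser {U : Submodule Aᵐᵒᵖ A} {f : LaurentSeries A} :
    f ∈ ser U ↔ ∀ i, f.coeff i ∈ U := Iff.rfl

theorem mul_mem_r {U : Submodule Aᵐᵒᵖ A} {u : A} (h : u ∈ U) (a : A) : u * a ∈ U :=
  U.smul_mem (MulOpposite.op a) h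

/-- Elements of `A` which, as constant series, lie in `X`. -/
def cst (X : Submodule (LaurentSeries A)ᵐᵒᵖ (LaurentSeries A)) : Submodule Aᵐᵒᵖ A where
  carrier := {u | (C u : LaurentSeries A) ∈ X}
  add_mem' := fun {a b} ha hb => by
    simp only [Set.mem_ofPred_eq, map_add]
    exact X.add_mem ha hb
  zero_mem' := by simp
  smul_mem' := by
    intro c u hu
    have h := mul_mem_r (U := X) hu (C c.unop)
    rw [← map_mul] at h
    exact h

theorem mem_cst {X : Submodule (LaurentSeries A)ᵐᵒᵖ (LaurentSeries A)} {u : A} :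
    u ∈ cst X ↔ (C u : LaurentSeries A) ∈ X := Iff.rfl

theorem coeff_C_mul (u : A) (f : LaurentSeries A) (i : ℤ) :
    ((C u : LaurentSeries A) * f).coeff i = u * f.coeff i := by
  rw [HahnSeries.C_apply, HahnSeries.coeff_single_zero_mul]

theorem coeff_mul_C (u : A) (f : LaurentSeries A) (i : ℤ) :
    (f * (C u : LaurentSeries A)).coeff i = f.coeff i * u := by
  rw [HahnSeries.C_apply, HahnSeries.coeff_mul_single_zero]

theorem C_mem_ser {U : Submodule Aᵐᵒᵖ A} {u : A} (h : u ∈ U) : (C u : LaurentSeries A) ∈ ser U := by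
  intro i
  rw [HahnSeries.C_apply, HahnSeries.coeff_single]
  split_ifs
  · exact h
  · exact U.zero_mem

theorem cst_ser_le (U : Submodule Aᵐᵒᵖ A) : cst (ser U) ≤ U := by
  intro u hu
  have := hu 0
  rwa [HahnSeries.C_apply, HahnSeries.coeff_single_same] at this

theorem cst_mono {X Y : Submodule (LaurentSeries A)ᵐᵒᵖ (LaurentSeries A)} (h : X ≤ Y) :
    cst X ≤ cst Y := fun _ hu => h hu

theorem ser_mono {U V : Submodule Aᵐᵒᵖ A} (h : U ≤ V) : ser U ≤ ser V :=
  fun _ hf i => h (hf i)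

theorem ser_cst_le [IsNoetherian Aᵐᵒᵖ A]
    (X : Submodule (LaurentSeries A)ᵐᵒᵖ (LaurentSeries A)) : ser (cst X) ≤ X := by
  classical
  intro g hg
  obtain ⟨s, hs⟩ := IsNoetherian.noetherian (cst X)
  have h1 : ∀ u : A, ∃ b : A → A, (u = 0 → b = 0) ∧ (u ∈ cst X → ∑ a ∈ s, a * b a = u) := by
    intro u
    by_cases h0 : u = 0
    · exact ⟨0, fun _ => rfl, fun _ => by simp [h0]⟩
    by_cases hu : u ∈ cst X
    · rw [← hs] at hu
      obtain ⟨b, -, hb⟩ := Submodule.mem_span_finset.1 hu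
      exact ⟨fun a => (b a).unop, fun h => absurd h h0, fun _ => hb⟩
    · exact ⟨0, fun _ => rfl, fun h => absurd h hu⟩
  choose β hβ0 hβ using h1
  let β' : A → ZeroHom A A := fun a => ⟨fun u => β u a, by rw [hβ0 0 rfl]; rfl⟩
  have hg' : g = ∑ a ∈ s, (C a : LaurentSeries A) * g.map (β' a) := by
    ext i
    rw [HahnSeries.coeff_sum]
    simp only [coeff_C_mul]
    exact (hβ _ (hg i)).symm
  rw [hg']
  refine X.sum_mem fun a ha => mul_mem_r ?_ _
  rw [← mem_cst, ← hs]
  exact Submodule.subset_span ha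

theorem exists_rinv (b : LaurentSeries A) (j : ℤ) (h1 : b.coeff j = 1)
    (h0 : ∀ i < j, b.coeff i = 0) : ∃ c, b * c = 1 := by
  rcases subsingleton_or_nontrivial A with hA | hA
  · exact ⟨0, by ext i; exact Subsingleton.elim _ _⟩
  have hj : b.coeff j ≠ 0 := by rw [h1]; exact one_ne_zero
  have hb : b ≠ 0 := by rintro rfl; simp at hj
  have hord : b.order = j := by
    apply le_antisymm (HahnSeries.order_le_of_coeff_ne_zero hj)
    by_contra hlt
    exact hb (HahnSeries.coeff_order_eq_zero.1 (h0 _ (not_le.1 hlt)))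
  have hu := PowerSeries.mul_invOfUnit b.powerSeriesPart 1 (by
    rw [← PowerSeries.coeff_zero_eq_constantCoeff_apply, LaurentSeries.powerSeriesPart_coeff, hord]
    simpa using h1)
  have hb' := LaurentSeries.single_order_mul_powerSeriesPart b
  refine ⟨HahnSeries.ofPowerSeries ℤ A (PowerSeries.invOfUnit b.powerSeriesPart 1) *
    HahnSeries.single (-b.order) 1, ?_⟩
  conv_lhs => enter [1]; rw [← hb']
  rw [mul_assoc, ← mul_assoc (HahnSeries.ofPowerSeries ℤ A _)]
  rw [← map_mul, hu, map_one (HahnSeries.ofPowerSeries ℤ A), one_mul, HahnSeries.single_mul_single]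
  simp

theorem exists_div {V W : Submodule Aᵐᵒᵖ A}
    (hVW : ∀ n ∈ W, n ∉ V → ∀ w ∈ W, ∃ b : A, n * b - w ∈ V)
    {f g : LaurentSeries A} (hf : f ∈ ser W) (hfV : f ∉ ser V) (hg : g ∈ ser W) :
    ∃ h, f * h - g ∈ ser V := by
  classical
  -- the first coefficient outside `V`
  obtain ⟨j, hj, hmin⟩ : ∃ j, f.coeff j ∉ V ∧ ∀ i < j, f.coeff i ∈ V := by
    have hne : {i | f.coeff i ∉ V}.Nonempty := by
      by_contra hcon
      rw [Set.not_nonempty_iff_eq_empty] at hcon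
      apply hfV
      intro i
      by_contra hi
      have : i ∈ ({i | f.coeff i ∉ V} : Set ℤ) := hi
      rw [hcon] at this
      exact this
    have hwf : {i | f.coeff i ∉ V}.IsWF := f.isWF_support.mono (by
      intro i hi h0
      exact hi (by rw [h0]; exact V.zero_mem))
    refine ⟨hwf.min hne, hwf.min_mem hne, fun i hi => ?_⟩
    by_contra hcon
    exact hwf.not_lt_min hne hcon hi
  set n := f.coeff j with hn
  have h1 : ∀ w : A, ∃ b : A, (w ∈ V → b = 0) ∧ (w = n → b = 1) ∧ (w ∈ W → n * b - w ∈ V) := by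
    intro w
    by_cases hwV : w ∈ V
    · exact ⟨0, fun _ => rfl, fun h => absurd (h ▸ hwV) hj, fun _ => by simpa using hwV⟩
    by_cases hwn : w = n
    · exact ⟨1, fun h => absurd h hwV, fun _ => rfl, fun _ => by simp [hwn]⟩
    by_cases hwW : w ∈ W
    · obtain ⟨b, hb⟩ := hVW n (hf j) hj w hwW
      exact ⟨b, fun h => absurd h hwV, fun h => absurd h hwn, fun _ => hb⟩
    · exact ⟨0, fun _ => rfl, fun h => absurd h hwn, fun h => absurd h hwW⟩
  choose β hβ0 hβ1 hβ using h1
  let β' : ZeroHom A A := ⟨β, hβ0 0 V.zero_mem⟩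
  obtain ⟨c, hc⟩ := exists_rinv (f.map β') j (hβ1 _ hn.symm) (fun i hi => hβ0 _ (hmin i hi))
  have hfb : (C n : LaurentSeries A) * f.map β' - f ∈ ser V := by
    intro i
    rw [HahnSeries.coeff_sub, coeff_C_mul]
    exact hβ _ (hf i)
  have hgb : (C n : LaurentSeries A) * g.map β' - g ∈ ser V := by
    intro i
    rw [HahnSeries.coeff_sub, coeff_C_mul]
    exact hβ _ (hg i)
  refine ⟨c * g.map β', ?_⟩
  have h2 := mul_mem_r hfb (c * g.map β')
  have h3 : ((C n : LaurentSeries A) * f.map β' - f) * (c * g.map β')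
      = (C n : LaurentSeries A) * g.map β' - f * (c * g.map β') := by
    rw [sub_mul, mul_assoc, ← mul_assoc (f.map β'), hc, one_mul]
  rw [h3] at h2
  have := (ser V).sub_mem hgb h2
  convert this using 1
  abel

theorem exists_compl {R M : Type*} [Ring R] [IsArtinianRing R] [AddCommGroup M] [Module R M]
    (U V : Submodule R M) (hUV : U ≤ V) (h : ∀ r ∈ Ring.jacobson R, ∀ m : M, r • m ∈ U) :
    ∃ D : Submodule R M, U ≤ D ∧ V ⊓ D ≤ U ∧ V ⊔ D = ⊤ := by
  have ht : Module.IsTorsionBySet R (M ⧸ U) (Ring.jacobson R) := by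
    rw [Module.isTorsionBySet_quotient_iff]
    exact fun m r hr => h r hr m
  have hs : IsSemisimpleModule R (M ⧸ U) := by
    let _ := ht.module
    exact (ht.semilinearMap.isSemisimpleModule_iff_of_bijective Function.bijective_id).2
      inferInstance
  obtain ⟨D, hD⟩ := exists_isCompl (V.map U.mkQ)
  refine ⟨D.comap U.mkQ, ?_, ?_, ?_⟩
  · intro u hu
    rw [Submodule.mem_comap, Submodule.mkQ_apply, (Submodule.Quotient.mk_eq_zero U).2 hu]
    exact D.zero_mem
  · rintro u ⟨hu, hu'⟩
    have : U.mkQ u ∈ V.map U.mkQ ⊓ D := ⟨Submodule.mem_map_of_mem hu, hu'⟩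
    rw [hD.inf_eq_bot] at this
    simpa using this
  · rw [eq_top_iff]
    intro m _
    have : U.mkQ m ∈ V.map U.mkQ ⊔ D := by rw [hD.sup_eq_top]; trivial
    obtain ⟨y, ⟨v, hv, rfl⟩, z, hz, hyz⟩ := Submodule.mem_sup.1 this
    refine Submodule.mem_sup.2 ⟨v, hv, m - v, ?_, by abel⟩
    rw [Submodule.mem_comap, map_sub, ← hyz]
    simpa using hz

theorem distrib_elem {N : Submodule Aᵐᵒᵖ A} (hN : IsDistribModule Aᵐᵒᵖ N) {m n : A} (hm : m ∈ N)
    (hn : n ∈ N) : ∃ a p q : A, m * a = n * p ∧ n * (1 - a) = m * q := by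
  let m' : N := ⟨m, hm⟩
  let n' : N := ⟨n, hn⟩
  have h := hN (Submodule.span _ {m'}) (Submodule.span _ {n'}) (Submodule.span _ {m' - n'})
  have hmem : m' ∈ Submodule.span Aᵐᵒᵖ {m'} ⊓
      (Submodule.span Aᵐᵒᵖ {n'} ⊔ Submodule.span Aᵐᵒᵖ {m' - n'}) := by
    refine ⟨Submodule.mem_span_singleton_self _, Submodule.mem_sup.2 ⟨n',
      Submodule.mem_span_singleton_self _, m' - n', Submodule.mem_span_singleton_self _, by abel⟩⟩
  rw [h] at hmem
  obtain ⟨p, ⟨-, hp2⟩, q, ⟨hq1, hq2⟩, hpq⟩ := Submodule.mem_sup.1 hmem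
  obtain ⟨p2, rfl⟩ := Submodule.mem_span_singleton.1 hp2
  obtain ⟨q1, rfl⟩ := Submodule.mem_span_singleton.1 hq1
  obtain ⟨b, hb⟩ := Submodule.mem_span_singleton.1 hq2
  have e1 : n * p2.unop + m * q1.unop = m := congrArg Subtype.val hpq
  have e2 : (m - n) * b.unop = m * q1.unop := congrArg Subtype.val hb
  refine ⟨1 - b.unop, p2.unop - b.unop, b.unop - q1.unop, ?_, ?_⟩
  · have : m * (1 - b.unop) = m - (m - n) * b.unop - n * b.unop := by noncomm_ring
    rw [this, e2]
    nth_rw 1 [← e1]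
    noncomm_ring
  · have : n * (1 - (1 - b.unop)) = m * b.unop - (m - n) * b.unop := by noncomm_ring
    rw [this, e2]
    noncomm_ring

theorem key [IsArtinianRing Aᵐᵒᵖ] [IsNoetherian Aᵐᵒᵖ A] [IsArtinian Aᵐᵒᵖ A]
    {N : Submodule Aᵐᵒᵖ A}
    (hN : IsDistribModule Aᵐᵒᵖ N) (X : Submodule (LaurentSeries A)ᵐᵒᵖ (LaurentSeries A))
    (hX : X ≤ ser N) : X ≤ ser (cst X) := by
  by_contra hcon
  set U := cst X with hU
  have hUX : ser U ≤ X := ser_cst_le X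
  have hUN : U ≤ N := (cst_mono hX).trans (cst_ser_le N)
  obtain ⟨W, ⟨hUW, hWN, hW⟩, hmin⟩ := (wellFounded_lt (α := Submodule Aᵐᵒᵖ A)).has_min
    {W | U ≤ W ∧ W ≤ N ∧ ¬ (X ⊓ ser W ≤ ser U)}
    ⟨N, hUN, le_rfl, fun h => hcon fun f hf => h ⟨hf, hX hf⟩⟩
  have hmin' : ∀ V, U ≤ V → V < W → ∀ f ∈ X, f ∈ ser V → f ∈ ser U := by
    intro V hUV hVW f hf hfV
    by_contra hfU
    exact hmin V ⟨hUV, hVW.le.trans hWN, fun h => hfU (h ⟨hf, hfV⟩)⟩ hVW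
  obtain ⟨f, ⟨hfX, hfW⟩, hfU⟩ := SetLike.not_le_iff_exists.1 hW
  have hne : U ≠ W := by
    rintro h
    exact hfU (h ▸ hfW)
  -- a coatom of `W` above `U`
  obtain ⟨P, hP, hUP⟩ := (eq_top_or_exists_le_coatom (U.comap W.subtype)).resolve_left (by
    intro h
    apply hne
    apply le_antisymm hUW
    intro w hw
    have : (⟨w, hw⟩ : W) ∈ U.comap W.subtype := by rw [h]; trivial
    exact this)
  set V := P.map W.subtype with hV
  have hVle : V ≤ W := Submodule.map_subtype_le W P
  have memV : ∀ w (hw : w ∈ W), w ∈ V ↔ (⟨w, hw⟩ : W) ∈ P := by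
    intro w hw
    constructor
    · rintro ⟨p, hp, rfl⟩
      exact hp
    · intro h
      exact ⟨_, h, rfl⟩
  have hVlt : V < W := by
    refine lt_of_le_of_ne hVle fun h => hP.1 ?_
    rw [eq_top_iff]
    rintro ⟨w, hw⟩ -
    rw [← memV w hw, h]
    exact hw
  have hUV : U ≤ V := fun u hu => (memV u (hUW hu)).2 (hUP (by exact hu))
  have hVW : ∀ n ∈ W, n ∉ V → ∀ w ∈ W, ∃ b : A, n * b - w ∈ V := by
    intro n hn hnV w hw
    have hlt : P < P ⊔ Submodule.span _ {(⟨n, hn⟩ : W)} := by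
      rw [left_lt_sup, Submodule.span_singleton_le_iff_mem, ← memV]
      exact hnV
    have htop := hP.2 _ hlt
    have : (⟨w, hw⟩ : W) ∈ P ⊔ Submodule.span _ {(⟨n, hn⟩ : W)} := by rw [htop]; trivial
    obtain ⟨p, hp, q, hq, hpq⟩ := Submodule.mem_sup.1 this
    obtain ⟨b, rfl⟩ := Submodule.mem_span_singleton.1 hq
    refine ⟨b.unop, ?_⟩
    have e : (p : A) + n * b.unop = w := congrArg Subtype.val hpq
    have : n * b.unop - w = -(p : A) := by rw [← e]; abel
    rw [this]
    exact V.neg_mem ⟨p, hp, rfl⟩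
  have hfV : f ∉ ser V := fun h => hfU (hmin' V hUV hVlt f hfX h)
  -- the radical sends `W` into `V`
  have hJV : ∀ r ∈ Ring.jacobson Aᵐᵒᵖ, ∀ w ∈ W, r • w ∈ V := by
    intro r hr w hw
    have h1 : r • (⟨w, hw⟩ : W) ∈ Ring.jacobson Aᵐᵒᵖ • (⊤ : Submodule Aᵐᵒᵖ W) :=
      Submodule.smul_mem_smul hr trivial
    have h2 := Ring.jacobson_smul_top_le (R := Aᵐᵒᵖ) (M := W) h1
    have h3 : Module.jacobson Aᵐᵒᵖ W ≤ P := sInf_le hP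
    exact ⟨_, h3 h2, rfl⟩
  -- the radical sends `W` into `U`
  have hJU : ∀ r ∈ Ring.jacobson Aᵐᵒᵖ, ∀ w ∈ W, r • w ∈ U := by
    let T : Submodule Aᵐᵒᵖ A :=
      { carrier := {w | w ∈ W ∧ ∀ r ∈ Ring.jacobson Aᵐᵒᵖ, r • w ∈ U}
        add_mem' := fun ha hb => ⟨W.add_mem ha.1 hb.1, fun r hr => by
          rw [smul_add]; exact U.add_mem (ha.2 r hr) (hb.2 r hr)⟩
        zero_mem' := ⟨W.zero_mem, fun r _ => by rw [smul_zero]; exact U.zero_mem⟩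
        smul_mem' := fun c w hw => ⟨W.smul_mem c hw.1, fun r hr => by
          rw [← mul_smul]
          exact hw.2 _ (Ideal.mul_mem_right c _ hr)⟩ }
    have hTW : T ≤ W := fun w hw => hw.1
    have hfT : f ∈ ser T := by
      intro i
      refine ⟨hfW i, fun r hr => ?_⟩
      have h1 : f * C r.unop ∈ ser U := hmin' V hUV hVlt _ (mul_mem_r hfX _) (fun k => by
        rw [coeff_mul_C]
        exact hJV r hr _ (hfW k))
      have h2 := h1 i
      rw [coeff_mul_C] at h2
      exact h2
    have hTeq : T = W := by
      by_contra h
      exact hfU (hmin' T (fun u hu => ⟨hUW hu, fun r _ => U.smul_mem r hu⟩)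
        (lt_of_le_of_ne hTW h) f hfX hfT)
    intro r hr w hw
    rw [← hTeq] at hw
    exact hw.2 r hr
  obtain ⟨D', hUD', hD1, hD2⟩ := exists_compl (U.comap W.subtype) P hUP
    (fun r hr m => hJU r hr m m.2)
  set D := D'.map W.subtype with hD
  have memD : ∀ w (hw : w ∈ W), w ∈ D ↔ (⟨w, hw⟩ : W) ∈ D' := by
    intro w hw
    constructor
    · rintro ⟨p, hp, rfl⟩
      exact hp
    · intro h
      exact ⟨_, h, rfl⟩
  have hDW : D ≤ W := Submodule.map_subtype_le W D'
  have hUD : U ≤ D := fun u hu => (memD u (hUW hu)).2 (hUD' (by exact hu))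
  have hVD : ∀ w ∈ W, ∃ v ∈ V, ∃ d ∈ D, v + d = w := by
    intro w hw
    have : (⟨w, hw⟩ : W) ∈ P ⊔ D' := by rw [hD2]; trivial
    obtain ⟨v, hv, d, hd, hvd⟩ := Submodule.mem_sup.1 this
    exact ⟨v, ⟨v, hv, rfl⟩, d, ⟨d, hd, rfl⟩, congrArg Subtype.val hvd⟩
  by_cases hDeq : D = W
  · -- `V = U`, so `W / U` is simple
    have hVU : V ≤ U := by
      intro v hv
      have hvW := hVle hv
      have h1 : (⟨v, hvW⟩ : W) ∈ D' := (memD v hvW).1 (by rw [hDeq]; exact hvW)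
      exact hD1 ⟨(memV v hvW).1 hv, h1⟩
    apply hne
    apply le_antisymm hUW
    intro w hw
    obtain ⟨h, hh⟩ := exists_div hVW hfW hfV (C_mem_ser hw)
    have h1 : f * h - C w ∈ X := hUX (ser_mono hVU hh)
    have h2 := X.sub_mem (mul_mem_r hfX h) h1
    rw [sub_sub_cancel] at h2
    exact h2
  · have hDlt : D < W := lt_of_le_of_ne hDW hDeq
    obtain ⟨w, hw, hwV⟩ := SetLike.exists_of_lt hVlt
    obtain ⟨v, hv, n, hnD, hvn⟩ := hVD w hw
    have hnV : n ∉ V := fun h => hwV (hvn ▸ V.add_mem hv h)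
    obtain ⟨h, hh⟩ := exists_div hVW hfW hfV (C_mem_ser (hDW hnD))
    set g := f * h with hg
    have hgX : g ∈ X := mul_mem_r hfX h
    have hgW : g ∈ ser W := mul_mem_r hfW h
    have hgD : g ∉ ser D := by
      intro hgD
      have h1 := ser_mono hUV (hmin' D hUD hDlt g hgX hgD)
      have h2 := (ser V).sub_mem h1 hh
      rw [sub_sub_cancel] at h2
      exact hnV (cst_ser_le V h2)
    obtain ⟨k, hk⟩ : ∃ k, g.coeff k ∉ D := by
      by_contra hall
      push Not at hall
      exact hgD hall
    obtain ⟨m, hmV, d, hdD, hmd⟩ := hVD _ (hgW k)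
    have hmD : m ∉ D := fun h => hk (hmd ▸ D.add_mem h hdD)
    obtain ⟨a, p, q, e1, e2⟩ := distrib_elem hN (hWN (hVle hmV)) (hWN (hDW hnD))
    have h1 : g * C (1 - a) ∈ ser V := by
      have h2 := mul_mem_r hh (C (1 - a))
      rw [sub_mul, ← map_mul, e2] at h2
      have h3 := (ser V).add_mem h2 (C_mem_ser (mul_mem_r hmV q))
      rwa [sub_add_cancel] at h3
    have h2 := hUD (hmin' V hUV hVlt _ (mul_mem_r hgX _) h1 k)
    rw [coeff_mul_C, ← hmd] at h2
    have h3 : m = (m + d) * (1 - a) + m * a - d * (1 - a) := by noncomm_ring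
    apply hmD
    rw [h3, e1]
    exact D.sub_mem (D.add_mem h2 (mul_mem_r hnD p)) (mul_mem_r hdD _)

theorem distrib_ser [IsArtinianRing Aᵐᵒᵖ] [IsNoetherian Aᵐᵒᵖ A] [IsArtinian Aᵐᵒᵖ A]
    {N : Submodule Aᵐᵒᵖ A} (hN : IsDistribModule Aᵐᵒᵖ N) :
    IsDistribModule (LaurentSeries A)ᵐᵒᵖ (ser N) := by
  intro X Y Z
  apply le_antisymm _ (le_inf (sup_le inf_le_left inf_le_left)
    (sup_le_sup inf_le_right inf_le_right))
  let ψ := fun X : Submodule (LaurentSeries A)ᵐᵒᵖ (ser N) => X.map (ser N).subtype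
  have hψ : ∀ X, ψ X ≤ ser (cst (ψ X)) := fun X => key hN _ (Submodule.map_subtype_le _ _)
  have hc : ∀ X, cst (ψ X) ≤ N := fun X =>
    (cst_mono (Submodule.map_subtype_le _ _)).trans (cst_ser_le N)
  have hdist : cst (ψ X) ⊓ (cst (ψ Y) ⊔ cst (ψ Z)) ≤
      cst (ψ X) ⊓ cst (ψ Y) ⊔ cst (ψ X) ⊓ cst (ψ Z) := by
    have h := hN ((cst (ψ X)).comap N.subtype) ((cst (ψ Y)).comap N.subtype)
      ((cst (ψ Z)).comap N.subtype)
    have h' := congrArg (Submodule.map N.subtype) h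
    rw [Submodule.map_inf _ N.injective_subtype, Submodule.map_sup, Submodule.map_sup,
      Submodule.map_inf _ N.injective_subtype, Submodule.map_inf _ N.injective_subtype] at h'
    simp only [Submodule.map_comap_subtype, inf_eq_right.2 (hc _)] at h'
    exact h'.le
  have hcst : cst (ψ X) ⊓ cst (ψ Y) ⊔ cst (ψ X) ⊓ cst (ψ Z) ≤ cst (ψ (X ⊓ Y ⊔ X ⊓ Z)) := by
    have aux : ∀ P Q : Submodule (LaurentSeries A)ᵐᵒᵖ (ser N),
        cst (ψ P) ⊓ cst (ψ Q) ≤ cst (ψ (P ⊓ Q)) := by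
      intro P Q u hu
      rw [mem_cst]
      simp only [ψ]
      rw [Submodule.map_inf _ (ser N).injective_subtype]
      exact hu
    refine sup_le ((aux X Y).trans (cst_mono (Submodule.map_mono le_sup_left)))
      ((aux X Z).trans (cst_mono (Submodule.map_mono le_sup_right)))
  rw [← Submodule.map_le_map_iff_of_injective (ser N).injective_subtype]
  refine le_trans ?_ (ser_cst_le _)
  rintro _ ⟨f, ⟨hfX, hf⟩, rfl⟩
  obtain ⟨y, hy, z, hz, rfl⟩ := Submodule.mem_sup.1 hf
  intro i
  refine hcst (hdist ⟨hψ X ⟨_, hfX, rfl⟩ i, ?_⟩)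
  exact Submodule.add_mem_sup (hψ Y ⟨_, hy, rfl⟩ i) (hψ Z ⟨_, hz, rfl⟩ i)

theorem artinian_ser [IsArtinianRing Aᵐᵒᵖ] [IsNoetherian Aᵐᵒᵖ A] [IsArtinian Aᵐᵒᵖ A]
    {N : Submodule Aᵐᵒᵖ A} (hN : IsDistribModule Aᵐᵒᵖ N) :
    IsArtinian (LaurentSeries A)ᵐᵒᵖ (ser N) := by
  let φ : Submodule (LaurentSeries A)ᵐᵒᵖ (ser N) → Submodule Aᵐᵒᵖ A :=
    fun X => cst (X.map (ser N).subtype)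
  have hφ : StrictMono φ := by
    intro X Y hXY
    refine lt_of_le_not_ge (cst_mono (Submodule.map_mono hXY.le)) fun h => hXY.not_ge ?_
    rw [← Submodule.map_le_map_iff_of_injective (ser N).injective_subtype]
    exact (key hN _ (Submodule.map_subtype_le _ _)).trans ((ser_mono h).trans (ser_cst_le _))
  exact hφ.wellFoundedLT

end LaurentSemidistrib

open LaurentSemidistrib

/-- If `A` is a right semidistributive right Artinian ring, then the Laurent series
ring `A((x))` is a right semidistributive right Artinian ring. -/
theorem stmt1 (A : Type*) [Ring A]
    (hsd : IsRightSemidistributiveRing A)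
    (hart : IsArtinian Aᵐᵒᵖ A) :
    IsRightSemidistributiveRing (LaurentSeries A) ∧
      IsArtinian (LaurentSeries A)ᵐᵒᵖ (LaurentSeries A) := by
  have e : A ≃ₗ[Aᵐᵒᵖ] Aᵐᵒᵖ :=
    { MulOpposite.opAddEquiv with map_smul' := fun _ _ => rfl }
  haveI : IsArtinianRing Aᵐᵒᵖ := e.isArtinian_iff.1 hart
  haveI : IsNoetherian Aᵐᵒᵖ A := e.isNoetherian_iff.2 inferInstance
  obtain ⟨ι, N, hind, hsup, hN⟩ := hsd
  have h1 : (1 : A) ∈ iSup N := by rw [hsup]; trivial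
  obtain ⟨s, hs⟩ := Submodule.mem_iSup_iff_exists_finset.1 h1
  have htop : (⨆ i : s, ser (N i)) = ⊤ := by
    rw [eq_top_iff]
    intro g _
    have h2 : (⨆ i ∈ s, N i) ≤ cst (⨆ i : s, ser (N i)) := by
      refine iSup₂_le fun i hi u hu => ?_
      exact le_iSup (fun i : s => ser (N i)) ⟨i, hi⟩ (C_mem_ser hu)
    have h3 := mul_mem_r (mem_cst.1 (h2 hs)) g
    rwa [map_one, one_mul] at h3
  refine ⟨⟨ι, fun i => ser (N i), ?_, ?_, fun i => distrib_ser (hN i)⟩, ?_⟩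
  · intro i
    rw [disjoint_iff_inf_le]
    rintro f ⟨hf1, hf2⟩
    have hle : (⨆ (j) (_ : j ≠ i), ser (N j)) ≤ ser (⨆ (j) (_ : j ≠ i), N j) :=
      iSup₂_le fun j hj => ser_mono (le_iSup₂_of_le j hj le_rfl)
    rw [Submodule.mem_bot]
    ext k
    have := (disjoint_iff_inf_le.1 (hind i)) ⟨hf1 k, hle hf2 k⟩
    simpa using this
  · rw [eq_top_iff, ← htop]
    exact iSup_le fun i => le_iSup (fun i => ser (N i)) i
  · haveI : ∀ i : s, IsArtinian (LaurentSeries A)ᵐᵒᵖ (ser (N i)) := fun i => artinian_ser (hN i)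
    haveI : IsArtinian (LaurentSeries A)ᵐᵒᵖ
        (⊤ : Submodule (LaurentSeries A)ᵐᵒᵖ (LaurentSeries A)) := by
      rw [← htop]
      infer_instance
    exact Submodule.topEquiv.isArtinian_iff.1 this
end

section
/- Let A be a ring such that the Laurent series ring A((x)) is a right semidistributive semilocal ring. Then A((x)) is a right Artinian ring. -/
section
universe u v w
variable {S : Type u} [Ring S] (J : Ideal S) [J.IsTwoSided] 

theorem aux_top_torsion (X : Type*) [AddCommGroup X] [Module S X] :
    Module.IsTorsionBySet S (X ⧸ (J • ⊤ : Submodule S X)) J := by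
  intro m a
  obtain ⟨x, rfl⟩ := Submodule.Quotient.mk_surjective _ m
  rw [← Submodule.Quotient.mk_smul, Submodule.Quotient.mk_eq_zero]
  exact Submodule.smul_mem_smul a.2 trivial

theorem aux_semisimple [IsSemisimpleRing (S ⧸ J)] (X : Type*) [AddCommGroup X] [Module S X]
    (h : Module.IsTorsionBySet S X J) : IsSemisimpleModule S X := by
  letI := h.module
  exact h.isSemisimpleModule_iff.1 inferInstance

theorem aux_length_fin [IsSemisimpleRing (S ⧸ J)] : Module.length S (S ⧸ J) ≠ ⊤ := by
  have h : Module.IsTorsionBySet S (S ⧸ J) J := by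
    intro m a
    obtain ⟨x, rfl⟩ := Submodule.Quotient.mk_surjective _ m
    rw [← Submodule.Quotient.mk_smul, Submodule.Quotient.mk_eq_zero]
    exact J.mul_mem_right _ a.2
  have := aux_semisimple J (S ⧸ J) h
  rw [Module.length_ne_top_iff]
  exact ((IsSemisimpleModule.finite_tfae (R := S) (M := S ⧸ J)).out 0 3).1
    (Module.Finite.of_surjective J.mkQ J.mkQ_surjective)

theorem aux_span_length (X : Type*) [AddCommGroup X] [Module S X]
    (h : Module.IsTorsionBySet S X J) (q : X) :
    Module.length S (Submodule.span S {q}) ≤ Module.length S (S ⧸ J) := by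
  let f : (S ⧸ J) →ₗ[S] X := Submodule.liftQ J (LinearMap.toSpanSingleton S X q) (by
    intro a ha
    exact @h q ⟨a, ha⟩)
  have hr : LinearMap.range f = Submodule.span S {q} := by
    rw [← LinearMap.range_toSpanSingleton]
    exact Submodule.range_liftQ _ _ _
  rw [← hr]
  exact Module.length_le_of_surjective f.rangeRestrict f.surjective_rangeRestrict

theorem aux_distrib_length [IsSemisimpleRing (S ⧸ J)] (X : Type*) [AddCommGroup X] [Module S X]
    (h : Module.IsTorsionBySet S X J) (hd : IsDistribModule S X) :
    Module.length S X ≤ Module.length S (S ⧸ J) := by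
  have hss := aux_semisimple J X h
  -- a cyclic submodule of maximal length
  have hfin := aux_length_fin J
  have hl : ∀ q : X, Module.length S (Submodule.span S {q}) ≠ ⊤ := fun q =>
    ne_top_of_le_ne_top hfin (aux_span_length J X h q)
  obtain ⟨q, hq⟩ : ∃ q : X, ∀ q' : X, Module.length S (Submodule.span S {q'}) ≤
      Module.length S (Submodule.span S {q}) := by
    have hb : (Set.range fun q : X => (Module.length S (Submodule.span S {q})).toNat).Finite := by
      apply (Set.finite_Iic (Module.length S (S ⧸ J)).toNat).subset
      rintro _ ⟨q, rfl⟩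
      exact ENat.toNat_le_toNat (aux_span_length J X h q) hfin
    obtain ⟨_, ⟨q, rfl⟩, hm⟩ := hb.exists_maximal ⟨_, 0, rfl⟩
    refine ⟨q, fun q' => ?_⟩
    rw [← ENat.natCast_toNat (hl q'), ← ENat.natCast_toNat (hl q), Nat.cast_le]
    rcases le_total (Module.length S (Submodule.span S {q'})).toNat (Module.length S (Submodule.span S {q})).toNat with h1 | h1
    · exact h1
    · exact hm ⟨q', rfl⟩ h1
  have htop : Submodule.span S {q} = ⊤ := by
    by_contra hne
    obtain ⟨D, hD⟩ := exists_isCompl (Submodule.span S {q})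
    have hDb : D ≠ ⊥ := by
      rintro rfl
      exact hne (by simpa using hD.sup_eq_top)
    obtain ⟨d, hdD, hd0⟩ := D.ne_bot_iff.1 hDb
    have hdle : Submodule.span S {d} ≤ D := by simpa using hdD
    have hdisj : Submodule.span S {q} ⊓ Submodule.span S {d} = ⊥ :=
      (hD.disjoint.mono_right hdle).eq_bot
    have e1 : Submodule.span S {q} ≤ Submodule.span S {q + d} := by
      have := hd (Submodule.span S {q}) (Submodule.span S {q+d}) (Submodule.span S {d})
      rw [hdisj, sup_bot_eq] at this
      have h2 : Submodule.span S {q} ≤ Submodule.span S {q+d} ⊔ Submodule.span S {d} := by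
        rw [Submodule.span_singleton_le_iff_mem]
        have h6 : q = (q + d) + (-d) := by abel
        have h7 : (q + d) + (-d) ∈ Submodule.span S {q+d} ⊔ Submodule.span S {d} := add_mem (Submodule.mem_sup_left (Submodule.mem_span_singleton_self (R := S) (q+d)))
          (Submodule.mem_sup_right (by simp))
        rwa [← h6] at h7
      rw [inf_eq_left.2 h2] at this
      exact inf_eq_left.1 this.symm
    have hlt : Submodule.span S {q} < Submodule.span S {q + d} := by
      refine lt_of_le_of_ne e1 fun he => hd0 ?_
      have h3 : d ∈ Submodule.span S {q} := by
        have h4 : q + d ∈ Submodule.span S {q} := he ▸ Submodule.mem_span_singleton_self (q + d)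
        have := sub_mem h4 (Submodule.mem_span_singleton_self q)
        simpa using this
      have : d ∈ Submodule.span S {q} ⊓ Submodule.span S {d} := ⟨h3, Submodule.mem_span_singleton_self d⟩
      rw [hdisj] at this
      simpa using this
    have h5 := hq (q + d)
    rw [← not_lt] at h5
    apply h5
    rw [Module.length_submodule, Module.length_submodule]
    apply Order.height_strictMono hlt
    rw [← Module.length_submodule]
    exact (hl q).lt_top
  calc Module.length S X = Module.length S (⊤ : Submodule S X) := Module.length_top.symm
    _ ≤ _ := htop ▸ aux_span_length J X h q

theorem aux_top_surj {X Y : Type*} [AddCommGroup X] [Module S X] [AddCommGroup Y] [Module S Y]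
    (f : X →ₗ[S] Y) (hf : Function.Surjective f) :
    Module.length S (Y ⧸ (J • ⊤ : Submodule S Y)) ≤ Module.length S (X ⧸ (J • ⊤ : Submodule S X)) := by
  have hle : (J • ⊤ : Submodule S X) ≤ (J • ⊤ : Submodule S Y).comap f := by
    rw [Submodule.smul_le]
    intro r hr n _
    rw [Submodule.mem_comap, map_smul]
    exact Submodule.smul_mem_smul hr trivial
  refine Module.length_le_of_surjective (Submodule.mapQ _ _ f hle) ?_
  intro y
  obtain ⟨y, rfl⟩ := Submodule.Quotient.mk_surjective _ y
  obtain ⟨x, rfl⟩ := hf y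
  exact ⟨Submodule.Quotient.mk x, rfl⟩

theorem aux_top_exact {X' X Y : Type*} [AddCommGroup X] [Module S X] [AddCommGroup Y] [Module S Y]
    [AddCommGroup X'] [Module S X'] (g : X' →ₗ[S] X)
    (f : X →ₗ[S] Y) (hf : Function.Surjective f) (hg : ∀ x, f x = 0 → ∃ z, g z = x) :
    Module.length S (X ⧸ (J • ⊤ : Submodule S X)) ≤ Module.length S (X' ⧸ (J • ⊤ : Submodule S X')) +
      Module.length S (Y ⧸ (J • ⊤ : Submodule S Y)) := by
  have hle : (J • ⊤ : Submodule S X) ≤ (J • ⊤ : Submodule S Y).comap f := by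
    rw [Submodule.smul_le]
    intro r hr n _
    rw [Submodule.mem_comap, map_smul]
    exact Submodule.smul_mem_smul hr trivial
  have hle' : (J • ⊤ : Submodule S X') ≤ (J • ⊤ : Submodule S X).comap g := by
    rw [Submodule.smul_le]
    intro r hr n _
    rw [Submodule.mem_comap, map_smul]
    exact Submodule.smul_mem_smul hr trivial
  set F := Submodule.mapQ _ _ f hle with hF
  set G := Submodule.mapQ _ _ g hle' with hG
  have hFs : Function.Surjective F := by
    intro y
    obtain ⟨y, rfl⟩ := Submodule.Quotient.mk_surjective _ y
    obtain ⟨x, rfl⟩ := hf y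
    exact ⟨Submodule.Quotient.mk x, rfl⟩
  have h1 := Module.length_eq_add_of_exact (LinearMap.ker F).subtype F
    (Submodule.injective_subtype _) hFs (by
      intro y; simp)
  rw [h1]
  gcongr
  have hker : ∀ t ∈ LinearMap.ker F, t ∈ LinearMap.range G := by
    intro t ht
    obtain ⟨x, rfl⟩ := Submodule.Quotient.mk_surjective _ t
    have h2 : f x ∈ (J • ⊤ : Submodule S Y) := by
      rw [LinearMap.mem_ker] at ht
      exact (Submodule.Quotient.mk_eq_zero _).1 ht
    have h3 : (J • ⊤ : Submodule S Y) = (J • ⊤ : Submodule S X).map f := by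
      rw [Submodule.map_smul'', Submodule.map_top, LinearMap.range_eq_top.2 hf]
    rw [h3] at h2
    obtain ⟨j, hj, hjx⟩ := h2
    obtain ⟨z, hz⟩ := hg (x - j) (by rw [map_sub, hjx, sub_self])
    refine ⟨Submodule.Quotient.mk z, ?_⟩
    change Submodule.Quotient.mk (g z) = _
    rw [hz, Submodule.Quotient.eq]
    simpa using hj
  calc Module.length S (LinearMap.ker F) ≤ Module.length S (LinearMap.range G) :=
        Module.length_le_of_injective (Submodule.inclusion hker) (Submodule.inclusion_injective _)
    _ ≤ _ := Module.length_le_of_surjective G.rangeRestrict G.surjective_rangeRestrict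

theorem aux_distrib_sub {M : Type*} [AddCommGroup M] [Module S M] {X : Type*} [AddCommGroup X] [Module S X]
    (f : X →ₗ[S] M) (hf : Function.Injective f) (hd : IsDistribModule S M) : IsDistribModule S X := by
  intro A B C
  apply Submodule.map_injective_of_injective hf
  rw [Submodule.map_inf _ hf, Submodule.map_sup, Submodule.map_sup, Submodule.map_inf _ hf,
    Submodule.map_inf _ hf, hd]

theorem aux_distrib_quot {M : Type*} [AddCommGroup M] [Module S M] {X : Type*} [AddCommGroup X] [Module S X]
    (f : M →ₗ[S] X) (hf : Function.Surjective f) (hd : IsDistribModule S M) : IsDistribModule S X := by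
  intro A B C
  apply le_antisymm
  · rintro x ⟨hxA, hx⟩
    obtain ⟨b, hb, c, hc, rfl⟩ := Submodule.mem_sup.1 hx
    obtain ⟨b, rfl⟩ := hf b
    obtain ⟨c, rfl⟩ := hf c
    have : b + c ∈ A.comap f ⊓ (B.comap f ⊔ C.comap f) :=
      ⟨by simpa using hxA, Submodule.add_mem_sup hb hc⟩
    rw [hd] at this
    obtain ⟨p, hp, q, hq, hpq⟩ := Submodule.mem_sup.1 this
    rw [← map_add, ← hpq, map_add]
    exact Submodule.add_mem_sup hp hq
  · exact le_inf_sup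

theorem aux_bdd_distrib [IsSemisimpleRing (S ⧸ J)] {M : Type*} [AddCommGroup M] [Module S M]
    (U : Submodule S M) (hd : IsDistribModule S U) (X : Submodule S M) (hX : X ≤ U) :
    Module.length S (X ⧸ (J • ⊤ : Submodule S X)) ≤ Module.length S (S ⧸ J) := by
  apply aux_distrib_length J _ (aux_top_torsion J X)
  apply aux_distrib_quot (Submodule.mkQ _) (Submodule.mkQ_surjective _)
  exact aux_distrib_sub (Submodule.inclusion hX) (Submodule.inclusion_injective _) hd

theorem aux_bdd_sup {M : Type*} [AddCommGroup M] [Module S M] (U V : Submodule S M) (K L : ℕ∞)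
    (hU : ∀ X ≤ U, Module.length S (X ⧸ (J • ⊤ : Submodule S X)) ≤ K)
    (hV : ∀ X ≤ V, Module.length S (X ⧸ (J • ⊤ : Submodule S X)) ≤ L)
    (X : Submodule S M) (hX : X ≤ U ⊔ V) :
    Module.length S (X ⧸ (J • ⊤ : Submodule S X)) ≤ K + L := by
  let f : X →ₗ[S] (M ⧸ U) := U.mkQ.comp X.subtype
  have h1 := aux_top_exact J (Submodule.inclusion (inf_le_left : X ⊓ U ≤ X)) f.rangeRestrict
    f.surjective_rangeRestrict (by
      rintro ⟨x, hx⟩ h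
      have h : f ⟨x, hx⟩ = 0 := congrArg Subtype.val h
      have h : x ∈ U := (Submodule.Quotient.mk_eq_zero _).1 h
      exact ⟨⟨x, hx, h⟩, rfl⟩)
  refine h1.trans (add_le_add (hU _ inf_le_right) ?_)
  let g : (V ⊓ (X ⊔ U) : Submodule S M) →ₗ[S] LinearMap.range f :=
    (U.mkQ.comp (Submodule.subtype _)).codRestrict _ (by
      rintro ⟨v, hv, hv'⟩
      obtain ⟨x, hx, u, hu, rfl⟩ := Submodule.mem_sup.1 hv'
      refine ⟨⟨x, hx⟩, ?_⟩
      change Submodule.Quotient.mk x = Submodule.Quotient.mk (x + u)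
      rw [Submodule.Quotient.eq]
      simpa using hu)
  refine (aux_top_surj J g ?_).trans (hV _ inf_le_left)
  rintro ⟨_, ⟨x, hx⟩, rfl⟩
  obtain ⟨u, hu, v, hv, huv⟩ := Submodule.mem_sup.1 (hX hx)
  refine ⟨⟨v, hv, ?_⟩, ?_⟩
  · have : v = x + -u := by rw [← huv]; abel
    rw [this]
    exact Submodule.add_mem_sup hx (neg_mem hu)
  · apply Subtype.ext
    change Submodule.Quotient.mk v = Submodule.Quotient.mk x
    rw [Submodule.Quotient.eq, ← huv]
    simpa using hu

theorem aux_bdd_iSup [IsSemisimpleRing (S ⧸ J)] {M : Type*} [AddCommGroup M] [Module S M]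
    {ι : Type*} (N : ι → Submodule S M) (hd : ∀ i, IsDistribModule S (N i)) (s : Finset ι) :
    ∃ K : ℕ, ∀ X ≤ s.sup N, Module.length S (X ⧸ (J • ⊤ : Submodule S X)) ≤ K := by
  classical
  induction s using Finset.induction_on with
  | empty =>
    refine ⟨0, fun X hX => ?_⟩
    have hX : X = ⊥ := by simpa using hX
    subst hX
    simp [Module.length_eq_zero]
  | insert i s _ ih =>
    obtain ⟨K, hK⟩ := ih
    refine ⟨(Module.length S (S ⧸ J)).toNat + K, fun X hX => ?_⟩
    rw [Finset.sup_insert] at hX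
    rw [Nat.cast_add, ENat.natCast_toNat (aux_length_fin J)]
    exact aux_bdd_sup J _ _ _ _ (aux_bdd_distrib J (N i) (hd i)) hK X hX

/-- finite length when `J` is nilpotent and tops are bounded -/
theorem aux_finite_length {M : Type*} [AddCommGroup M] [Module S M] (K : ℕ)
    (hK : ∀ X : Submodule S M, Module.length S (X ⧸ (J • ⊤ : Submodule S X)) ≤ K)
    (n : ℕ) : ∀ X : Submodule S M, (fun Y : Submodule S M => J • Y)^[n] X = ⊥ →
      Module.length S X ≠ ⊤ := by
  induction n with
  | zero =>
    intro X hX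
    rw [Function.iterate_zero_apply] at hX
    subst hX
    simp
  | succ n ih =>
    intro X hX
    have h1 := ih (J • X) (by rwa [Function.iterate_succ_apply] at hX)
    have h2 := Module.length_eq_add_of_exact (Submodule.subtype (J • ⊤ : Submodule S X))
      (Submodule.mkQ _) (Submodule.injective_subtype _) (Submodule.mkQ_surjective _)
      (LinearMap.exact_subtype_mkQ _)
    have h3 : Module.length S (J • ⊤ : Submodule S X) ≤ Module.length S (J • X : Submodule S M) := by
      have hm : ∀ c : (J • ⊤ : Submodule S X), (X.subtype.comp (Submodule.subtype _)) c ∈ J • X := by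
        intro c
        have := Submodule.mem_map_of_mem (f := X.subtype) c.2
        rw [Submodule.map_smul'', Submodule.map_top, Submodule.range_subtype] at this
        exact this
      refine Module.length_le_of_injective (LinearMap.codRestrict (J • X)
        (X.subtype.comp (Submodule.subtype (J • ⊤ : Submodule S X))) hm) ?_
      intro a b hab
      have hab' : ((a : X) : M) = ((b : X) : M) :=
        congrArg (fun z : (J • X : Submodule S M) => (z : M)) hab
      exact Subtype.ext (Subtype.ext hab')
    rw [h2]
    exact WithTop.add_ne_top.2 ⟨ne_top_of_le_ne_top h1 h3, ne_top_of_le_ne_top (ENat.natCast_ne_top K) (hK X)⟩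

theorem aux_redundant0 (hunit : ∀ j ∈ J, IsUnit (1 - j)) {X : Type*} [AddCommGroup X] [Module S X] (K : ℕ)
    (hK : Module.length S (X ⧸ (J • ⊤ : Submodule S X)) ≤ K)
    (g : Fin (K + 1) → X) (hg : Submodule.span S (Set.range g) = ⊤) :
    ∃ t, g t ∈ Submodule.span S (g '' {t}ᶜ) := by
  by_contra! hcon
  let q : X →ₗ[S] (X ⧸ (J • ⊤ : Submodule S X)) := Submodule.mkQ _
  let Y : ℕ → Submodule S X := fun k => Submodule.span S (g '' {j | (j : ℕ) < k})
  have key : ∀ t : Fin (K + 1), q (g t) ∉ (Y t).map q := by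
    rintro t ⟨y, hy, hyt⟩
    have h1 : y - g t ∈ (J • ⊤ : Submodule S X) := (Submodule.Quotient.eq _).1 hyt
    have h2 : ∀ z ∈ (J • ⊤ : Submodule S X), ∃ j ∈ J, ∃ w ∈ Submodule.span S (g '' {t}ᶜ),
        z = j • g t + w := by
      intro z hz
      refine Submodule.smul_induction_on hz ?_ ?_
      · intro r hr n _
        have hn : n ∈ Submodule.span S (insert (g t) (g '' {t}ᶜ)) := by
          have : insert (g t) (g '' {t}ᶜ) = Set.range g := by
            rw [← Set.image_insert_eq, ← Set.singleton_union, Set.union_compl_self, Set.image_univ]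
          rw [this, hg]; trivial
        obtain ⟨c, w, hw, rfl⟩ := Submodule.mem_span_insert.1 hn
        exact ⟨r * c, J.mul_mem_right _ hr, r • w, Submodule.smul_mem _ _ hw, by
          rw [smul_add, mul_smul]⟩
      · rintro _ _ ⟨j, hj, w, hw, rfl⟩ ⟨j', hj', w', hw', rfl⟩
        exact ⟨j + j', add_mem hj hj', w + w', add_mem hw hw', by rw [add_smul]; abel⟩
    obtain ⟨j, hj, w, hw, hjw⟩ := h2 _ h1
    have h3 : y ∈ Submodule.span S (g '' {t}ᶜ) := by
      refine Submodule.span_mono (Set.image_mono ?_) hy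
      intro i hi
      simp only [Set.mem_ofPred_eq] at hi
      simp only [Set.mem_compl_iff, Set.mem_singleton_iff]
      rintro rfl
      exact lt_irrefl _ hi
    have h4 : (1 - (-j)) • g t ∈ Submodule.span S (g '' {t}ᶜ) := by
      have : (1 - (-j)) • g t = y - w := by
        rw [sub_eq_iff_eq_add] at hjw
        rw [hjw, sub_smul, neg_smul, one_smul]; abel
      rw [this]; exact sub_mem h3 hw
    obtain ⟨u, hu⟩ := hunit (-j) (neg_mem hj)
    rw [← hu] at h4
    apply hcon t
    have := Submodule.smul_mem _ ((u⁻¹ : Sˣ) : S) h4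
    rwa [smul_smul, Units.inv_mul, one_smul] at this
  let c : LTSeries (Submodule S (X ⧸ (J • ⊤ : Submodule S X))) :=
    { length := K + 1
      toFun := fun i => (Y i).map q
      step := by
        intro i
        refine lt_of_le_of_ne (Submodule.map_mono (Submodule.span_mono (Set.image_mono ?_))) ?_
        · intro a ha
          simp only [Set.mem_ofPred_eq, Fin.val_castSucc, Fin.val_succ] at ha ⊢
          omega
        · intro he
          apply key i
          have : q (g i) ∈ (Y (i + 1)).map q :=
            Submodule.mem_map_of_mem (Submodule.subset_span ⟨i, by simp, rfl⟩)
          have he : (Y i).map q = (Y (i+1)).map q := he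
          rwa [← he] at this }
  have h5 := Order.LTSeries.length_le_krullDim c
  rw [← Module.coe_length] at h5
  have h6 : ((K + 1 : ℕ) : ℕ∞) ≤ Module.length S (X ⧸ (J • ⊤ : Submodule S X)) := by
    exact_mod_cast h5
  have h7 := h6.trans hK
  rw [Nat.cast_le] at h7
  omega

/-- redundancy of generators -/
theorem aux_redundant (hunit : ∀ j ∈ J, IsUnit (1 - j)) {M : Type*} [AddCommGroup M] [Module S M] (K : ℕ)
    (hK : ∀ X : Submodule S M, Module.length S (X ⧸ (J • ⊤ : Submodule S X)) ≤ K)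
    (f : Fin (K + 1) → M) : ∃ t, f t ∈ Submodule.span S (f '' {t}ᶜ) := by
  let X := Submodule.span S (Set.range f)
  let g : Fin (K + 1) → X := fun i => ⟨f i, Submodule.subset_span ⟨i, rfl⟩⟩
  have hg : Submodule.span S (Set.range g) = ⊤ := by
    apply Submodule.map_injective_of_injective X.injective_subtype
    rw [Submodule.map_span, Submodule.map_top, Submodule.range_subtype, ← Set.range_comp]
    rfl
  obtain ⟨t, ht⟩ := aux_redundant0 J hunit K (hK X) g hg
  refine ⟨t, ?_⟩
  have := Submodule.mem_map_of_mem (f := X.subtype) ht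
  rw [Submodule.map_span, ← Set.image_comp] at this
  exact this
end


theorem aux_noeth (A : Type*) [Ring A] (K : ℕ)
    (hred : ∀ f : Fin (K + 1) → LaurentSeries A,
      ∃ t, f t ∈ Submodule.span (LaurentSeries A)ᵐᵒᵖ (f '' {t}ᶜ)) :
    IsNoetherian Aᵐᵒᵖ A := by
  by_contra hN
  rw [isNoetherian_iff, RelEmbedding.wellFounded_iff_isEmpty, not_isEmpty_iff] at hN
  obtain ⟨g⟩ := hN
  have hg : ∀ m n, m < n → g m < g n := fun m n h => g.map_rel_iff.2 h
  have hgm : ∀ m n, m ≤ n → g m ≤ g n := fun m n h => by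
    rcases h.eq_or_lt with rfl | h
    · exact le_rfl
    · exact (hg _ _ h).le
  have hex : ∀ n, ∃ a, a ∈ g (n + 1) ∧ a ∉ g n := fun n =>
    SetLike.exists_of_lt (hg n (n + 1) (Nat.lt_succ_self n))
  choose a ha ha' using hex
  let F : ℕ → PowerSeries A := fun j => PowerSeries.mk fun m =>
    if m = 2 ^ (Nat.log 2 m) ∧ Nat.log 2 m % (K + 1) = j then a (Nat.log 2 m) else 0
  let f : Fin (K + 1) → LaurentSeries A := fun j => HahnSeries.ofPowerSeries ℤ A (F j)
  have hf1 : ∀ (j : Fin (K + 1)) (k : ℕ), k % (K + 1) = j → (f j).coeff (2 ^ k) = a k := by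
    intro j k hk
    have : ((2 : ℤ) ^ k) = ((2 ^ k : ℕ) : ℤ) := by push_cast; rfl
    rw [this]
    change (HahnSeries.ofPowerSeries ℤ A (F j)).coeff _ = _
    rw [HahnSeries.ofPowerSeries_apply_coeff]
    simp [F, PowerSeries.coeff_mk, Nat.log_pow, hk]
  have hf2 : ∀ (j : Fin (K + 1)) (p : ℤ), (f j).coeff p ≠ 0 →
      ∃ k : ℕ, k % (K + 1) = j ∧ p = 2 ^ k ∧ (f j).coeff p = a k := by
    intro j p hp
    have hp0 : 0 ≤ p := by
      by_contra hneg
      apply hp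
      change (HahnSeries.ofPowerSeries ℤ A (F j)).coeff _ = _
      rw [PowerSeries.coeff_coe, if_pos (by omega)]
    obtain ⟨m, rfl⟩ := Int.eq_ofNat_of_zero_le hp0
    have h1 : (f j).coeff (m : ℤ) = if m = 2 ^ (Nat.log 2 m) ∧ Nat.log 2 m % (K + 1) = j then a (Nat.log 2 m) else 0 := by
      change (HahnSeries.ofPowerSeries ℤ A (F j)).coeff _ = _
      rw [HahnSeries.ofPowerSeries_apply_coeff, PowerSeries.coeff_mk]
    rw [h1] at hp ⊢
    split_ifs at hp ⊢ with h
    · refine ⟨Nat.log 2 m, h.2, ?_, rfl⟩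
      conv_lhs => rw [h.1]
      push_cast; rfl
    · exact absurd rfl hp
  obtain ⟨t, ht⟩ := hred f
  have key : ∀ G ∈ Submodule.span (LaurentSeries A)ᵐᵒᵖ (f '' {t}ᶜ), ∀ h : LaurentSeries A,
      ∃ L : ℕ, ∀ k ≥ L, k % (K + 1) = t → (G * h).coeff (2 ^ k) ∈ g k := by
    intro G hG
    induction hG using Submodule.span_induction with
    | mem x hx =>
      obtain ⟨j, hj, rfl⟩ := hx
      intro h
      refine ⟨(-h.order).toNat, fun k hk hkt => ?_⟩
      rw [HahnSeries.coeff_mul]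
      refine sum_mem fun pq hpq => ?_
      rw [Finset.mem_antidiagonal] at hpq
      obtain ⟨hp, hq, hs⟩ := hpq
      obtain ⟨i, hi, hpi, hci⟩ := hf2 j pq.1 hp
      have hik : i < k := by
        rcases lt_trichotomy i k with h1 | h1 | h1
        · exact h1
        · subst h1
          exact absurd (Fin.ext (hi.symm.trans hkt)) hj
        · exfalso
          apply hq
          apply HahnSeries.coeff_eq_zero_of_lt_order
          have h2 : (2 : ℤ) ^ (k + 1) ≤ 2 ^ i := pow_le_pow_right₀ (by norm_num) h1
          have h3 : (k : ℤ) < 2 ^ k := by exact_mod_cast Nat.lt_two_pow_self (n := k)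
          rw [pow_succ] at h2
          omega
      rw [hci]
      have := (g k).smul_mem (MulOpposite.op (h.coeff pq.2)) (hgm _ _ hik (ha i))
      exact this
    | zero => intro h; exact ⟨0, fun k _ _ => by simp⟩
    | add x y _ _ hx hy =>
      intro h
      obtain ⟨L, hL⟩ := hx h
      obtain ⟨L', hL'⟩ := hy h
      refine ⟨max L L', fun k hk hkt => ?_⟩
      rw [add_mul, HahnSeries.coeff_add]
      exact add_mem (hL k (le_of_max_le_left hk) hkt) (hL' k (le_of_max_le_right hk) hkt)
    | smul r x _ hx =>
      intro h
      obtain ⟨L, hL⟩ := hx (r.unop * h)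
      refine ⟨L, fun k hk hkt => ?_⟩
      have := hL k hk hkt
      rw [← mul_assoc] at this
      exact this
  obtain ⟨L, hL⟩ := key _ ht 1
  have h1 : ((K + 1) * L + t) % (K + 1) = (t : ℕ) := by
    rw [Nat.mul_add_mod]; exact Nat.mod_eq_of_lt t.2
  have h2 := hL ((K + 1) * L + t) (by nlinarith [Nat.zero_le (t : ℕ)]) h1
  rw [mul_one, hf1 t _ h1] at h2
  exact ha' _ h2

theorem aux_levitzki (A : Type*) [Ring A] [IsNoetherian Aᵐᵒᵖ A] (I : Submodule ℤ A)
    (hl : ∀ u, ∀ a ∈ I, u * a ∈ I) (hr : ∀ u, ∀ a ∈ I, a * u ∈ I)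
    (hnil : ∀ a ∈ I, IsNilpotent a) : ∃ n, I ^ n = ⊥ := by
  let 𝒯 : Set (Submodule Aᵐᵒᵖ A) := {T | (∀ u, ∀ a ∈ T, u * a ∈ T) ∧ (∀ a ∈ T, a ∈ I) ∧
    ∃ n, (T.restrictScalars ℤ) ^ n = ⊥}
  have hne : 𝒯.Nonempty := ⟨⊥, by
    rintro u a ha
    rw [Submodule.mem_bot] at ha ⊢
    rw [ha, mul_zero], by
    rintro a ha
    rw [Submodule.mem_bot] at ha
    rw [ha]; exact I.zero_mem, 1, by simp⟩
  obtain ⟨T, ⟨hTl, hTI, n, hTn⟩, hTmax⟩ := set_has_maximal_iff_noetherian.2 ‹IsNoetherian Aᵐᵒᵖ A› 𝒯 hne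
  have hTr : ∀ u, ∀ a ∈ T, a * u ∈ T := fun u a ha => T.smul_mem (MulOpposite.op u) ha
  by_cases hIT : ∀ a ∈ I, a ∈ T
  · refine ⟨n, ?_⟩
    rw [eq_bot_iff, ← hTn]
    exact pow_le_pow_left' (show I ≤ T.restrictScalars ℤ from hIT) n
  exfalso
  let ann : A → Submodule Aᵐᵒᵖ A := fun a =>
    { carrier := {y | a * y ∈ T}
      add_mem' := by
        intro x y hx hy
        change a * (x + y) ∈ T
        rw [mul_add]; exact add_mem hx hy
      zero_mem' := by
        change a * 0 ∈ T
        rw [mul_zero]; exact T.zero_mem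
      smul_mem' := by
        intro c x hx
        change a * (x * c.unop) ∈ T
        rw [← mul_assoc]; exact hTr _ _ hx }
  push Not at hIT
  obtain ⟨a0, ha0, ha0'⟩ := hIT
  obtain ⟨_, ⟨a, ⟨haI, haT⟩, rfl⟩, hmax⟩ := set_has_maximal_iff_noetherian.2 ‹IsNoetherian Aᵐᵒᵖ A›
    (ann '' {a | a ∈ I ∧ a ∉ T}) ⟨_, a0, ⟨ha0, ha0'⟩, rfl⟩
  have key : ∀ u, a * u * a ∈ T := by
    intro u
    classical
    have hex : ∃ k, (u * a) ^ (k + 1) ∈ T := by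
      obtain ⟨k, hk⟩ := hnil _ (hl u a haI)
      exact ⟨k, by rw [pow_succ, hk, zero_mul]; exact T.zero_mem⟩
    rcases hk : Nat.find hex with _ | k
    · have := Nat.find_spec hex
      rw [hk] at this
      rw [mul_assoc]
      simpa using hTl a _ this
    · have h1 : (u * a) ^ (k + 1 + 1) ∈ T := by
        have := Nat.find_spec hex
        rwa [hk] at this
      have h2 : (u * a) ^ (k + 1) ∉ T := Nat.find_min hex (m := k) (by omega)
      have h3 : (u * a) ^ (k + 1) ∈ I := by
        rw [pow_succ]; exact hl _ _ (hl _ _ haI)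
      have hle : ann a ≤ ann ((u * a) ^ (k + 1)) := by
        intro y hy
        have hy : a * y ∈ T := hy
        change (u * a) ^ (k + 1) * y ∈ T
        rw [pow_succ, mul_assoc, mul_assoc]
        exact hTl _ _ (hTl _ _ hy)
      have hnlt := hmax _ ⟨(u * a) ^ (k + 1), ⟨h3, h2⟩, rfl⟩
      have heq : ann a = ann ((u * a) ^ (k + 1)) := by
        by_contra hne
        exact hnlt (lt_of_le_of_ne hle hne)
      have h4 : u * a ∈ ann ((u * a) ^ (k + 1)) := by
        change (u * a) ^ (k + 1) * (u * a) ∈ T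
        rw [← pow_succ]; exact h1
      rw [← heq] at h4
      rw [mul_assoc]
      exact h4
  let T' : Submodule Aᵐᵒᵖ A := Submodule.span Aᵐᵒᵖ ((T : Set A) ∪ Set.range fun u => u * a)
  have hTT' : T ≤ T' := fun x hx => Submodule.subset_span (Or.inl hx)
  have haT' : a ∈ T' := Submodule.subset_span (Or.inr ⟨1, one_mul a⟩)
  have hT'l : ∀ p ∈ T', ∀ u, u * p ∈ T' := by
    intro p hp
    induction hp using Submodule.span_induction with
    | mem x hx =>
      intro u
      rcases hx with hx | ⟨v, rfl⟩
      · exact hTT' (hTl u x hx)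
      · exact Submodule.subset_span (Or.inr ⟨u * v, mul_assoc _ _ _⟩)
    | zero => intro u; rw [mul_zero]; exact T'.zero_mem
    | add x y _ _ hx hy => intro u; rw [mul_add]; exact add_mem (hx u) (hy u)
    | smul r x _ hx =>
      intro u
      have := T'.smul_mem r (hx u)
      rw [← mul_smul_comm] at this
      exact this
  have hT'I : ∀ p ∈ T', p ∈ I := by
    intro p hp
    induction hp using Submodule.span_induction with
    | mem x hx =>
      rcases hx with hx | ⟨v, rfl⟩
      · exact hTI x hx
      · exact hl _ _ haI
    | zero => exact I.zero_mem
    | add x y _ _ hx hy => exact add_mem hx hy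
    | smul r x _ hx => exact hr r.unop _ hx
  have s1 : ∀ q ∈ T', ∀ u, a * u * q ∈ T := by
    intro p hp
    induction hp using Submodule.span_induction with
    | mem x hx =>
      intro u
      rcases hx with hx | ⟨v, rfl⟩
      · exact hTl _ x hx
      · have := key (u * v)
        simpa only [mul_assoc] using this
    | zero => intro u; rw [mul_zero]; exact T.zero_mem
    | add x y _ _ hx hy => intro u; rw [mul_add]; exact add_mem (hx u) (hy u)
    | smul r x _ hx =>
      intro u
      have := T.smul_mem r (hx u)
      rw [← mul_smul_comm] at this
      exact this
  have s2 : ∀ p ∈ T', ∀ q ∈ T', p * q ∈ T := by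
    intro p hp
    induction hp using Submodule.span_induction with
    | mem x hx =>
      intro q hq
      rcases hx with hx | ⟨v, rfl⟩
      · exact hTr _ x hx
      · have := hTl v _ (s1 q hq 1)
        simpa only [mul_assoc, one_mul] using this
    | zero => intro q _; rw [zero_mul]; exact T.zero_mem
    | add x y _ _ hx hy => intro q hq; rw [add_mul]; exact add_mem (hx q hq) (hy q hq)
    | smul r x _ hx =>
      intro q hq
      have := hx _ (hT'l q hq r.unop)
      rw [← mul_assoc] at this
      exact this
  have hT'mem : T' ∈ 𝒯 := by
    refine ⟨fun u p hp => hT'l p hp u, hT'I, 2 * n, ?_⟩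
    rw [pow_mul, eq_bot_iff, ← hTn]
    refine pow_le_pow_left' ?_ n
    rw [pow_two, Submodule.mul_le]
    exact s2
  apply hTmax T' hT'mem
  exact lt_of_le_of_ne hTT' fun h => haT (h ▸ haT')


/-- in an Artinian ring, a commuting family with central invertible differences contains a unit -/
theorem aux_unit_art {Q : Type*} [Ring Q] [IsArtinianRing Q] (c : ℕ → Q)
    (hcomm : ∀ i j, Commute (c i) (c j))
    (hdiff : ∀ i j, i < j → ∃ w : Q, (∀ y, Commute w y) ∧ w * (c i - c j) = 1) :
    ∃ n, IsUnit (c n) := by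
  let p : ℕ → Q := fun n => Nat.rec 1 (fun k y => y * c k) n
  have hp : ∀ n, p (n + 1) = p n * c n := fun n => rfl
  have hpc : ∀ n i, Commute (p n) (c i) := by
    intro n i
    induction n with
    | zero => exact Commute.one_left _
    | succ n ih => rw [hp]; exact ih.mul_left (hcomm _ _)
  let f : ℕ →o (Submodule Q Q)ᵒᵈ := ⟨fun n => OrderDual.toDual (Submodule.span Q {p n}),
    monotone_nat_of_le_succ (by
      intro n
      change Submodule.span Q {p (n+1)} ≤ Submodule.span Q {p n}
      rw [Submodule.span_singleton_le_iff_mem, Submodule.mem_span_singleton, hp, (hpc n n).eq]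
      exact ⟨c n, rfl⟩)⟩
  obtain ⟨n, hn⟩ := IsArtinian.monotone_stabilizes f
  have hn : Submodule.span Q {p n} = Submodule.span Q {p (n+1)} := hn (n + 1) (Nat.le_succ n)
  have h1 : p n ∈ Submodule.span Q {p (n+1)} := hn ▸ Submodule.mem_span_singleton_self _
  obtain ⟨u, hu⟩ := Submodule.mem_span_singleton.1 h1
  have h2 : ∀ m ≤ n, ∃ α β, α * p m + β * c n = 1 := by
    intro m
    induction m with
    | zero => intro _; exact ⟨1, 0, by simp [p]⟩
    | succ m ih =>
      intro hm
      obtain ⟨α, β, hab⟩ := ih (by omega)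
      obtain ⟨w, hw, hw1⟩ := hdiff m n (by omega)
      refine ⟨α * w, β - α * p m * w, ?_⟩
      rw [hp, ← hab]
      have h3 : p m = w * p m * c m - p m * w * c n := by
        rw [(hw (p m)).eq, mul_assoc, mul_assoc, ← mul_sub, ← mul_sub, hw1, mul_one]
      calc _ = α * (w * p m * c m - p m * w * c n) + β * c n := by noncomm_ring
        _ = _ := by rw [← h3]
  obtain ⟨α, β, hab⟩ := h2 n le_rfl
  refine ⟨n, ?_⟩
  have h5 : (α * u * p n + β) * c n = 1 := by
    rw [← hab]
    conv_rhs => rw [← hu]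
    rw [hp, smul_eq_mul]
    noncomm_ring
  exact IsUnit.of_mul_eq_one_right _ h5

theorem aux_jac_unit {R : Type*} [Ring R] (j : R) (hj : j ∈ Ring.jacobson R) : IsUnit (1 - j) := by
  have key : ∀ j ∈ Ring.jacobson R, ∃ z, z * (1 - j) = 1 := by
    intro j hj
    rw [← Ideal.jacobson_bot, Ideal.mem_jacobson_iff] at hj
    obtain ⟨z, hz⟩ := hj (-1)
    refine ⟨z, ?_⟩
    rw [Ideal.mem_bot] at hz
    rw [← sub_eq_zero, ← hz]
    noncomm_ring
  obtain ⟨z, hz⟩ := key j hj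
  have hz' : z = 1 - (-(z * j)) := by
    rw [mul_sub, mul_one, sub_eq_iff_eq_add] at hz
    rw [sub_neg_eq_add]; exact hz
  obtain ⟨y, hy⟩ := key (-(z * j)) (neg_mem (Ideal.mul_mem_left _ _ hj))
  rw [← hz'] at hy
  have : y = 1 - j := by
    calc y = y * (z * (1 - j)) := by rw [hz, mul_one]
      _ = 1 - j := by rw [← mul_assoc, hy, one_mul]
  rw [this] at hy
  exact ⟨⟨1 - j, z, hy, hz⟩, rfl⟩

theorem aux_lift_unit {R : Type*} [Ring R] (c : R)
    (h : IsUnit (Ideal.Quotient.mk (Ring.jacobson R) c)) : IsUnit c := by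
  obtain ⟨u, hu⟩ := h
  obtain ⟨d, hd⟩ := Ideal.Quotient.mk_surjective (u⁻¹).1
  have h1 : 1 - c * d ∈ Ring.jacobson R := by
    rw [← Ideal.Quotient.eq_zero_iff_mem, map_sub, map_one, map_mul, ← hu, hd, Units.mul_inv, sub_self]
  have h2 : 1 - d * c ∈ Ring.jacobson R := by
    rw [← Ideal.Quotient.eq_zero_iff_mem, map_sub, map_one, map_mul, ← hu, hd, Units.inv_mul, sub_self]
  have h3 := aux_jac_unit _ h1
  have h4 := aux_jac_unit _ h2
  rw [sub_sub_cancel] at h3 h4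
  obtain ⟨v, hv⟩ := h3
  obtain ⟨w, hw⟩ := h4
  have e1 : c * (d * (v⁻¹).1) = 1 := by rw [← mul_assoc, ← hv, Units.mul_inv]
  have e2 : ((w⁻¹).1 * d) * c = 1 := by rw [mul_assoc, ← hw, Units.inv_mul]
  exact isUnit_iff_exists.2 ⟨_, e1, by rw [← left_inv_eq_right_inv e2 e1, e2]⟩

theorem aux_ps_unit {A : Type*} [Ring A] (f : LaurentSeries A) (h0 : f.coeff 0 = 1)
    (hneg : ∀ i < 0, f.coeff i = 0) : ∃ g, f * g = 1 := by
  let φ : PowerSeries A := PowerSeries.mk fun n => f.coeff n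
  have hφ : HahnSeries.ofPowerSeries ℤ A φ = f := by
    ext i
    rcases lt_or_ge i 0 with hi | hi
    · rw [PowerSeries.coeff_coe, if_pos hi, hneg i hi]
    · obtain ⟨m, rfl⟩ := Int.eq_ofNat_of_zero_le hi
      rw [HahnSeries.ofPowerSeries_apply_coeff, PowerSeries.coeff_mk]
  have hc : PowerSeries.constantCoeff φ = ((1 : Aˣ) : A) := by
    rw [← PowerSeries.coeff_zero_eq_constantCoeff_apply, PowerSeries.coeff_mk]
    simpa using h0
  refine ⟨HahnSeries.ofPowerSeries ℤ A (PowerSeries.invOfUnit φ 1), ?_⟩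
  rw [← hφ, ← map_mul, PowerSeries.mul_invOfUnit φ 1 hc, map_one]

theorem aux_pireg {A : Type*} [Ring A] [IsArtinianRing (LaurentSeries A ⧸ Ring.jacobson (LaurentSeries A))]
    (r : A) : ∃ k : ℕ, ∃ s : A, Commute r s ∧ r ^ k = r ^ (k + 1) * s := by
  let X : ℕ → LaurentSeries A := fun n => HahnSeries.single (n : ℤ) 1
  have hXc : ∀ n y, Commute (X n) y := by
    intro n y
    ext i
    have : i = (i - n) + n := by ring
    rw [this]
    simp only [X]
    rw [HahnSeries.coeff_mul_single_add, HahnSeries.coeff_single_mul_add, mul_one, one_mul]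
  let c : ℕ → LaurentSeries A := fun n => HahnSeries.C r - X (n + 1)
  have hcomm : ∀ i j, Commute (c i) (c j) := by
    intro i j
    exact ((Commute.refl _).sub_right (hXc _ _).symm).sub_left (hXc _ _)
  have hdiff : ∀ i j, i < j → ∃ w : LaurentSeries A, (∀ y, Commute w y) ∧ w * (c i - c j) = 1 := by
    intro i j hij
    -- c i - c j = X (j+1) - X (i+1)
    let v : LaurentSeries A := HahnSeries.single (-((i : ℤ) + 1)) (-1) * (c i - c j)
    have hv : v = 1 - X (j - i) := by
      simp only [v, c, X, sub_sub_sub_cancel_left, mul_sub, HahnSeries.single_mul_single]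
      have h1 : -((i : ℤ) + 1) + ((j + 1 : ℕ) : ℤ) = ((j - i : ℕ) : ℤ) := by push_cast [hij.le]; ring
      have h2 : -((i : ℤ) + 1) + ((i + 1 : ℕ) : ℤ) = 0 := by push_cast; ring
      rw [h1, h2, mul_one, HahnSeries.single_neg, HahnSeries.single_neg, HahnSeries.single_zero_one]
      abel
    obtain ⟨g, hg⟩ := aux_ps_unit v (by
        rw [hv, HahnSeries.coeff_sub, HahnSeries.coeff_one, HahnSeries.coeff_single_of_ne (by omega)]
        simp) (by
        intro k hk
        rw [hv, HahnSeries.coeff_sub, HahnSeries.coeff_one, HahnSeries.coeff_single_of_ne (by omega), if_neg hk.ne]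
        simp)
    have hvc : ∀ y, Commute v y := fun y => by
      rw [hv]; exact (Commute.one_left y).sub_left (hXc _ y)
    have hgc : ∀ y, Commute g y := fun y => by
      have hg' : g * v = 1 := by rw [← (hvc g).eq, hg]
      change g * y = y * g
      calc g * y = g * y * (v * g) := by rw [hg, mul_one]
        _ = g * (v * y) * g := by rw [(hvc y).eq]; noncomm_ring
        _ = y * g := by rw [← mul_assoc g v y, hg', one_mul]
    have hsc : ∀ y : LaurentSeries A, Commute (HahnSeries.single (-((i : ℤ) + 1)) (-1 : A)) y := by
      intro y
      ext k
      have : k = (k - (-((i : ℤ) + 1))) + (-((i : ℤ) + 1)) := by ring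
      rw [this, HahnSeries.coeff_mul_single_add, HahnSeries.coeff_single_mul_add]
      simp
    refine ⟨g * HahnSeries.single (-((i : ℤ) + 1)) (-1), fun y => (hgc y).mul_left (hsc y), ?_⟩
    rw [mul_assoc]
    change g * v = 1
    rw [(hgc v).eq, hg]
  let π := Ideal.Quotient.mk (Ring.jacobson (LaurentSeries A))
  obtain ⟨n, hn⟩ := aux_unit_art (fun n => π (c n)) (fun i j => (hcomm i j).map π) (by
    intro i j hij
    obtain ⟨w, hw, hw1⟩ := hdiff i j hij
    refine ⟨π w, fun y => ?_, by rw [← map_sub, ← map_mul, hw1, map_one]⟩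
    obtain ⟨y, rfl⟩ := Ideal.Quotient.mk_surjective y
    exact (hw y).map π)
  obtain ⟨u, hu⟩ := aux_lift_unit _ hn
  set f : LaurentSeries A := (u⁻¹).1 with hf
  have h1 : c n * f = 1 := by rw [← hu, Units.mul_inv]
  have hcom : Commute (HahnSeries.C r) f := by
    have : Commute (HahnSeries.C r) u.1 := by
      rw [hu]; exact (Commute.refl _).sub_right (hXc _ _).symm
    exact this.units_inv_right
  have hco : ∀ i, r * f.coeff i = f.coeff i * r := by
    intro i
    have := congrArg (fun z => HahnSeries.coeff z i) hcom.eq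
    simpa [HahnSeries.C_apply, HahnSeries.coeff_mul_single_zero, HahnSeries.coeff_single_zero_mul] using this
  have hrec : ∀ i : ℤ, r * f.coeff i - f.coeff (i - (n + 1 : ℕ)) = if i = 0 then 1 else 0 := by
    intro i
    refine Eq.trans ?_ ((HahnSeries.coeff_one (R := A) (a := i)).trans (by congr))
    rw [← h1]
    simp only [c, X, sub_mul, HahnSeries.coeff_sub, HahnSeries.C_apply, HahnSeries.coeff_single_zero_mul]
    rw [HahnSeries.coeff_single_mul, one_mul]
  have hit : ∀ k : ℕ, f.coeff (-((n + 1 : ℕ) : ℤ) * (k + 1)) = r ^ k * (r * f.coeff 0 - 1) := by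
    intro k
    induction k with
    | zero =>
      have := hrec 0
      rw [if_pos rfl] at this
      simp only [zero_sub] at this
      have e : -((n + 1 : ℕ) : ℤ) * ((0 : ℕ) + 1) = -((n + 1 : ℕ) : ℤ) := by push_cast; ring
      rw [e, pow_zero, one_mul, ← this]; abel
    | succ k ih =>
      have := hrec (-((n + 1 : ℕ) : ℤ) * (k + 1))
      rw [if_neg (by
        have : (0:ℤ) < ((n + 1 : ℕ) : ℤ) * (k + 1) := by positivity
        intro h; rw [neg_mul] at h; omega), sub_eq_zero, ih] at this
      have e : -((n + 1 : ℕ) : ℤ) * ((k + 1 : ℕ) + 1) = -((n + 1 : ℕ) : ℤ) * (k + 1) - (n + 1 : ℕ) := by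
        push_cast; ring
      rw [e, ← this, pow_succ', mul_assoc]
  have hz := hit (-f.order).toNat
  rw [HahnSeries.coeff_eq_zero_of_lt_order (by
    have h3 : (((-f.order).toNat : ℕ) : ℤ) + 1 ≤ ((n + 1 : ℕ) : ℤ) * (((-f.order).toNat : ℕ) + 1) := by
      push_cast
      nlinarith [Int.natCast_nonneg n, Int.natCast_nonneg (-f.order).toNat]
    rw [neg_mul]
    omega)] at hz
  refine ⟨(-f.order).toNat, f.coeff 0, hco 0, ?_⟩
  rw [mul_sub, mul_one, eq_comm, sub_eq_zero, ← mul_assoc, ← pow_succ] at hz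
  exact hz.symm

/-- nonnilpotent element gives an idempotent -/
theorem aux_idem {A : Type*} [Ring A] (r s : A) (k : ℕ) (hc : Commute r s)
    (h : r ^ k = r ^ (k + 1) * s) : ∃ e b, e = r * b ∧ e * e = e ∧ (e = 0 → IsNilpotent r) := by
  have h' : r ^ (k + 1) = r ^ (k + 1) * (r * s) := by
    rw [← mul_assoc, ← pow_succ]
    nth_rw 1 [pow_succ']
    rw [h, pow_succ' r (k + 1), mul_assoc]
  have hj : ∀ j : ℕ, r ^ (k + 1) = r ^ (k + 1) * (r * s) ^ j := by
    intro j
    induction j with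
    | zero => simp
    | succ j ih => rw [pow_succ' (r * s) j, ← mul_assoc, ← h', ← ih]
  have hh := hj (k + 1)
  refine ⟨(r * s) ^ (k + 1), r ^ k * s ^ (k + 1), ?_, ?_, ?_⟩
  · rw [hc.mul_pow, ← mul_assoc, ← pow_succ']
  · have h2 : (r * s) ^ (k + 1) = s ^ (k + 1) * r ^ (k + 1) := by
      rw [hc.eq, hc.symm.mul_pow]
    nth_rw 1 [h2]
    rw [mul_assoc, ← hh, h2]
  · intro h0
    rw [h0, mul_zero] at hh
    exact ⟨k + 1, hh⟩

/-- lowest coefficients of the elements of the Jacobson radical -/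
def auxI (A : Type*) [Ring A] : Submodule ℤ A where
  carrier := {a | ∃ f ∈ Ring.jacobson (LaurentSeries A), (∀ i < 0, f.coeff i = 0) ∧ f.coeff 0 = a}
  add_mem' := by
    rintro a b ⟨f, hf, hf1, hf2⟩ ⟨g, hg, hg1, hg2⟩
    exact ⟨f + g, add_mem hf hg, fun i hi => by rw [HahnSeries.coeff_add, hf1 i hi, hg1 i hi, add_zero],
      by rw [HahnSeries.coeff_add, hf2, hg2]⟩
  zero_mem' := ⟨0, zero_mem _, fun i hi => by simp, by simp⟩
  smul_mem' := by
    rintro c a ⟨f, hf, hf1, hf2⟩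
    refine ⟨HahnSeries.single 0 (c : A) * f, Ideal.mul_mem_left _ _ hf, fun i hi => ?_, ?_⟩
    · rw [HahnSeries.coeff_single_zero_mul, hf1 i hi, mul_zero]
    · rw [HahnSeries.coeff_single_zero_mul, hf2, zsmul_eq_mul]

theorem auxI_left {A : Type*} [Ring A] (u a : A) (ha : a ∈ auxI A) : u * a ∈ auxI A := by
  obtain ⟨f, hf, hf1, hf2⟩ := ha
  refine ⟨HahnSeries.single 0 u * f, Ideal.mul_mem_left _ _ hf, fun i hi => ?_, ?_⟩
  · rw [HahnSeries.coeff_single_zero_mul, hf1 i hi, mul_zero]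
  · rw [HahnSeries.coeff_single_zero_mul, hf2]

theorem auxI_right {A : Type*} [Ring A] (u a : A) (ha : a ∈ auxI A) : a * u ∈ auxI A := by
  obtain ⟨f, hf, hf1, hf2⟩ := ha
  refine ⟨f * HahnSeries.single 0 u, Ideal.mul_mem_right _ _ hf, fun i hi => ?_, ?_⟩
  · rw [HahnSeries.coeff_mul_single_zero, hf1 i hi, zero_mul]
  · rw [HahnSeries.coeff_mul_single_zero, hf2]

theorem auxI_nil {A : Type*} [Ring A]
    [IsArtinianRing (LaurentSeries A ⧸ Ring.jacobson (LaurentSeries A))]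
    (a : A) (ha : a ∈ auxI A) : IsNilpotent a := by
  obtain ⟨k, s, hc, h⟩ := aux_pireg a
  obtain ⟨e, b, heb, hee, hnil⟩ := aux_idem a s k hc h
  apply hnil
  have heI : e ∈ auxI A := heb ▸ auxI_right b a ha
  obtain ⟨f, hf, hf1, hf2⟩ := heI
  let E : LaurentSeries A := HahnSeries.single 0 e
  have hE : E * E = E := by simp only [E, HahnSeries.single_mul_single, hee, add_zero]
  have hf' : E * f * E ∈ Ring.jacobson (LaurentSeries A) :=
    Ideal.mul_mem_right _ _ (Ideal.mul_mem_left _ _ hf)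
  obtain ⟨u, hu⟩ := aux_ps_unit (E * f * E + (1 - E)) (by
      simp only [E, HahnSeries.coeff_add, HahnSeries.coeff_sub, HahnSeries.coeff_mul_single_zero,
        HahnSeries.coeff_single_zero_mul, hf2, HahnSeries.coeff_one, HahnSeries.coeff_single_same, hee]
      simp) (by
      intro i hi
      simp only [E, HahnSeries.coeff_add, HahnSeries.coeff_sub, HahnSeries.coeff_mul_single_zero,
        HahnSeries.coeff_single_zero_mul, hf1 i hi, HahnSeries.coeff_one,
        HahnSeries.coeff_single_of_ne hi.ne, if_neg hi.ne]
      simp)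
  have h1 : E = E * f * E * u := by
    calc E = E * ((E * f * E + (1 - E)) * u) := by rw [hu, mul_one]
      _ = ((E * E) * f * E + (E - E * E)) * u := by noncomm_ring
      _ = E * f * E * u := by rw [hE, sub_self, add_zero]
  have h2 : E ∈ Ring.jacobson (LaurentSeries A) := h1 ▸ Ideal.mul_mem_right _ _ hf'
  have h3 := aux_jac_unit _ h2
  have h4 : E = 0 := by
    rw [← h3.mul_right_eq_zero, sub_mul, one_mul, hE, sub_self]
  have := congrArg (fun z => HahnSeries.coeff z 0) h4
  simpa [E] using this

theorem aux_coeff_mul {A : Type*} [Ring A] (P Q : Submodule ℤ A) (f g : LaurentSeries A)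
    (hf : ∀ i, f.coeff i ∈ P) (hg : ∀ i, g.coeff i ∈ Q) (i : ℤ) : (f * g).coeff i ∈ P * Q := by
  rw [HahnSeries.coeff_mul]
  exact Submodule.sum_mem _ fun x _ => Submodule.mul_mem_mul (hf _) (hg _)

theorem aux_coeff_J {A : Type*} [Ring A] (n : ℕ) (hn : auxI A ^ n = ⊥) (f : LaurentSeries A)
    (hf : ∀ i, f.coeff i ∈ auxI A) : f ∈ Ring.jacobson (LaurentSeries A) := by
  rw [← Ideal.jacobson_bot, Ideal.mem_jacobson_iff]
  intro y
  have h1 : ∀ i, (y * f).coeff i ∈ auxI A := by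
    intro i
    rw [HahnSeries.coeff_mul]
    exact Submodule.sum_mem _ fun x _ => auxI_left _ _ (hf _)
  have h2 : ∀ m : ℕ, ∀ i, ((y * f) ^ (m + 1)).coeff i ∈ auxI A ^ (m + 1) := by
    intro m
    induction m with
    | zero => simpa using h1
    | succ m ih =>
      intro i
      rw [pow_succ, pow_succ (auxI A)]
      exact aux_coeff_mul _ _ _ _ ih h1 i
  have h3 : IsNilpotent (y * f) := by
    refine ⟨n + 1, ?_⟩
    ext i
    have := h2 n i
    rw [pow_succ (auxI A), hn, Submodule.bot_mul] at this
    simpa using this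
  obtain ⟨u, hu⟩ := h3.isUnit_add_one
  refine ⟨(u⁻¹).1, ?_⟩
  rw [Ideal.mem_bot, sub_eq_zero]
  calc _ = (u⁻¹).1 * (y * f + 1) := by noncomm_ring
    _ = 1 := by rw [← hu, Units.inv_mul]

theorem aux_J_coeff {A : Type*} [Ring A] (n : ℕ) (hn : auxI A ^ n = ⊥) (f : LaurentSeries A)
    (hf : f ∈ Ring.jacobson (LaurentSeries A)) : ∀ i, f.coeff i ∈ auxI A := by
  have key : ∀ m : ℕ, ∀ i < f.order + m, f.coeff i ∈ auxI A := by
    intro m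
    induction m with
    | zero =>
      intro i hi
      rw [HahnSeries.coeff_eq_zero_of_lt_order (by simpa using hi)]
      exact zero_mem _
    | succ m ih =>
      intro i hi
      by_cases h : i < f.order + m
      · exact ih i h
      let g : LaurentSeries A := ⟨fun j => if j < i then f.coeff j else 0,
        f.isPWO_support.mono (by
          intro j hj
          simp only [Function.mem_support, ne_eq, ite_eq_right_iff, Classical.not_imp] at hj
          exact hj.2)⟩
      have hg : ∀ j, g.coeff j = if j < i then f.coeff j else 0 := fun j => rfl
      have hgJ : g ∈ Ring.jacobson (LaurentSeries A) := by
        apply aux_coeff_J n hn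
        intro j
        rw [hg]
        split_ifs with hj
        · exact ih j (by push_cast at hi; omega)
        · exact zero_mem _
      refine ⟨HahnSeries.single (-i) 1 * (f - g), Ideal.mul_mem_left _ _ (sub_mem hf hgJ), ?_, ?_⟩
      · intro j hj
        rw [HahnSeries.coeff_single_mul, one_mul, HahnSeries.coeff_sub, hg, if_pos (by omega), sub_self]
      · rw [HahnSeries.coeff_single_mul, one_mul, HahnSeries.coeff_sub, hg, if_neg (by omega)]
        simp
  intro i
  exact key (i - f.order + 1).toNat i (by omega)

theorem aux_semis {R : Type*} [Ring R] (J : Ideal R) [J.IsTwoSided] (h : IsSemisimpleModule R (R ⧸ J)) :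
    IsSemisimpleRing (R ⧸ J) := by
  have ht : Module.IsTorsionBySet R (R ⧸ J) (J : Set R) := by
    intro x ⟨a, ha⟩
    obtain ⟨x, rfl⟩ := Ideal.Quotient.mk_surjective x
    change Ideal.Quotient.mk J (a * x) = 0
    rw [Ideal.Quotient.eq_zero_iff_mem]
    exact Ideal.mul_mem_right _ _ ha
  let φ : (R ⧸ J) →ₛₗ[Ideal.Quotient.mk J] (R ⧸ J) :=
    { toFun := id
      map_add' := fun _ _ => rfl
      map_smul' := fun a x => by
        obtain ⟨x, rfl⟩ := Ideal.Quotient.mk_surjective x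
        rfl }
  exact (φ.isSemisimpleModule_iff_of_bijective Function.bijective_id).1 h

/-- opposite of the ideal -/
def auxJop {R : Type*} [Ring R] (J : Ideal R) [J.IsTwoSided] : Ideal Rᵐᵒᵖ :=
  RingHom.ker (RingHom.op (Ideal.Quotient.mk J))

instance {R : Type*} [Ring R] (J : Ideal R) [J.IsTwoSided] : (auxJop J).IsTwoSided := by
  unfold auxJop; infer_instance

theorem auxJop_mem {R : Type*} [Ring R] (J : Ideal R) [J.IsTwoSided] (x : Rᵐᵒᵖ) :
    x ∈ auxJop J ↔ x.unop ∈ J := by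
  rw [auxJop, RingHom.mem_ker, ← Ideal.Quotient.eq_zero_iff_mem]
  change MulOpposite.op _ = 0 ↔ _
  rw [MulOpposite.op_eq_zero_iff]
  rfl

theorem auxJop_semis {R : Type*} [Ring R] (J : Ideal R) [J.IsTwoSided] [IsSemisimpleRing (R ⧸ J)] :
    IsSemisimpleRing (Rᵐᵒᵖ ⧸ auxJop J) := by
  have hs : Function.Surjective (RingHom.op (Ideal.Quotient.mk J)) := by
    intro y
    obtain ⟨x, hx⟩ := Ideal.Quotient.mk_surjective y.unop
    exact ⟨MulOpposite.op x, MulOpposite.unop_injective hx⟩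
  exact (RingHom.quotientKerEquivOfSurjective hs).symm.isSemisimpleRing

/-- If the Laurent series ring `A((x))` is a right semidistributive semilocal ring,
then `A((x))` is a right Artinian ring. -/
theorem stmt2 (A : Type*) [Ring A]
    (hsd : IsRightSemidistributiveRing (LaurentSeries A))
    (hsl : IsSemilocalRing (LaurentSeries A)) :
    IsArtinian (LaurentSeries A)ᵐᵒᵖ (LaurentSeries A) := by
  unfold IsSemilocalRing at hsl
  rw [Ideal.jacobson_bot] at hsl
  have hss := aux_semis _ hsl
  set J := Ring.jacobson (LaurentSeries A) with hJ
  have hss' := auxJop_semis J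
  have hart : IsArtinianRing (LaurentSeries A ⧸ J) := inferInstance
  obtain ⟨ι, N, -, htop, hd⟩ := hsd
  have h1 : (1 : LaurentSeries A) ∈ iSup N := htop ▸ Submodule.mem_top
  obtain ⟨s, hs⟩ := Submodule.exists_finset_of_mem_iSup N h1
  have hsup : s.sup N = ⊤ := by
    rw [Finset.sup_eq_iSup, eq_top_iff]
    intro x _
    have := Submodule.smul_mem _ (MulOpposite.op x) hs
    simpa using this
  obtain ⟨K, hK⟩ := aux_bdd_iSup (auxJop J) N hd s
  have hK' : ∀ X : Submodule (LaurentSeries A)ᵐᵒᵖ (LaurentSeries A),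
      Module.length (LaurentSeries A)ᵐᵒᵖ (X ⧸ (auxJop J • ⊤ : Submodule (LaurentSeries A)ᵐᵒᵖ X)) ≤ K :=
    fun X => hK X (hsup ▸ le_top)
  have hunit : ∀ j ∈ auxJop J, IsUnit (1 - j) := by
    intro j hj
    have := aux_jac_unit _ ((auxJop_mem _ _).1 hj)
    rw [← MulOpposite.unop_one, ← MulOpposite.unop_sub] at this
    exact this.op
  have hnoeth : IsNoetherian Aᵐᵒᵖ A :=
    aux_noeth A K (fun f => aux_redundant (auxJop J) hunit K hK' f)
  obtain ⟨n, hn⟩ := aux_levitzki A (auxI A) (fun u a ha => auxI_left u a ha)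
    (fun u a ha => auxI_right u a ha) (fun a ha => auxI_nil a ha)
  have hit : ∀ m : ℕ, ∀ F ∈ (fun Y : Submodule (LaurentSeries A)ᵐᵒᵖ (LaurentSeries A) =>
      auxJop J • Y)^[m + 1] ⊤, ∀ i, F.coeff i ∈ auxI A ^ (m + 1) := by
    intro m
    induction m with
    | zero =>
      intro F hF
      have : F ∈ J := by
        simp only [zero_add, Function.iterate_one] at hF
        refine Submodule.smul_induction_on hF ?_ (fun x y hx hy => add_mem hx hy)
        intro r hr y _
        rw [MulOpposite.smul_eq_mul_unop]
        exact Ideal.mul_mem_left _ _ ((auxJop_mem _ _).1 hr)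
      simpa using aux_J_coeff n hn F this
    | succ m ih =>
      intro F hF
      rw [Function.iterate_succ_apply'] at hF
      refine Submodule.smul_induction_on hF ?_ (fun x y hx hy i => ?_)
      · intro r hr y hy i
        rw [MulOpposite.smul_eq_mul_unop, pow_succ]
        exact aux_coeff_mul _ _ _ _ (ih y hy) (aux_J_coeff n hn _ ((auxJop_mem _ _).1 hr)) i
      · rw [HahnSeries.coeff_add]
        exact add_mem (hx i) (hy i)
  have hbot : (fun Y : Submodule (LaurentSeries A)ᵐᵒᵖ (LaurentSeries A) =>
      auxJop J • Y)^[n + 1] ⊤ = ⊥ := by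
    rw [eq_bot_iff]
    intro F hF
    have := hit n F hF
    rw [pow_succ (auxI A), hn, Submodule.bot_mul] at this
    rw [Submodule.mem_bot]
    ext i
    simpa using this i
  have hfin := aux_finite_length (auxJop J) K hK' (n + 1) ⊤ hbot
  rw [Module.length_top, Module.length_ne_top_iff, isFiniteLength_iff_isNoetherian_isArtinian] at hfin
  exact hfin.2
end

section
/- If R is a right semidistributive semilocal ring, then every cyclic right R-module is quotient finite-dimensional. -/
/-- A module is *finite-dimensional* (in the sense of Goldie/uniform dimension) if it
does not contain an infinite direct sum of nonzero submodules, i.e. every independent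
family of nonzero submodules is finite. -/
def IsFinDimModule (R M : Type*) [Ring R] [AddCommGroup M] [Module R M] : Prop :=
  ∀ (ι : Type) (N : ι → Submodule R M), iSupIndep N → (∀ i, N i ≠ ⊥) → Finite ι

/-- A module is *quotient finite-dimensional* if every quotient module of it is
finite-dimensional. -/
def IsQFDModule (R M : Type*) [Ring R] [AddCommGroup M] [Module R M] : Prop :=
  ∀ N : Submodule R M, IsFinDimModule R (M ⧸ N)

/-- Every semisimple subquotient is Noetherian. -/
def SubquotFin (A M : Type*) [Ring A] [AddCommGroup M] [Module A M] : Prop :=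
  ∀ (K : Submodule A M) (L : Submodule A K), IsSemisimpleModule A (K ⧸ L) → IsNoetherian A (K ⧸ L)

section aux

variable {A : Type*} [Ring A] {M N S : Type*} [AddCommGroup M] [Module A M]
  [AddCommGroup N] [Module A N] [AddCommGroup S] [Module A S]

theorem SubquotFin.noeth (h : SubquotFin A M) (K : Submodule A M) (f : K →ₗ[A] S)
    (hf : Function.Surjective f) [IsSemisimpleModule A S] : IsNoetherian A S := by
  have e := f.quotKerEquivOfSurjective hf
  have := h K (LinearMap.ker f) (IsSemisimpleModule.congr e)
  exact isNoetherian_of_linearEquiv e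

theorem SubquotFin.of_surj (h : SubquotFin A M) (f : M →ₗ[A] N)
    (hf : Function.Surjective f) : SubquotFin A N := by
  intro K L hss
  refine h.noeth (K.comap f) (L.mkQ ∘ₗ f.restrict (q := K) (fun x hx => hx)) ?_
  refine L.mkQ_surjective.comp ?_
  rintro ⟨k, hk⟩
  obtain ⟨m, rfl⟩ := hf k
  exact ⟨⟨m, hk⟩, rfl⟩

theorem SubquotFin.ext {P : Submodule A M} (h1 : SubquotFin A P) (h2 : SubquotFin A (M ⧸ P)) :
    SubquotFin A M := by
  intro K L hss
  let g := L.mkQ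
  let a : (K.comap P.subtype) →ₗ[A] K := P.subtype.restrict (q := K) (fun x hx => hx)
  let S' := LinearMap.range (g ∘ₗ a)
  rw [isNoetherian_iff_submodule_quotient S']
  constructor
  · exact h1.noeth (K.comap P.subtype) (g ∘ₗ a).rangeRestrict (LinearMap.surjective_rangeRestrict _)
  · let ψ : K →ₗ[A] (K.map P.mkQ) := P.mkQ.restrict (fun x hx => Submodule.mem_map_of_mem hx)
    have hψ : Function.Surjective ψ := by
      rintro ⟨_, k, hk, rfl⟩
      exact ⟨⟨k, hk⟩, rfl⟩
    let θ : K →ₗ[A] ((K ⧸ L) ⧸ S') := S'.mkQ ∘ₗ g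
    have hθ : Function.Surjective θ := S'.mkQ_surjective.comp L.mkQ_surjective
    have hle : LinearMap.ker ψ ≤ LinearMap.ker θ := by
      rintro ⟨k, hk⟩ hx
      have hkP : k ∈ P := by
        have := congrArg Subtype.val (LinearMap.mem_ker.1 hx)
        exact (Submodule.Quotient.mk_eq_zero P).1 this
      refine LinearMap.mem_ker.2 ((Submodule.Quotient.mk_eq_zero S').2 ?_)
      exact ⟨⟨⟨k, hkP⟩, hk⟩, rfl⟩
    refine h2.noeth (K.map P.mkQ)
      ((LinearMap.ker ψ).liftQ θ hle ∘ₗ (ψ.quotKerEquivOfSurjective hψ).symm.toLinearMap) ?_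
    refine Function.Surjective.comp (g := (LinearMap.ker ψ).liftQ θ hle) ?_
      (ψ.quotKerEquivOfSurjective hψ).symm.surjective
    intro y
    obtain ⟨x, rfl⟩ := hθ y
    exact ⟨Submodule.Quotient.mk x, rfl⟩

theorem SubquotFin.sup {P Q : Submodule A M} (h1 : SubquotFin A P) (h2 : SubquotFin A Q) :
    SubquotFin A (P ⊔ Q : Submodule A M) := by
  have e1 : P ≃ₗ[A] (P.comap (P ⊔ Q).subtype) :=
    (Submodule.comapSubtypeEquivOfLe (le_sup_left : P ≤ P ⊔ Q)).symm
  refine SubquotFin.ext (h1.of_surj e1.toLinearMap e1.surjective) ?_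
  refine h2.of_surj ((P.comap (P ⊔ Q).subtype).mkQ ∘ₗ
    Submodule.inclusion (le_sup_right : Q ≤ P ⊔ Q)) ?_
  intro y
  obtain ⟨⟨x, hx⟩, rfl⟩ := Submodule.mkQ_surjective _ y
  obtain ⟨p, hp, q, hq, rfl⟩ := Submodule.mem_sup.1 hx
  refine ⟨⟨q, hq⟩, ?_⟩
  refine (Submodule.Quotient.eq _).2 ?_
  change q - (p + q) ∈ P
  rw [show q - (p + q) = -p by abel]
  exact P.neg_mem hp

theorem SubquotFin.biSup {ι : Type*} (F : ι → Submodule A M) (h : ∀ i, SubquotFin A (F i))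
    (t : Finset ι) : SubquotFin A (⨆ i ∈ t, F i : Submodule A M) := by
  classical
  induction t using Finset.induction_on with
  | empty =>
    have : (⨆ i ∈ (∅ : Finset ι), F i) = ⊥ := by simp
    rw [this]
    intro K L _
    infer_instance
  | insert a s _ ih =>
    rw [Finset.iSup_insert]
    exact (h a).sup ih

theorem range_lsingle_indep {ι : Type*} [DecidableEq ι] (X : ι → Type*)
    [∀ i, AddCommGroup (X i)] [∀ i, Module A (X i)] :
    iSupIndep fun i => LinearMap.range (DFinsupp.lsingle (R := A) (M := X) i) := by
  intro i
  rw [Submodule.disjoint_def]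
  rintro _ ⟨a, rfl⟩ hx
  have hle : (⨆ j, ⨆ (_ : j ≠ i), LinearMap.range (DFinsupp.lsingle (R := A) (M := X) j))
      ≤ LinearMap.ker (DFinsupp.lapply (R := A) (M := X) i) := by
    refine iSup₂_le fun j hj => ?_
    rintro _ ⟨b, rfl⟩
    simp [DFinsupp.single_eq_of_ne hj.symm]
  have := LinearMap.mem_ker.1 (hle hx)
  have ha : a = 0 := by simpa using this
  simp [ha]

theorem SubquotFin.isFinDim (h : SubquotFin A M) : IsFinDimModule A M := by
  classical
  intro ι F hF hne
  have hx : ∀ i, ∃ x ∈ F i, x ≠ 0 := fun i => (Submodule.ne_bot_iff _).1 (hne i)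
  choose x hxF hx0 using hx
  let C : ι → Submodule A M := fun i => Submodule.span A {x i}
  have hC : iSupIndep C := hF.mono fun i => by
    simpa [C, Submodule.span_le] using hxF i
  have hnt : ∀ i, Nontrivial (C i) := fun i =>
    Submodule.nontrivial_iff_ne_bot.2 (by simpa [C] using hx0 i)
  have hD : ∀ i, ∃ D : Submodule A (C i), IsCoatom D := fun i => by
    have : Module.Finite A (C i) := inferInstance
    have : IsCoatomic (Submodule A (C i)) := inferInstance
    obtain h | ⟨m, hm, -⟩ := eq_top_or_exists_le_coatom (⊥ : Submodule A (C i))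
    · exact absurd h bot_ne_top
    · exact ⟨m, hm⟩
  choose D hD using hD
  have hs : ∀ i, IsSimpleModule A (C i ⧸ D i) := fun i => isSimpleModule_iff_isCoatom.2 (hD i)
  let e := LinearEquiv.ofInjective _ hC.dfinsupp_lsum_injective
  let g : (Π₀ i, C i) →ₗ[A] Π₀ i, (C i ⧸ D i) := DFinsupp.mapRange.linearMap fun i => (D i).mkQ
  have hg : Function.Surjective g :=
    (DFinsupp.mapRange_surjective _ fun i => (D i).mkQ.map_zero).2 fun i => (D i).mkQ_surjective
  have hN : IsNoetherian A (Π₀ i, (C i ⧸ D i)) :=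
    h.noeth (S := Π₀ i, (C i ⧸ D i)) _ (g ∘ₗ e.symm.toLinearMap) (hg.comp e.symm.surjective)
  refine WellFoundedGT.finite_of_iSupIndep (range_lsingle_indep (A := A) fun i => C i ⧸ D i) ?_
  intro i hi
  have := (hs i).nontrivial
  obtain ⟨y, hy⟩ := exists_ne (0 : C i ⧸ D i)
  have h0 : DFinsupp.lsingle (R := A) i y ∈ (⊥ : Submodule A (Π₀ i, (C i ⧸ D i))) := by
    rw [← hi]; exact ⟨y, rfl⟩
  exact hy (by simpa using h0)

theorem IsDistribModule.of_surj (h : IsDistribModule A M) (f : M →ₗ[A] N)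
    (hf : Function.Surjective f) : IsDistribModule A N := by
  intro X Y Z
  refine le_antisymm ?_ le_inf_sup
  rintro _ ⟨hx, hyz⟩
  obtain ⟨y, hy, z, hz, rfl⟩ := Submodule.mem_sup.1 hyz
  obtain ⟨b, rfl⟩ := hf y
  obtain ⟨c, rfl⟩ := hf z
  have : b + c ∈ X.comap f ⊓ (Y.comap f ⊔ Z.comap f) :=
    ⟨by simpa using hx, Submodule.add_mem_sup hy hz⟩
  rw [h] at this
  obtain ⟨p, hp, q, hq, hpq⟩ := Submodule.mem_sup.1 this
  rw [← map_add, ← hpq, map_add]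
  exact Submodule.add_mem_sup ⟨hp.1, hp.2⟩ ⟨hq.1, hq.2⟩

theorem IsDistribModule.sub (h : IsDistribModule A M) (K : Submodule A M) :
    IsDistribModule A K := by
  intro X Y Z
  apply Submodule.map_injective_of_injective K.injective_subtype
  simp only [Submodule.map_inf _ K.injective_subtype, Submodule.map_sup]
  exact h _ _ _

theorem IsDistribModule.eq_bot (h : IsDistribModule A M) {P Q : Submodule A M}
    (hd : Disjoint P Q) (e : P ≃ₗ[A] Q) : P = ⊥ := by
  rw [Submodule.disjoint_def] at hd
  rw [Submodule.eq_bot_iff]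
  intro p hp
  let G : Submodule A M := LinearMap.range (P.subtype + Q.subtype ∘ₗ e.toLinearMap)
  have hG : ∀ p : P, (p : M) + e p ∈ G := fun p => ⟨p, rfl⟩
  have h1 : p + e ⟨p, hp⟩ ∈ G ⊓ (P ⊔ Q) := ⟨hG ⟨p, hp⟩, Submodule.add_mem_sup hp (e _).2⟩
  rw [h] at h1
  have hGP : G ⊓ P = ⊥ := by
    rw [Submodule.eq_bot_iff]
    rintro _ ⟨⟨a, rfl⟩, ha⟩
    have ha' : (a : M) + e a ∈ P := ha
    have : (e a : M) = 0 := hd _ ((Submodule.add_mem_iff_right P a.2).1 ha') (e a).2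
    have : a = 0 := by simpa using this
    simp [this]
  have hGQ : G ⊓ Q = ⊥ := by
    rw [Submodule.eq_bot_iff]
    rintro _ ⟨⟨a, rfl⟩, ha⟩
    have ha' : (a : M) + e a ∈ Q := ha
    have : (a : M) = 0 := hd _ a.2 ((Submodule.add_mem_iff_left Q (e a).2).1 ha')
    have : a = 0 := by simpa using this
    simp [this]
  rw [hGP, hGQ, sup_bot_eq, Submodule.mem_bot] at h1
  refine hd p hp ?_
  rw [eq_neg_of_add_eq_zero_left h1]
  exact Q.neg_mem (e _).2

end aux

theorem distrib_noeth {A : Type*} [Ring A] {B : Type*} [AddCommGroup B] [Module A B]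
    [IsNoetherian A B] {M : Type*} [AddCommGroup M] [Module A M]
    (hB : ∀ S : Submodule A M, IsSimpleModule A S → ∃ T : Submodule A B, Nonempty (S ≃ₗ[A] T))
    (h : IsDistribModule A M) [IsSemisimpleModule A M] : IsNoetherian A M := by
  obtain ⟨s, hs, htop, hsimp⟩ := IsSemisimpleModule.exists_sSupIndep_sSup_simples_eq_top A M
  choose T hT using fun S : s => hB S (hsimp S S.2)
  have hTs : ∀ S : s, IsSimpleModule A (T S) := fun S => by
    have := hsimp S S.2
    exact IsSimpleModule.congr (hT S).some.symm
  let c : s → isotypicComponents A B := fun S => ⟨isotypicComponent A B (T S), T S, hTs S, rfl⟩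
  have hc : Function.Injective c := by
    intro S S' hSS
    by_contra hne
    have h1 : isotypicComponent A B (T S) = isotypicComponent A B (T S') :=
      congrArg Subtype.val hSS
    have := hTs S
    have := hTs S'
    have h2 : T S ≤ isotypicComponent A B (T S') := h1 ▸ (T S).le_isotypicComponent
    have hiso := IsIsotypicOfType.isotypicComponent A B (T S')
    rw [isIsotypicOfType_submodule_iff] at hiso
    obtain ⟨e⟩ := hiso (T S) h2
    have hdis : Disjoint (S : Submodule A M) (S' : Submodule A M) :=
      hs.pairwiseDisjoint S.2 S'.2 (fun hh => hne (Subtype.ext hh))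
    have hb := h.eq_bot hdis ((hT S).some.trans (e.trans (hT S').some.symm))
    have := hsimp S S.2
    exact (isSimpleModule_iff_isAtom.1 this).1 hb
  have : Finite s := Finite.of_injective c hc
  have : ∀ S : s, IsNoetherian A S := fun S => by
    have := hsimp S S.2
    infer_instance
  have h3 : IsNoetherian A (⨆ S : s, (S : Submodule A M) : Submodule A M) := inferInstance
  rw [← sSup_eq_iSup', htop] at h3
  exact isNoetherian_of_linearEquiv Submodule.topEquiv

theorem jac_kill {R : Type*} [Ring R] {S : Type*} [AddCommGroup S] [Module Rᵐᵒᵖ S]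
    [IsSimpleModule Rᵐᵒᵖ S] (x : R) (hx : x ∈ Ideal.jacobson (⊥ : Ideal R)) (s : S) :
    MulOpposite.op x • s = 0 := by
  by_contra hne
  obtain ⟨r, hr⟩ := IsSimpleModule.toSpanSingleton_surjective Rᵐᵒᵖ hne s
  obtain ⟨r, rfl⟩ := MulOpposite.op_surjective r
  have hr' : MulOpposite.op (x * r) • s = s := by
    simpa [mul_smul] using hr
  have hy : x * r ∈ Ideal.jacobson (⊥ : Ideal R) := Ideal.mul_mem_right _ _ hx
  -- left inverse `u` of `1 - y`, itself left invertible
  obtain ⟨u, hu⟩ := Ideal.exists_mul_add_sub_mem_of_mem_jacobson _ (neg_mem hy)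
  have hu1 : u * (-(x * r) + 1) = 1 := sub_eq_zero.1 (by simpa using hu)
  have hu2 : u - 1 ∈ Ideal.jacobson (⊥ : Ideal R) := by
    have : u - 1 = u * (x * r) := by
      have : u * (-(x * r) + 1) = -(u * (x * r)) + u := by noncomm_ring
      rw [hu1] at this
      rw [this]; abel
    rw [this]
    exact Ideal.mul_mem_left _ _ hy
  obtain ⟨v, hv⟩ := Ideal.exists_mul_sub_mem_of_sub_one_mem_jacobson _ hu2
  have hv1 : v * u = 1 := sub_eq_zero.1 (by simpa using hv)
  have hvy : v = -(x * r) + 1 := by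
    calc v = v * (u * (-(x * r) + 1)) := by rw [hu1, mul_one]
      _ = _ := by rw [← mul_assoc, hv1, one_mul]
  rw [hvy] at hv1
  have h0 : MulOpposite.op (-(x * r) + 1) • s = 0 := by
    rw [MulOpposite.op_add, MulOpposite.op_neg, add_smul, neg_smul, hr', MulOpposite.op_one,
      one_smul, neg_add_cancel]
  have hs : s = 0 := by
    have := congrArg (MulOpposite.op u • ·) h0
    simp only [← mul_smul, ← MulOpposite.op_mul, hv1, smul_zero, MulOpposite.op_one, one_smul] at this
    exact this
  exact hne (by rw [hs, smul_zero])

theorem exists_big {R : Type*} [Ring R] (hsl : IsSemilocalRing R) :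
    ∃ I : Ideal Rᵐᵒᵖ, IsSemisimpleModule Rᵐᵒᵖ (Rᵐᵒᵖ ⧸ I) ∧
      ∀ a ∈ I, a.unop ∈ Ideal.jacobson (⊥ : Ideal R) := by
  let J := Ideal.jacobson (⊥ : Ideal R)
  have h1 : IsSemisimpleRing (R ⧸ J) := by
    let l : (R ⧸ J) →ₛₗ[Ideal.Quotient.mk J] (R ⧸ J) := ⟨AddHom.id _, fun _ _ ↦ rfl⟩
    exact (l.isSemisimpleModule_iff_of_bijective Function.bijective_id).1 hsl
  let φ : Rᵐᵒᵖ →+* (R ⧸ J)ᵐᵒᵖ := (Ideal.Quotient.mk J).op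
  have hφ : Function.Surjective φ := by
    intro y
    obtain ⟨x, hx⟩ := Ideal.Quotient.mk_surjective y.unop
    exact ⟨MulOpposite.op x, MulOpposite.unop_injective hx⟩
  refine ⟨RingHom.ker φ, ?_, ?_⟩
  · have h2 : IsSemisimpleRing (Rᵐᵒᵖ ⧸ RingHom.ker φ) :=
      (RingHom.quotientKerEquivOfSurjective hφ).symm.isSemisimpleRing
    let l : (Rᵐᵒᵖ ⧸ RingHom.ker φ) →ₛₗ[Ideal.Quotient.mk (RingHom.ker φ)]
      (Rᵐᵒᵖ ⧸ RingHom.ker φ) := ⟨AddHom.id _, fun _ _ ↦ rfl⟩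
    exact (l.isSemisimpleModule_iff_of_bijective Function.bijective_id).2 h2
  · intro a ha
    have : (Ideal.Quotient.mk J) a.unop = 0 := congrArg MulOpposite.unop (RingHom.mem_ker.1 ha)
    exact Ideal.Quotient.eq_zero_iff_mem.1 this

theorem exists_equiv_of_simple {A : Type*} [Ring A] (I : Ideal A) [IsSemisimpleModule A (A ⧸ I)]
    {S : Type*} [AddCommGroup S] [Module A S] [IsSimpleModule A S]
    (hk : ∀ a ∈ I, ∀ s : S, a • s = 0) : ∃ T : Submodule A (A ⧸ I), Nonempty (S ≃ₗ[A] T) := by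
  have := IsSimpleModule.nontrivial A S
  obtain ⟨s, hs⟩ := exists_ne (0 : S)
  let f : (A ⧸ I) →ₗ[A] S := Submodule.liftQ I (LinearMap.toSpanSingleton A S s) (fun a ha =>
    LinearMap.mem_ker.2 (by simpa using hk a ha s))
  refine LinearMap.linearEquiv_of_ne_zero (f := f) ?_
  intro h0
  apply hs
  have : f (Submodule.Quotient.mk 1) = s := by simp [f]
  rw [← this, h0]; rfl

theorem IsDistribModule.subquotFin {A : Type*} [Ring A] {D : Type*} [AddCommGroup D] [Module A D]
    {B : Type*} [AddCommGroup B] [Module A B] [IsNoetherian A B]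
    (hB : ∀ (K : Submodule A D) (L : Submodule A K) (S : Submodule A (K ⧸ L)),
      IsSimpleModule A S → ∃ T : Submodule A B, Nonempty (S ≃ₗ[A] T))
    (h : IsDistribModule A D) : SubquotFin A D := by
  intro K L hss
  have hd : IsDistribModule A (K ⧸ L) := (h.sub K).of_surj L.mkQ L.mkQ_surjective
  exact distrib_noeth (B := B) (hB K L) hd

/-- If `R` is a right semidistributive semilocal ring, then every cyclic right
`R`-module is quotient finite-dimensional. -/
theorem stmt6 (R : Type*) [Ring R] (hsd : IsRightSemidistributiveRing R)
    (hsl : IsSemilocalRing R)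
    (M : Type*) [AddCommGroup M] [Module Rᵐᵒᵖ M]
    (hcyc : ∃ m : M, Submodule.span Rᵐᵒᵖ {m} = ⊤) :
    IsQFDModule Rᵐᵒᵖ M := by
  obtain ⟨I, hI, hIJ⟩ := exists_big hsl
  obtain ⟨ι, N, -, htop, hN⟩ := hsd
  have hQ : ∀ i, SubquotFin Rᵐᵒᵖ (N i) := by
    intro i
    refine (hN i).subquotFin (B := Rᵐᵒᵖ ⧸ I) ?_
    intro K L S hS
    exact exists_equiv_of_simple I fun a ha s => jac_kill a.unop (hIJ a ha) s
  have h1 : (1 : R) ∈ iSup N := htop ▸ Submodule.mem_top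
  obtain ⟨t, ht⟩ := Submodule.mem_iSup_iff_exists_finset.1 h1
  have htt : (⨆ i ∈ t, N i) = ⊤ := by
    rw [eq_top_iff]
    intro r _
    simpa using Submodule.smul_mem _ (MulOpposite.op r) ht
  have hR : SubquotFin Rᵐᵒᵖ R := by
    have := SubquotFin.biSup N hQ t
    rw [htt] at this
    exact this.of_surj Submodule.topEquiv.toLinearMap Submodule.topEquiv.surjective
  obtain ⟨m, hm⟩ := hcyc
  intro X
  let o : R →ₗ[Rᵐᵒᵖ] Rᵐᵒᵖ :=
    { toFun := MulOpposite.op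
      map_add' := fun _ _ => rfl
      map_smul' := fun _ _ => rfl }
  let f : R →ₗ[Rᵐᵒᵖ] (M ⧸ X) := X.mkQ ∘ₗ LinearMap.toSpanSingleton Rᵐᵒᵖ M m ∘ₗ o
  refine (hR.of_surj f ?_).isFinDim
  refine X.mkQ_surjective.comp (Function.Surjective.comp
    (g := LinearMap.toSpanSingleton Rᵐᵒᵖ M m) (f := o) ?_ MulOpposite.op_surjective)
  rw [← LinearMap.range_eq_top, LinearMap.range_toSpanSingleton, hm]
end

section
/- Let A be a ring. Then A is right Artinian if and only if the Laurent series ring A((x)) is right Artinian. -/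
open PowerSeries in
theorem aux_key {A : Type*} [Ring A] (P : Set (PowerSeries A)) {ι : Type*} (s : Finset ι)
    (g : ι → PowerSeries A)
    (h : ∀ f ∈ P, ∃ a : ι → A, ∃ f' ∈ P, f = ∑ i ∈ s, g i * C (a i) + f' * X)
    (f : PowerSeries A) (hf : f ∈ P) : ∃ b : ι → PowerSeries A, f = ∑ i ∈ s, g i * b i := by
  choose! a n hn hfn using h
  let b : PowerSeries A → ι → PowerSeries A := fun f i => PowerSeries.mk fun k => a (n^[k] f) i
  have hb : ∀ f i, b f i = C (a f i) + b (n f) i * X := by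
    intro f i
    ext k
    cases k with
    | zero => simp [b]
    | succ k => simp [b, coeff_succ_mul_X, coeff_C]
  have hd : ∀ f ∈ P, f - ∑ i ∈ s, g i * b f i = (n f - ∑ i ∈ s, g i * b (n f) i) * X := by
    intro f hf
    conv_lhs => enter [2, 2, i]; rw [hb, mul_add, ← mul_assoc]
    rw [Finset.sum_add_distrib, sub_mul, Finset.sum_mul]
    conv_lhs => enter [1]; rw [hfn f hf]
    abel
  have hz : ∀ k, ∀ f ∈ P, coeff k (f - ∑ i ∈ s, g i * b f i) = 0 := by
    intro k
    induction k with
    | zero => intro f hf; rw [hd f hf]; simp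
    | succ k ih => intro f hf; rw [hd f hf, coeff_succ_mul_X]; exact ih _ (hn f hf)
  refine ⟨b f, sub_eq_zero.mp ?_⟩
  ext k
  simpa using hz k f hf

theorem aux_mul_mem {A : Type*} [Ring A] (K : Submodule Aᵐᵒᵖ A) {x : A} (hx : x ∈ K) (y : A) :
    x * y ∈ K := K.smul_mem (MulOpposite.op y) hx

theorem aux_single_comm {A : Type*} [Ring A] (n : ℤ) (f : LaurentSeries A) :
    HahnSeries.single n (1 : A) * f = f * HahnSeries.single n 1 := by
  ext k
  obtain ⟨j, rfl⟩ : ∃ j, k = j + n := ⟨k - n, by ring⟩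
  rw [HahnSeries.coeff_single_mul_add, HahnSeries.coeff_mul_single_add]
  simp

/-- The right ideal of leading coefficients. -/
noncomputable def auxLead {A : Type*} [Ring A]
    (K : Submodule (LaurentSeries A)ᵐᵒᵖ (LaurentSeries A)) : Submodule Aᵐᵒᵖ A where
  carrier := {a | ∃ f : PowerSeries A, HahnSeries.ofPowerSeries ℤ A f ∈ K ∧
    PowerSeries.constantCoeff f = a}
  add_mem' := by
    rintro _ _ ⟨f, hf, rfl⟩ ⟨g, hg, rfl⟩
    exact ⟨f + g, by rw [map_add]; exact K.add_mem hf hg, by simp⟩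
  zero_mem' := ⟨0, by simp, by simp⟩
  smul_mem' := by
    rintro c _ ⟨f, hf, rfl⟩
    exact ⟨f * PowerSeries.C c.unop, by rw [map_mul]; exact aux_mul_mem K hf _, by simp⟩

theorem auxLead_mono {A : Type*} [Ring A] : Monotone (auxLead (A := A)) := by
  rintro K K' h _ ⟨f, hf, rfl⟩
  exact ⟨f, h hf, rfl⟩

theorem aux_mem_span {A : Type*} [Ring A] (s : Finset A) (x : A)
    (hx : x ∈ Submodule.span Aᵐᵒᵖ (s : Set A)) : ∃ a : A → A, x = ∑ i ∈ s, i * a i := by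
  obtain ⟨c, -, hc⟩ := Submodule.mem_span_finset.mp hx
  exact ⟨fun i => (c i).unop, by rw [← hc]; rfl⟩

open PowerSeries in
theorem auxLead_reflect {A : Type*} [Ring A] [IsNoetherian Aᵐᵒᵖ A]
    {K K' : Submodule (LaurentSeries A)ᵐᵒᵖ (LaurentSeries A)} (hle : K ≤ K')
    (h : auxLead K' ≤ auxLead K) : K' ≤ K := by
  obtain ⟨s, hs⟩ := IsNoetherian.noetherian (auxLead K)
  have hg : ∀ a ∈ s, ∃ f : PowerSeries A, HahnSeries.ofPowerSeries ℤ A f ∈ K ∧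
      PowerSeries.constantCoeff f = a := by
    intro a ha
    have : a ∈ auxLead K := hs ▸ Submodule.subset_span ha
    exact this
  choose! g hgK hgc using hg
  have hsum : ∀ b : A → PowerSeries A,
      HahnSeries.ofPowerSeries ℤ A (∑ i ∈ s, g i * b i) ∈ K := by
    intro b
    rw [map_sum]
    refine K.sum_mem fun i hi => ?_
    rw [map_mul]
    exact aux_mul_mem K (hgK i hi) _
  have key := aux_key {f : PowerSeries A | HahnSeries.ofPowerSeries ℤ A f ∈ K'} s g (by
    intro f hf
    have h1 : constantCoeff f ∈ auxLead K := h ⟨f, hf, rfl⟩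
    rw [← hs] at h1
    obtain ⟨a, ha⟩ := aux_mem_span s _ h1
    have h2 : constantCoeff (f - ∑ i ∈ s, g i * C (a i)) = 0 := by
      rw [map_sub, ha, map_sum, sub_eq_zero]
      refine Finset.sum_congr rfl fun i hi => ?_
      simp [hgc i hi]
    obtain ⟨f', hf'⟩ := PowerSeries.X_dvd_iff.mpr h2
    rw [← PowerSeries.commute_X] at hf'
    refine ⟨a, f', ?_, by rw [← hf']; abel⟩
    have h3 : HahnSeries.ofPowerSeries ℤ A (f' * X) ∈ K' := by
      rw [← hf', map_sub]
      exact K'.sub_mem hf (hle (hsum _))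
    have h4 := aux_mul_mem K' h3 (HahnSeries.single (-1) 1)
    rw [map_mul, HahnSeries.ofPowerSeries_X, mul_assoc, HahnSeries.single_mul_single] at h4
    simpa using h4)
  intro f hf
  have hp := LaurentSeries.single_order_mul_powerSeriesPart f
  rw [aux_single_comm] at hp
  have hp' : HahnSeries.ofPowerSeries ℤ A f.powerSeriesPart ∈ K' := by
    rw [LaurentSeries.ofPowerSeries_powerSeriesPart, aux_single_comm]
    exact aux_mul_mem K' hf _
  obtain ⟨b, hb⟩ := key _ hp'
  rw [← hp, hb]
  exact aux_mul_mem K (hsum b) _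

/-- The right ideal of series with coefficients in a right ideal. -/
noncomputable def auxExt {A : Type*} [Ring A] (I : Submodule Aᵐᵒᵖ A) :
    Submodule (LaurentSeries A)ᵐᵒᵖ (LaurentSeries A) where
  carrier := {f | ∀ n, f.coeff n ∈ I}
  add_mem' := fun hf hg n => I.add_mem (hf n) (hg n)
  zero_mem' := fun n => I.zero_mem
  smul_mem' := by
    intro c f hf n
    change (f * c.unop).coeff n ∈ I
    rw [HahnSeries.coeff_mul]
    exact I.sum_mem fun i _ => aux_mul_mem I (hf _) _

theorem auxExt_le {A : Type*} [Ring A] {I J : Submodule Aᵐᵒᵖ A} :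
    auxExt I ≤ auxExt J ↔ I ≤ J := by
  constructor
  · intro h a ha
    have : HahnSeries.single (0 : ℤ) a ∈ auxExt J := h (by
      intro n
      rw [HahnSeries.coeff_single]
      split_ifs
      exacts [ha, I.zero_mem])
    simpa using this 0
  · exact fun h f hf n => h (hf n)

theorem aux_noeth_s8 {A : Type*} [Ring A] (h : IsArtinian Aᵐᵒᵖ A) : IsNoetherian Aᵐᵒᵖ A := by
  let e : A ≃ₗ[Aᵐᵒᵖ] Aᵐᵒᵖ :=
    { MulOpposite.opAddEquiv with map_smul' := fun c x => by simp }
  have : IsArtinianRing Aᵐᵒᵖ := isArtinian_of_linearEquiv e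
  exact isNoetherian_of_linearEquiv e.symm

/-- A ring `A` is right Artinian if and only if the Laurent series ring `A((x))` is
right Artinian (a ring `B` is right Artinian when `B`, viewed as a right module over
itself, i.e. as a `Bᵐᵒᵖ`-module, is Artinian). -/
theorem stmt8 (A : Type*) [Ring A] :
    IsArtinian Aᵐᵒᵖ A ↔ IsArtinian (LaurentSeries A)ᵐᵒᵖ (LaurentSeries A) := by
  constructor
  · intro h
    have := aux_noeth_s8 h
    have hm : StrictMono (auxLead (A := A)) := fun K K' hK =>
      lt_of_le_not_ge (auxLead_mono hK.le) fun h' => hK.not_ge (auxLead_reflect hK.le h')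
    exact hm.wellFoundedLT
  · intro h
    have hm : StrictMono (auxExt (A := A)) := fun I J hI =>
      lt_of_le_not_ge (auxExt_le.mpr hI.le) fun h' => hI.not_ge (auxExt_le.mp h')
    exact hm.wellFoundedLT
end
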